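/- arXiv:2211.11023 — 2 statements merged into one kernel-verified Lean document; each statement's English description precedes it below -/
import Mathlib

section
/- There exists an absolute constant C > 0 such that for every prime power q and all integers n ≥ m ≥ √(10·n·log n), writing u = n/m, one has | p_{n,m,q} / ( p_{n,m} · G_q(e^{ξ(u)/m}) ) − 1 | ≤ C·log(u+1) / ( m·q^{⌈(m+1)/2⌉} ). -/
open Real

noncomputable section

/-- Predicate characterizing the Dickman function `ρ : [0,∞) → (0,∞)`:
continuous on `[0,∞)`, positive, equal to `1` on `[0,1]`, and satisfying the
delay differential equation `t·ρ'(t) + ρ(t-1) = 0` for `t > 1`. -/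
def IsDickman (ρ : ℝ → ℝ) : Prop :=
  ContinuousOn ρ (Set.Ici 0) ∧
  (∀ t : ℝ, 0 ≤ t → 0 < ρ t) ∧
  (∀ t ∈ Set.Icc (0:ℝ) 1, ρ t = 1) ∧
  (∀ t : ℝ, 1 < t → HasDerivAt ρ (-(ρ (t - 1)) / t) t)

/-- `ξ(u)`: for `u > 1`, the unique positive solution of `e^ξ = 1 + u·ξ`; otherwise `0`. -/
def xi (u : ℝ) : ℝ :=
  open Classical in
  if h : ∃ x : ℝ, 0 < x ∧ Real.exp x = 1 + u * x then h.choose else 0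

/-- `p_{n,m}`: probability that a uniformly random permutation of `{1,…,n}` is `m`-friable,
i.e. has no cycle of length greater than `m`. -/
def permProb (n m : ℕ) : ℝ :=
  (Nat.card {σ : Equiv.Perm (Fin n) // ∀ c ∈ σ.cycleType, c ≤ m} : ℝ) /
    (Nat.factorial n : ℝ)

/-- `p_{n,m,q}`: proportion of monic polynomials of degree `n` over a finite field `F`
(of cardinality `q`) that are `m`-friable, i.e. all of whose monic irreducible factors
have degree at most `m`. -/
def polyProb (F : Type) [Field F] [Fintype F] (n m : ℕ) : ℝ :=
  (Nat.card {f : Polynomial F // f.Monic ∧ f.natDegree = n ∧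
      ∀ p : Polynomial F, p.Monic → Irreducible p → p ∣ f → p.natDegree ≤ m} : ℝ) /
    (Fintype.card F : ℝ) ^ n

/-- `F_q(z) = ∏_{deg P ≤ m} (1 - (z/q)^{deg P})⁻¹`, the product over monic irreducible
polynomials `P` over `F` of degree at most `m`. -/
def FqFun (F : Type) [Field F] [Fintype F] (m : ℕ) (z : ℝ) : ℝ :=
  ∏ᶠ p ∈ {p : Polynomial F | p.Monic ∧ Irreducible p ∧ p.natDegree ≤ m},
    (1 - (z / (Fintype.card F : ℝ)) ^ p.natDegree)⁻¹

/-- `G_q(z) = F_q(z) · exp(-∑_{i=1}^m z^i/i)`. -/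
def Gq (F : Type) [Field F] [Fintype F] (m : ℕ) (z : ℝ) : ℝ :=
  FqFun F m z * Real.exp (-(∑ i ∈ Finset.Icc 1 m, z ^ i / (i : ℝ)))

/-- The coefficients `d_{m,i}`. -/
def dcoef (m i : ℕ) : ℝ :=
  if i = m then -(1 / (m : ℝ)) * ∑ j ∈ Finset.Icc 2 m, (1 : ℝ) / (j : ℝ)
  else Real.Gamma ((i : ℝ) + (i : ℝ) / (m : ℝ)) /
    (((m : ℝ) - (i : ℝ)) * (Nat.factorial i : ℝ) * Real.Gamma (1 + (i : ℝ) / (m : ℝ)))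

/-- `T(s) = ∫₀^s ((e^t - 1)/t)·((t/m)/(1 - e^{-t/m}) - 1) dt`, integrand extended by `0` at `t = 0`. -/
def Tfun (m : ℕ) (s : ℝ) : ℝ :=
  ∫ t in (0:ℝ)..s,
    if t = 0 then 0 else
      ((Real.exp t - 1) / t) * ((t / (m : ℝ)) / (1 - Real.exp (-t / (m : ℝ))) - 1)

end


namespace Friable

/-- the recurrence satisfied by the friable permutation probabilities -/
structure PRec (m : ℕ) (p : ℕ → ℝ) : Prop where
  zero : p 0 = 1
  step : ∀ n : ℕ, (n : ℝ) * p n = ∑ i ∈ Finset.Icc 1 (min m n), p (n - i)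

namespace PRec
variable {m : ℕ} {p : ℕ → ℝ}

lemma pos (h : PRec m p) (hm : 1 ≤ m) (n : ℕ) : 0 < p n := by
  induction n using Nat.strong_induction_on with
  | _ n ih =>
    rcases Nat.eq_zero_or_pos n with rfl | hn
    · rw [h.zero]; norm_num
    · have h1 := h.step n
      have h2 : 0 < ∑ i ∈ Finset.Icc 1 (min m n), p (n - i) := by
        apply Finset.sum_pos
        · intro i hi
          rw [Finset.mem_Icc] at hi
          exact ih _ (by omega)
        · exact ⟨1, by simp; omega⟩
      rw [← h1] at h2
      have : (0:ℝ) < n := by exact_mod_cast hn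
      exact (pos_iff_pos_of_mul_pos h2).1 this

lemma rec' (h : PRec m p) (n : ℕ) (hn : m ≤ n) :
    (n : ℝ) * p n = ∑ i ∈ Finset.range m, p (n - 1 - i) := by
  rw [h.step n, min_eq_left hn, Finset.range_eq_Ico,
    Finset.sum_Ico_eq_sum_range]
  rw [show Finset.Icc 1 m = Finset.Ico 1 (m+1) from by ext; simp, Finset.sum_Ico_eq_sum_range]
  apply Finset.sum_congr rfl
  intro i hi
  congr 1
  omega

lemma eq_one (h : PRec m p) (n : ℕ) (hn : n ≤ m) : p n = 1 := by
  induction n using Nat.strong_induction_on with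
  | _ n ih =>
    rcases Nat.eq_zero_or_pos n with rfl | hn0
    · exact h.zero
    · have h1 := h.step n
      rw [min_eq_right hn, Finset.sum_congr rfl (g := fun _ => (1:ℝ))] at h1
      · have h0 : (n:ℝ) ≠ 0 := by exact_mod_cast hn0.ne'
        apply mul_left_cancel₀ h0
        rw [h1]; simp
      · intro i hi
        rw [Finset.mem_Icc] at hi
        exact ih _ (by omega) (by omega)

lemma diff (h : PRec m p) (k : ℕ) :
    ((k + m + 1 : ℕ) : ℝ) * (p (k + m) - p (k + m + 1)) = p k := by
  have h1 := h.rec' (k + m) (by omega)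
  have h2 := h.rec' (k + m + 1) (by omega)
  have e : ∑ i ∈ Finset.range (m+1), p (k + m - i) = ∑ i ∈ Finset.range m, p (k + m - i) + p k := by
    rw [Finset.sum_range_succ]; simp
  rw [Finset.sum_range_succ'] at e
  simp only [Nat.add_sub_cancel, Nat.sub_zero] at h1 h2 e
  rw [Finset.sum_congr rfl (g := fun i => p (k + m - (i+1)))
    (fun i _ => by congr 1; omega)] at h1
  push_cast at h1 h2 ⊢
  linarith

lemma step_le (h : PRec m p) (hm : 1 ≤ m) (n : ℕ) : p (n + 1) ≤ p n := by
  by_cases hn : n + 1 ≤ m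
  · rw [h.eq_one _ hn, h.eq_one n (by omega)]
  · obtain ⟨k, rfl⟩ := Nat.exists_eq_add_of_le' (show m ≤ n by omega)
    have h1 := h.diff k
    have h2 := h.pos hm k
    rw [← h1] at h2
    have := (pos_iff_pos_of_mul_pos h2).1 (by positivity)
    linarith

/-- log-concavity -/
lemma logconc (h : PRec m p) (hm : 1 ≤ m) (n : ℕ) : p n * p (n + 2) ≤ p (n + 1) * p (n + 1) := by
  induction n using Nat.strong_induction_on with
  | _ n ih =>
    have pos := h.pos hm
    by_cases hn : n + 1 ≤ m
    · rw [h.eq_one _ hn, h.eq_one n (by omega)]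
      have h1 := h.step_le hm (n + 1)
      rw [h.eq_one _ hn] at h1
      simpa using h1
    · obtain ⟨k, rfl⟩ := Nat.exists_eq_add_of_le' (show m ≤ n by omega)
      have h1 := h.diff k
      have h2 := h.diff (k + 1)
      rw [show k + 1 + m + 1 = k + m + 2 by ring, show k + 1 + m = k + m + 1 by ring] at h2
      have key : ∀ l, k + l < k + m → p (k + l + 1) * p k ≤ p (k + l) * p (k + 1) := by
        intro l
        induction l with
        | zero => intro _; simp [mul_comm]
        | succ l ihl =>
          intro hl
          have a := ihl (by omega)
          have b := ih (k + l) (by omega)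
          have c := pos (k + l)
          have d := pos (k + l + 1)
          rw [show k + (l + 1) + 1 = k + l + 2 by ring, show k + (l + 1) = k + l + 1 by ring]
          have e : p (k+l) * (p (k + l + 2) * p k) ≤ p (k+l) * (p (k + l + 1) * p (k + 1)) := by
            calc p (k+l) * (p (k + l + 2) * p k) = (p (k+l) * p (k + l + 2)) * p k := by ring
              _ ≤ (p (k + l + 1) * p (k + l + 1)) * p k :=
                mul_le_mul_of_nonneg_right b (pos k).le
              _ = p (k + l + 1) * (p (k + l + 1) * p k) := by ring
              _ ≤ p (k + l + 1) * (p (k + l) * p (k+1)) := mul_le_mul_of_nonneg_left a d.le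
              _ = _ := by ring
          exact le_of_mul_le_mul_left e c
      have s1 := h.rec' (k + m) (by omega)
      have s2 := h.rec' (k + m + 1) (by omega)
      have s3 : (((k + m + 1 : ℕ) : ℝ) * p (k + m + 1)) * p k ≤ (((k + m : ℕ) : ℝ) * p (k + m)) * p (k + 1) := by
        rw [s1, s2, Finset.sum_mul, Finset.sum_mul]
        apply Finset.sum_le_sum
        intro i hi
        rw [Finset.mem_range] at hi
        have := key (m - 1 - i) (by omega)
        rw [show k + (m - 1 - i) + 1 = k + m + 1 - 1 - i by omega,
          show k + (m - 1 - i) = k + m - 1 - i by omega] at this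
        exact this
      have N0 : (0:ℝ) < ((k + m : ℕ) : ℝ) := by exact_mod_cast (by omega : 0 < k + m)
      push_cast at *
      set N : ℝ := (k:ℝ) + m with hN
      have A := pos (k + m)
      have B := pos (k + m + 1)
      have D := pos k
      have E := pos (k + 1)
      -- (N+1)(a - b) = pk ; (N+2)(b - c) = pk1
      have t1 : N * (N + 2) * (p (k + m + 1) * p k) ≤ N * (N+1) * (p (k + m) * p (k+1)) := by
        have : 0 ≤ p (k + m + 1) * p k := by positivity
        nlinarith
      have t2 : (N + 2) * (p (k + m + 1) * p k) ≤ (N+1) * (p (k + m) * p (k+1)) := by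
        rw [mul_assoc, mul_assoc] at t1
        exact le_of_mul_le_mul_left t1 N0
      have e1 : p k = (N + 1) * (p (k + m) - p (k + m + 1)) := h1.symm
      have e2 : p (k + 1) = (N + 2) * (p (k + m + 1) - p (k + m + 2)) := by
        rw [← h2]
      rw [e1, e2] at t2
      have N2 : 0 < (N + 2) * (N + 1) := by positivity
      have t3 : (N + 2) * (N + 1) * (p (k + m + 1) * (p (k + m) - p (k + m + 1))) ≤
        (N + 2) * (N + 1) * (p (k + m) * (p (k + m + 1) - p (k + m + 2))) := by
        linarith
      have := le_of_mul_le_mul_left t3 N2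
      linarith

/-- ratio -/
noncomputable def r (p : ℕ → ℝ) (n : ℕ) : ℝ := p n / p (n + 1)

lemma r_mono (h : PRec m p) (hm : 1 ≤ m) : Monotone (r p) := by
  apply monotone_nat_of_le_succ
  intro n
  unfold r
  rw [div_le_div_iff₀ (h.pos hm _) (h.pos hm _)]
  exact h.logconc hm n

lemma r_ge_one (h : PRec m p) (hm : 1 ≤ m) (n : ℕ) : 1 ≤ r p n := by
  unfold r
  rw [one_le_div (h.pos hm _)]
  exact h.step_le hm n

lemma r_gt_one (h : PRec m p) (hm : 1 ≤ m) (n : ℕ) (hn : m ≤ n) : 1 < r p n := by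
  unfold r
  rw [one_lt_div (h.pos hm _)]
  obtain ⟨k, rfl⟩ := Nat.exists_eq_add_of_le' hn
  have h1 := h.diff k
  have h2 := h.pos hm k
  rw [← h1] at h2
  have := (pos_iff_pos_of_mul_pos h2).1 (by positivity)
  linarith

lemma eq_r_mul (h : PRec m p) (hm : 1 ≤ m) (n : ℕ) : p n = r p n * p (n + 1) := by
  unfold r
  rw [div_mul_cancel₀ _ (h.pos hm _).ne']

lemma upper (h : PRec m p) (hm : 1 ≤ m) (n j : ℕ) : p n ≤ r p (n + j - 1) ^ j * p (n + j) := by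
  induction j with
  | zero => simp
  | succ j ih =>
    calc p n ≤ r p (n + j - 1) ^ j * p (n + j) := ih
      _ ≤ r p (n + j) ^ j * p (n + j) := by
        apply mul_le_mul_of_nonneg_right _ (h.pos hm _).le
        apply pow_le_pow_left₀ (zero_le_one.trans (h.r_ge_one hm _))
        exact h.r_mono hm (by omega)
      _ = _ := by
        rw [h.eq_r_mul hm (n + j)]
        simp only [← add_assoc, Nat.add_sub_cancel]
        ring

lemma lower (h : PRec m p) (hm : 1 ≤ m) (n j : ℕ) : r p n ^ j * p (n + j) ≤ p n := by
  induction j with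
  | zero => simp
  | succ j ih =>
    refine le_trans ?_ ih
    rw [h.eq_r_mul hm (n + j), pow_succ, mul_assoc]
    apply mul_le_mul_of_nonneg_left _ (pow_nonneg (zero_le_one.trans (h.r_ge_one hm _)) _)
    apply mul_le_mul_of_nonneg_right _ (h.pos hm _).le
    exact h.r_mono hm (by omega)

lemma sum_ge (h : PRec m p) (hm : 1 ≤ m) (n : ℕ) (hn : m ≤ n + 1) :
    (n + 1 : ℝ) ≤ ∑ i ∈ Finset.range m, r p n ^ (i + 1) := by
  have h1 := h.rec' (n + 1) hn
  have hp := h.pos hm (n + 1)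
  rw [← mul_le_mul_iff_left₀ hp]
  push_cast at h1
  rw [h1, Finset.sum_mul]
  apply Finset.sum_le_sum
  intro i hi
  rw [Finset.mem_range] at hi
  have := h.upper hm (n + 1 - 1 - i) (i + 1)
  rw [show n + 1 - 1 - i + (i + 1) = n + 1 by omega] at this
  simpa using this

lemma sum_le (h : PRec m p) (hm : 1 ≤ m) (n : ℕ) :
    ∑ i ∈ Finset.range m, r p n ^ (i + 1) ≤ (n + m : ℝ) := by
  have h1 := h.rec' (n + m) (by omega)
  have hp := h.pos hm (n + m)
  rw [← mul_le_mul_iff_left₀ hp]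
  push_cast at h1
  rw [h1, Finset.sum_mul]
  apply Finset.sum_le_sum
  intro i hi
  rw [Finset.mem_range] at hi
  have := h.lower hm (n + m - 1 - i) (i + 1)
  rw [show n + m - 1 - i + (i + 1) = n + m by omega] at this
  refine le_trans ?_ this
  apply mul_le_mul_of_nonneg_right _ hp.le
  apply pow_le_pow_left₀ (zero_le_one.trans (h.r_ge_one hm _))
  exact h.r_mono hm (by omega)

end PRec
end Friable

open Real
namespace Friable

lemma sinh_conv : ConvexOn ℝ (Set.Ici (0:ℝ)) Real.sinh := by
  apply convexOn_of_deriv2_nonneg (convex_Ici 0) Real.continuous_sinh.continuousOn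
  · exact Real.differentiable_sinh.differentiableOn
  · simp only [Real.deriv_sinh]
    exact Real.differentiable_cosh.differentiableOn
  · intro x hx
    simp at hx
    simp only [Function.iterate_succ, Function.iterate_zero, Function.comp, id, Real.deriv_sinh,
      Real.deriv_cosh]
    exact Real.sinh_nonneg_iff.2 hx.le

lemma sinh_div (a b : ℝ) (ha : 0 < a) (hab : a ≤ b) : Real.sinh a * b ≤ Real.sinh b * a := by
  have hb : 0 < b := ha.trans_le hab
  have h := sinh_conv.2 (show b ∈ Set.Ici (0:ℝ) from hb.le) (show (0:ℝ) ∈ Set.Ici (0:ℝ) by simp)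
    (show 0 ≤ a / b by positivity) (show 0 ≤ 1 - a / b by
      rw [sub_nonneg, div_le_one hb]; exact hab) (by ring)
  simp only [smul_eq_mul, mul_zero, add_zero, Real.sinh_zero] at h
  rw [div_mul_cancel₀ _ hb.ne'] at h
  rw [div_mul_eq_mul_div, le_div_iff₀ hb] at h
  linarith

lemma exp_sub_one_eq (a : ℝ) : Real.exp a - 1 = 2 * Real.exp (a / 2) * Real.sinh (a / 2) := by
  rw [Real.sinh_eq]
  have h1 : Real.exp a = Real.exp (a/2) * Real.exp (a/2) := by rw [← Real.exp_add]; ring_nf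
  have h2 : Real.exp (a/2) * Real.exp (-(a/2)) = 1 := by rw [← Real.exp_add]; simp
  linarith

lemma phi_mono (a b : ℝ) (ha : 0 < a) (hab : a ≤ b) :
    (Real.exp a - 1) / a * Real.exp ((b - a) / 2) ≤ (Real.exp b - 1) / b := by
  have hb : 0 < b := ha.trans_le hab
  rw [div_mul_eq_mul_div, div_le_div_iff₀ ha hb, exp_sub_one_eq a, exp_sub_one_eq b]
  have h1 : Real.exp (b/2) = Real.exp (a/2) * Real.exp ((b-a)/2) := by rw [← Real.exp_add]; ring_nf
  have h := sinh_div (a/2) (b/2) (by positivity) (by linarith)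
  rw [h1]
  have : 0 < Real.exp (a/2) * Real.exp ((b-a)/2) := by positivity
  calc 2 * rexp (a / 2) * Real.sinh (a / 2) * rexp ((b - a) / 2) * b
      = 4 * (rexp (a / 2) * rexp ((b - a) / 2)) * (Real.sinh (a / 2) * (b/2)) := by ring
    _ ≤ 4 * (rexp (a / 2) * rexp ((b - a) / 2)) * (Real.sinh (b / 2) * (a/2)) := by gcongr
    _ = _ := by ring

lemma xi_one : xi 1 = 0 := by
  unfold xi
  rw [dif_neg]
  rintro ⟨x, hx, h⟩
  have := Real.add_one_lt_exp hx.ne'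
  linarith

lemma xi_spec (u : ℝ) (hu : 1 < u) : 0 < xi u ∧ Real.exp (xi u) = 1 + u * xi u := by
  have h : ∃ x : ℝ, 0 < x ∧ Real.exp x = 1 + u * x := by
    have hl : 0 < Real.log u := Real.log_pos hu
    have hlu : Real.log u ≤ u - 1 := Real.log_le_sub_one_of_pos (by linarith)
    have hc : ContinuousOn (fun x => Real.exp x - 1 - u * x) (Set.Icc (Real.log u) (2 * u)) := by
      fun_prop
    have := intermediate_value_Icc (by linarith) hc
    have h0 : (0:ℝ) ∈ Set.Icc (rexp (Real.log u) - 1 - u * Real.log u) (rexp (2*u) - 1 - u * (2 * u)) := by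
      constructor
      · rw [Real.exp_log (by linarith)]
        have := Real.one_sub_inv_le_log_of_pos (show 0 < u by linarith)
        have h2 : u * (1 - u⁻¹) ≤ u * Real.log u := by gcongr
        rw [mul_sub, mul_inv_cancel₀ (by linarith)] at h2
        linarith
      · have := Real.quadratic_le_exp_of_nonneg (show 0 ≤ 2 * u by linarith)
        nlinarith
    obtain ⟨x, hx, hx2⟩ := this h0
    exact ⟨x, hl.trans_le hx.1, by simp only at hx2; linarith⟩
  unfold xi
  rw [dif_pos h]
  exact h.choose_spec

lemma xi_phi (u : ℝ) (hu : 1 < u) : (Real.exp (xi u) - 1) / xi u = u := by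
  obtain ⟨h1, h2⟩ := xi_spec u hu
  rw [h2]; field_simp; ring

lemma xi_nonneg (u : ℝ) (hu : 1 ≤ u) : 0 ≤ xi u := by
  rcases hu.eq_or_lt with rfl | h
  · rw [xi_one]
  · exact (xi_spec u h).1.le

lemma xi_le (u s : ℝ) (hu : 1 ≤ u) (hs : 0 < s) (h : u ≤ (Real.exp s - 1) / s) : xi u ≤ s := by
  rcases hu.eq_or_lt with rfl | hu
  · rw [xi_one]; exact hs.le
  · by_contra hc
    push Not at hc
    have h1 := phi_mono s (xi u) hs hc.le
    rw [xi_phi u hu] at h1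
    have h2 := Real.add_one_lt_exp (show (xi u - s) / 2 ≠ 0 by
      have : 0 < (xi u - s)/2 := by linarith
      exact this.ne')
    have h3 : u * rexp ((xi u - s) / 2) ≤ u := le_trans (by gcongr) h1
    nlinarith

lemma exp_xi_le (u : ℝ) (hu : 1 ≤ u) : Real.exp (xi u) / u ≤ 4 * Real.log (u + 1) := by
  have l2 := Real.log_two_gt_d9
  have l2' := Real.log_two_lt_d9
  have hlog : Real.log 2 ≤ Real.log (u + 1) := Real.log_le_log (by norm_num) (by linarith)
  have hup : Real.log (u + 1) ≤ Real.log 2 + (u - 1) / 2 := by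
    have := Real.log_le_sub_one_of_pos (show 0 < (u + 1) / 2 by linarith)
    rw [Real.log_div (by linarith) (by norm_num)] at this
    linarith
  have hx : xi u ≤ 2 * Real.log (u + 1) := by
    apply xi_le u _ hu (by linarith)
    rw [le_div_iff₀ (by linarith), two_mul (Real.log (u+1)), Real.exp_add, Real.exp_log (by linarith)]
    nlinarith
  rcases hu.eq_or_lt with rfl | hu
  · rw [xi_one]; simp; linarith
  · rw [(xi_spec u hu).2, div_le_iff₀ (by linarith)]
    nlinarith

lemma geom_bounds (s : ℝ) (m : ℕ) (hm : 1 ≤ m) (hs : 0 < s) :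
    m * ((Real.exp s - 1) / s) ≤ ∑ i ∈ Finset.range m, Real.exp (s / m) ^ (i + 1) ∧
    ∑ i ∈ Finset.range m, Real.exp (s / m) ^ (i + 1) ≤
      Real.exp (s / m) * (m * ((Real.exp s - 1) / s)) := by
  have hm0 : (0:ℝ) < m := by exact_mod_cast hm
  set r := Real.exp (s / m) with hr
  have hsm : 0 < s / m := by positivity
  have hr1 : s / m + 1 ≤ r := Real.add_one_le_exp _
  have hrm : r ^ m = Real.exp s := by
    rw [hr, ← Real.exp_nat_mul]; congr 1; field_simp
  have hsum : (∑ i ∈ Finset.range m, r ^ (i + 1)) * (r - 1) = r * (Real.exp s - 1) := by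
    rw [← hrm, ← geom_sum_mul, ← mul_assoc, Finset.mul_sum]
    simp_rw [pow_succ']
  have hE : 0 < Real.exp s - 1 := by
    have := Real.add_one_lt_exp hs.ne'; linarith
  have hinv : r * (1 - s / m) ≤ 1 := by
    have := Real.add_one_le_exp (-(s/m))
    calc r * (1 - s/m) ≤ r * Real.exp (-(s/m)) := by
          apply mul_le_mul_of_nonneg_left _ (Real.exp_pos _).le; linarith
      _ = 1 := by rw [hr, ← Real.exp_add]; simp
  have hr0 : 0 < r - 1 := by linarith
  have e : (m:ℝ) * ((Real.exp s - 1)/s) = (Real.exp s - 1) / (s / m) := by field_simp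
  rw [e, ← eq_div_iff hr0.ne'] at *
  rw [hsum]
  constructor
  · rw [div_le_div_iff₀ hsm hr0]
    nlinarith
  · rw [mul_div_assoc]
    gcongr
    linarith

end Friable

open Real
namespace Friable

/-- consequences of the size condition -/
lemma size_facts (n m : ℕ) (hm : 1 ≤ m) (hmn : m ≤ n) (hn : 2 ≤ n)
    (h : Real.sqrt (10 * (n : ℝ) * Real.log n) ≤ (m : ℝ)) :
    25 ≤ m ∧ 10 * ((n:ℝ) / m * Real.log n) ≤ m := by
  have hm0 : (0:ℝ) < m := by exact_mod_cast hm
  have hn0 : (2:ℝ) ≤ n := by exact_mod_cast hn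
  have hmn' : (m:ℝ) ≤ n := by exact_mod_cast hmn
  rw [Real.sqrt_le_left hm0.le] at h
  have l2 := Real.log_two_gt_d9
  have hl : Real.log 2 ≤ Real.log n := Real.log_le_log (by norm_num) hn0
  have hu : 10 * ((n:ℝ) / m * Real.log n) ≤ m := by
    rw [div_mul_eq_mul_div, mul_div_assoc', div_le_iff₀ hm0]
    nlinarith
  refine ⟨?_, hu⟩
  have h1 : 10 * Real.log n ≤ m := by
    refine le_trans ?_ hu
    have : 1 ≤ (n:ℝ)/m := by rw [one_le_div hm0]; exact hmn'
    nlinarith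
  have l4 : Real.log 4 = 2 * Real.log 2 := by
    rw [show (4:ℝ) = 2 ^ 2 by norm_num, Real.log_pow]; norm_num
  have l16 : Real.log 16 = 4 * Real.log 2 := by
    rw [show (16:ℝ) = 2 ^ 4 by norm_num, Real.log_pow]; norm_num
  have l8 : Real.log 8 = 3 * Real.log 2 := by
    rw [show (8:ℝ) = 2 ^ 3 by norm_num, Real.log_pow]; norm_num
  have a1 : (4:ℝ) ≤ n := by linarith
  have b1 : Real.log 4 ≤ Real.log n := Real.log_le_log (by norm_num) a1
  have a2 : (8:ℝ) ≤ n := by linarith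
  have b2 : Real.log 8 ≤ Real.log n := Real.log_le_log (by norm_num) a2
  have a3 : (16:ℝ) ≤ n := by linarith
  have b3 : Real.log 16 ≤ Real.log n := Real.log_le_log (by norm_num) a3
  have : (25:ℝ) ≤ m := by linarith
  exact_mod_cast this

lemma xi_le_log (n m : ℕ) (hm : 1 ≤ m) (hmn : m ≤ n) (hn : 2 ≤ n)
    (h : 10 * ((n:ℝ) / m * Real.log n) ≤ m) : xi ((n:ℝ)/m) ≤ Real.log n := by
  have hm0 : (0:ℝ) < m := by exact_mod_cast hm
  have hn0 : (2:ℝ) ≤ n := by exact_mod_cast hn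
  have hmn' : (m:ℝ) ≤ n := by exact_mod_cast hmn
  have hl : 0 < Real.log n := Real.log_pos (by linarith)
  apply xi_le _ _ _ hl
  · rw [le_div_iff₀ hl, Real.exp_log (by linarith)]
    linarith
  · rw [one_le_div hm0]; exact hmn'

lemma exp_num1 : Real.exp (1/10) ≤ 9/8 := by
  have := Real.exp_bound_div_one_sub_of_interval (show (0:ℝ) ≤ 1/10 by norm_num) (by norm_num)
  norm_num at this ⊢
  linarith

lemma exp_num2 : Real.exp (22/100) ≤ 5/4 := by
  have h := Real.exp_bound' (show (0:ℝ) ≤ 22/100 by norm_num) (by norm_num) (show 0 < 4 by norm_num)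
  refine h.trans ?_
  norm_num [Finset.sum_range_succ, Nat.factorial]

lemma r_upper {m : ℕ} {p : ℕ → ℝ} (hp : PRec m p) (hm : 1 ≤ m) (n : ℕ) (hmn : m < n) :
    PRec.r p (n - 1) ≤ Real.exp ((xi ((n:ℝ)/m) + 2 / ((n:ℝ)/m)) / m) := by
  have hm0 : (0:ℝ) < m := by exact_mod_cast hm
  have hmn' : (m:ℝ) < n := by exact_mod_cast hmn
  set u : ℝ := (n:ℝ)/m with hu
  have hu1 : 1 < u := by rw [hu, one_lt_div hm0]; exact hmn'
  have hr := hp.r_gt_one hm (n - 1) (by omega)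
  set s : ℝ := m * Real.log (PRec.r p (n-1)) with hs
  have hs0 : 0 < s := mul_pos hm0 (Real.log_pos hr)
  have hrs : PRec.r p (n-1) = Real.exp (s / m) := by
    rw [hs, mul_div_cancel_left₀ _ hm0.ne', Real.exp_log (by linarith)]
  rw [hrs, Real.exp_le_exp]
  gcongr
  have h1 := (geom_bounds s m hm hs0).1
  rw [← hrs] at h1
  have h2 := h1.trans (hp.sum_le hm (n - 1))
  rw [Nat.cast_sub (by omega)] at h2
  have h3 : (Real.exp s - 1)/s ≤ u + 1 := by
    have : u + 1 = (n + m) / m := by rw [hu]; field_simp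
    rw [this, le_div_iff₀ hm0]
    push_cast at h2
    linarith
  by_cases hc : s ≤ xi u
  · have : 0 < 2 / u := by positivity
    linarith
  · push Not at hc
    have h4 := phi_mono (xi u) s (xi_spec u hu1).1 hc.le
    rw [xi_phi u hu1] at h4
    have h5 := Real.add_one_le_exp ((s - xi u)/2)
    have h6 : u * ((s - xi u)/2 + 1) ≤ u + 1 := (by gcongr : _ ≤ u * rexp ((s - xi u)/2)).trans (h4.trans h3)
    have h7 : (s - xi u) ≤ 2 / u := by
      rw [le_div_iff₀ (by linarith)]; linarith
    linarith

lemma r_lower {m : ℕ} {p : ℕ → ℝ} (hp : PRec m p) (hm : 1 ≤ m) (n k : ℕ) (hmn : m < n)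
    (hk : m ≤ k) (hkn : k + 1 ≤ n) :
    Real.exp ((xi ((n:ℝ)/m) - 2 * xi ((n:ℝ)/m) / m - 2 * ((n:ℝ) / (k+1) - 1)) / m) ≤
      PRec.r p k := by
  have hm0 : (0:ℝ) < m := by exact_mod_cast hm
  have hmn' : (m:ℝ) < n := by exact_mod_cast hmn
  set u : ℝ := (n:ℝ)/m with hu
  have hu1 : 1 < u := by rw [hu, one_lt_div hm0]; exact hmn'
  have hr := hp.r_gt_one hm k hk
  set s : ℝ := m * Real.log (PRec.r p k) with hs
  have hs0 : 0 < s := mul_pos hm0 (Real.log_pos hr)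
  have hrs : PRec.r p k = Real.exp (s / m) := by
    rw [hs, mul_div_cancel_left₀ _ hm0.ne', Real.exp_log (by linarith)]
  rw [hrs, Real.exp_le_exp]
  gcongr
  have h2 : (1:ℝ) ≤ n / (k+1) := by
    rw [one_le_div (by positivity)]
    exact_mod_cast (by omega : k + 1 ≤ n)
  have hxi := (xi_spec u hu1).1
  have h1 : 0 ≤ 2 * xi u / m := by positivity
  by_cases hc : xi u ≤ s
  · linarith
  · push Not at hc
    have h3 := (geom_bounds s m hm hs0).2
    rw [← hrs] at h3
    have h4 := (hp.sum_ge hm k (by omega)).trans h3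
    have h5 := phi_mono s (xi u) hs0 hc.le
    rw [xi_phi u hu1] at h5
    rw [hrs] at h4
    have h6 : (k + 1) * Real.exp ((xi u - s)/2) ≤ Real.exp (s/m) * n := by
      calc (k + 1) * Real.exp ((xi u - s)/2)
          ≤ (rexp (s / ↑m) * (↑m * ((rexp s - 1) / s))) * Real.exp ((xi u - s)/2) := by gcongr
        _ = rexp (s / ↑m) * (m * ((rexp s - 1) / s * Real.exp ((xi u - s)/2))) := by ring
        _ ≤ rexp (s / ↑m) * (m * u) := by gcongr
        _ = _ := by rw [hu, mul_div_cancel₀ _ hm0.ne']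
    have h7 : Real.exp ((xi u - s)/2 - s/m) ≤ n / (k+1) := by
      rw [Real.exp_sub, div_le_div_iff₀ (Real.exp_pos _) (by positivity)]
      linarith
    have h8 := (Real.add_one_le_exp _).trans h7
    have h9 : s / m ≤ xi u / m := by gcongr
    have h10 : 2 * xi u / m = 2 * (xi u / m) := by ring
    linarith

set_option maxHeartbeats 1000000 in
/-- main comparison -/
lemma main_est {m : ℕ} {p : ℕ → ℝ} (hp : PRec m p) (hm : 1 ≤ m) (n : ℕ) (hmn : m ≤ n) (hn : 2 ≤ n)
    (h : Real.sqrt (10 * (n : ℝ) * Real.log n) ≤ (m : ℝ)) (k : ℕ) (hk : 1 ≤ k) :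
    |(if m + k ≤ n then p (n - (m + k)) / p n else 0) - Real.exp (xi ((n:ℝ)/m) / m) ^ (m + k)| ≤
      20 * (Real.exp (xi ((n:ℝ)/m)) / ((n:ℝ)/m)) * (5/4) ^ k := by
  have hm0 : (0:ℝ) < m := by exact_mod_cast hm
  have hmn' : (m:ℝ) ≤ n := by exact_mod_cast hmn
  obtain ⟨hm25, hsz⟩ := size_facts n m hm hmn hn h
  have hm25' : (25:ℝ) ≤ m := by exact_mod_cast hm25
  have hxl := xi_le_log n m hm hmn hn hsz
  set u : ℝ := (n:ℝ)/m with hu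
  have hnu : (n:ℝ) = u * m := by rw [hu, div_mul_cancel₀ _ hm0.ne']
  have hu1 : 1 ≤ u := by rw [hu, one_le_div hm0]; exact hmn'
  have hu0 : 0 < u := by linarith
  set ξ := xi u with hξ
  have hξ0 : 0 ≤ ξ := xi_nonneg u hu1
  have hln : Real.log 2 ≤ Real.log n := Real.log_le_log (by norm_num) (by exact_mod_cast hn)
  have l2 := Real.log_two_gt_d9
  have huξ : 10 * (u * ξ) ≤ m := le_trans (by gcongr) hsz
  have hum : u ≤ m := by nlinarith
  have hξm : ξ / m ≤ (1/10) / u := by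
    rw [div_le_div_iff₀ hm0 hu0]; linarith
  have hξm1 : ξ / m ≤ 1/10 := by
    refine hξm.trans ?_
    rw [div_le_iff₀ hu0]; linarith
  set z := Real.exp (ξ / m) with hz
  have hz0 : 0 < z := Real.exp_pos _
  have hz1 : 1 ≤ z := Real.one_le_exp (by positivity)
  have hz98 : z ≤ 9/8 := (Real.exp_le_exp.2 hξm1).trans exp_num1
  have hzm : z ^ m = Real.exp ξ := by
    rw [hz, ← Real.exp_nat_mul]; congr 1; field_simp
  have hE : 0 < Real.exp ξ := Real.exp_pos _
  have hz54 : z ^ k ≤ (5/4) ^ k := by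
    apply pow_le_pow_left₀ hz0.le; linarith
  have hk0 : (1:ℝ) ≤ k := by exact_mod_cast hk
  set pp : ℝ := (if m + k ≤ n then p (n - (m + k)) / p n else 0) with hpp
  have hpn := hp.pos hm n
  have hpp0 : 0 ≤ pp := by
    rw [hpp]; split_ifs
    · exact (div_pos (hp.pos hm _) hpn).le
    · exact le_rfl
  have hk54 : (0:ℝ) < (5/4)^k := by positivity
  have hR0 : 0 < Real.exp ξ / u := by positivity
  rw [abs_le]
  constructor
  · -- lower bound
    suffices hs : z ^ (m + k) - pp ≤ 20 * (Real.exp ξ / u) * (5/4)^k by linarith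
    rw [pow_add, hzm]
    by_cases hu4 : u < 4
    · have : Real.exp ξ * z ^ k ≤ 20 * (Real.exp ξ / u) * (5/4)^k := by
        calc Real.exp ξ * z ^ k ≤ Real.exp ξ * (5/4)^k := by gcongr
          _ = (Real.exp ξ / u * u) * (5/4)^k := by rw [div_mul_cancel₀ _ hu0.ne']
          _ ≤ (Real.exp ξ / u * 20) * (5/4)^k := by gcongr; linarith
          _ = _ := by ring
      linarith
    push Not at hu4
    by_cases hkm : m < k
    · have h1 : u ≤ 20 * (10/9)^k := by
        have hb := one_add_mul_le_pow (show (-2:ℝ) ≤ 1/9 by norm_num) k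
        have hkm' : (m:ℝ) < k := by exact_mod_cast hkm
        norm_num at hb ⊢
        linarith
      have : Real.exp ξ * z ^ k ≤ 20 * (Real.exp ξ / u) * (5/4)^k := by
        calc Real.exp ξ * z ^ k ≤ Real.exp ξ * (9/8)^k := by gcongr
          _ = (Real.exp ξ / u * u) * (9/8)^k := by rw [div_mul_cancel₀ _ hu0.ne']
          _ ≤ (Real.exp ξ / u * (20 * (10/9)^k)) * (9/8)^k := by gcongr
          _ = 20 * (Real.exp ξ / u) * ((10/9)^k * (9/8)^k) := by ring
          _ = _ := by rw [← mul_pow]; norm_num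
      linarith
    push Not at hkm
    have hkm' : (k:ℝ) ≤ m := by exact_mod_cast hkm
    have hn4 : 4 * m ≤ n := by
      have : 4 * (m:ℝ) ≤ n := by rw [hnu]; gcongr
      exact_mod_cast this
    have hle : m + k ≤ n := by omega
    have hpeq : pp = p (n - (m + k)) / p n := by rw [hpp, if_pos hle]
    have hl := hp.lower hm (n - (m + k)) (m + k)
    rw [Nat.sub_add_cancel hle] at hl
    have hl2 : PRec.r p (n - (m+k)) ^ (m + k) ≤ pp := by
      rw [hpeq, le_div_iff₀ hpn]; exact hl
    have hr := r_lower hp hm n (n - (m + k)) (by omega) (by omega) (by omega)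
    rw [← hu, ← hξ] at hr
    have hq : (n:ℝ) / (((n - (m + k) : ℕ) : ℝ) + 1) - 1 ≤ 4 / u := by
      rw [Nat.cast_sub hle]
      push_cast
      have hd : u * m / 2 ≤ (n:ℝ) - (m + k) + 1 := by nlinarith
      have hd0 : 0 < u * m / 2 := by positivity
      have hd1 : (0:ℝ) < (n:ℝ) - (m + k) + 1 := by linarith
      rw [div_sub_one hd1.ne', div_le_div_iff₀ hd1 hu0]
      nlinarith
    have hexp : Real.exp ((ξ - 9 / u)/m) ≤ PRec.r p (n - (m+k)) := by
      refine le_trans (Real.exp_le_exp.2 ?_) hr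
      apply div_le_div_of_nonneg_right _ hm0.le
      have e1 : 2 * ξ / m = 2 * (ξ / m) := by ring
      have e2 : 9 / u = 8 / u + 10 * ((1/10)/u) := by field_simp; norm_num
      have e3 : 8 / u = 2 * (4 / u) := by ring
      have e4 : 0 < (1/10)/u := by positivity
      rw [e1, e2, e3]
      linarith
    have h5 : Real.exp ((ξ - 9 / u)/m) ^ (m + k) ≤ pp := le_trans (by gcongr) hl2
    have h6 : Real.exp ((ξ - 9 / u)/m) ^ (m + k) = (Real.exp ξ * z ^ k) * Real.exp (-(9/u * ((m + k)/m))) := by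
      rw [← hzm, ← pow_add, hz, ← Real.exp_nat_mul, ← Real.exp_nat_mul, ← Real.exp_add]
      congr 1
      push_cast
      field_simp
      ring
    have h7 : 1 - 18 / u ≤ Real.exp (-(9/u * ((m + k)/m))) := by
      have h8 := Real.add_one_le_exp (-(9/u * ((m + k)/m)))
      have h9 : 9/u * (((m:ℝ) + k)/m) ≤ 9 / u * 2 := by
        gcongr
        rw [div_le_iff₀ hm0]; linarith
      have : 9 / u * 2 = 18 / u := by ring
      linarith
    rw [h6] at h5
    have h8 : (Real.exp ξ * z ^ k) * (1 - 18/u) ≤ pp := le_trans (by gcongr) h5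
    calc rexp ξ * z ^ k - pp ≤ 18 * (rexp ξ / u) * z ^ k := by
          have : (Real.exp ξ * z ^ k) * (1 - 18/u) = Real.exp ξ * z ^ k - 18 * (rexp ξ / u) * z ^ k := by ring
          linarith
      _ ≤ 20 * (rexp ξ / u) * (5/4) ^ k := by gcongr; norm_num
  · -- upper bound
    by_cases hle : m + k ≤ n
    swap
    · have : pp = 0 := by rw [hpp, if_neg hle]
      rw [this]
      have : 0 < z ^ (m + k) := by positivity
      have : 0 < 20 * (Real.exp ξ / u) * (5/4)^k := by positivity
      linarith
    have hpeq : pp = p (n - (m + k)) / p n := by rw [hpp, if_pos hle]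
    have hl := hp.upper hm (n - (m + k)) (m + k)
    rw [Nat.sub_add_cancel hle] at hl
    have hl2 : pp ≤ PRec.r p (n - 1) ^ (m + k) := by
      rw [hpeq, div_le_iff₀ hpn]; exact hl
    have hr := r_upper hp hm n (by omega)
    rw [← hu, ← hξ] at hr
    have h5 : pp ≤ Real.exp ((ξ + 2 / u)/m) ^ (m + k) := by
      refine hl2.trans ?_
      apply pow_le_pow_left₀ _ hr
      exact zero_le_one.trans (hp.r_ge_one hm _)
    set x : ℝ := 2 / u * (1 + k / m) with hx
    have hx0 : 0 ≤ x := by positivity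
    have h6 : Real.exp ((ξ + 2 / u)/m) ^ (m + k) = (Real.exp ξ * z ^ k) * Real.exp x := by
      rw [← hzm, ← pow_add, hz, ← Real.exp_nat_mul, ← Real.exp_nat_mul, ← Real.exp_add]
      congr 1
      push_cast
      rw [hx]
      field_simp
    have h7 : Real.exp x - 1 ≤ x * Real.exp x := by
      have := Real.add_one_le_exp (-x)
      have e : Real.exp (-x) * Real.exp x = 1 := by rw [← Real.exp_add]; simp
      have hpos := Real.exp_pos x
      have h := mul_le_mul_of_nonneg_right this hpos.le
      linarith
    have h8 : 1 + (k:ℝ)/m ≤ Real.exp (k / m) := by linarith [Real.add_one_le_exp ((k:ℝ)/m)]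
    have h9 : Real.exp x ≤ Real.exp 2 * Real.exp (2 * (k / m)) := by
      rw [← Real.exp_add, Real.exp_le_exp, hx]
      have : 2 / u ≤ 2 := by rw [div_le_iff₀ hu0]; linarith
      have hh : (0:ℝ) ≤ 1 + (k:ℝ) / m := by positivity
      have := mul_le_mul_of_nonneg_right this hh
      linarith
    have h10 : Real.exp 2 ≤ 10 := by
      have := Real.exp_one_lt_d9
      have e : Real.exp 2 = Real.exp 1 * Real.exp 1 := by rw [← Real.exp_add]; norm_num
      rw [e]
      nlinarith [Real.exp_pos 1]
    have h11 : z ^ k * (Real.exp (k/m) * Real.exp (2 * (k/m))) ≤ (5/4)^k := by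
      have : z ^ k * (Real.exp (k/m) * Real.exp (2 * (k/m))) = Real.exp (ξ/m + 3/m) ^ k := by
        rw [hz, ← Real.exp_nat_mul, ← Real.exp_nat_mul, ← Real.exp_add, ← Real.exp_add]
        congr 1
        field_simp
        ring
      rw [this]
      apply pow_le_pow_left₀ (Real.exp_pos _).le
      refine le_trans (Real.exp_le_exp.2 ?_) exp_num2
      have : 3 / (m:ℝ) ≤ 12/100 := by rw [div_le_iff₀ hm0]; linarith
      linarith
    rw [pow_add, hzm]
    calc pp - rexp ξ * z ^ k ≤ rexp ξ * z ^ k * (Real.exp x - 1) := by rw [h6] at h5; linarith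
      _ ≤ rexp ξ * z ^ k * (x * Real.exp x) := by gcongr
      _ ≤ rexp ξ * z ^ k * ((2 / u * Real.exp (k/m)) * (10 * Real.exp (2 * (k/m)))) := by
        rw [hx] at h9 ⊢
        gcongr
        refine h9.trans ?_
        gcongr
      _ = 20 * (rexp ξ / u) * (z ^ k * (Real.exp (k/m) * Real.exp (2 * (k/m)))) := by ring
      _ ≤ _ := by gcongr

end Friable

open Real
namespace Friable
open Multiset in
/-- multisets of integers in `[1,m]` with sum `n` -/
noncomputable def Part (m n : ℕ) : Finset (Multiset ℕ) :=
  open Classical in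
  ((Finset.univ : Finset n.Partition).image Nat.Partition.parts).filter (fun s => ∀ i ∈ s, i ≤ m)

lemma mem_Part (m n : ℕ) (s : Multiset ℕ) :
    s ∈ Part m n ↔ s.sum = n ∧ ∀ i ∈ s, 1 ≤ i ∧ i ≤ m := by
  unfold Part
  simp only [Finset.mem_filter, Finset.mem_image, Finset.mem_univ, true_and]
  constructor
  · rintro ⟨⟨l, rfl⟩, h⟩
    exact ⟨l.parts_sum, fun i hi => ⟨l.parts_pos hi, h i hi⟩⟩
  · rintro ⟨h1, h2⟩
    exact ⟨⟨⟨s, fun {i} hi => (h2 i hi).1, h1⟩, rfl⟩, fun i hi => (h2 i hi).2⟩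

/-- cycle-type weight -/
noncomputable def wt (s : Multiset ℕ) : ℝ :=
  ((s.prod : ℝ) * ∏ i ∈ s.toFinset, ((s.count i).factorial : ℝ))⁻¹

lemma prod_fact_superset (s : Multiset ℕ) (U : Finset ℕ) (h : s.toFinset ⊆ U) :
    ∏ i ∈ s.toFinset, ((s.count i).factorial : ℝ) = ∏ i ∈ U, ((s.count i).factorial : ℝ) := by
  apply Finset.prod_subset h
  intro i _ hi
  rw [Multiset.mem_toFinset] at hi
  rw [Multiset.count_eq_zero_of_notMem hi]; simp

lemma wt_cons (i : ℕ) (t : Multiset ℕ) (hi : 1 ≤ i) :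
    wt (i ::ₘ t) * ((i:ℝ) * ((i ::ₘ t).count i : ℝ)) = wt t := by
  unfold wt
  rw [prod_fact_superset (i ::ₘ t) (insert i t.toFinset) (by simp),
    prod_fact_superset t (insert i t.toFinset) (by simp)]
  rw [← Finset.mul_prod_erase _ _ (Finset.mem_insert_self i _),
    ← Finset.mul_prod_erase (insert i t.toFinset) (fun j => ((t.count j).factorial : ℝ)) (Finset.mem_insert_self i _)]
  have : ∏ j ∈ (insert i t.toFinset).erase i, (((i ::ₘ t).count j).factorial : ℝ) =
      ∏ j ∈ (insert i t.toFinset).erase i, ((t.count j).factorial : ℝ) := by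
    apply Finset.prod_congr rfl
    intro j hj
    rw [Multiset.count_cons_of_ne (Finset.ne_of_mem_erase hj)]
  rw [this, Multiset.count_cons_self, Nat.factorial_succ, Multiset.prod_cons]
  push_cast
  have hi0 : (i:ℝ) ≠ 0 := by exact_mod_cast (by omega : i ≠ 0)
  have hc : ((t.count i : ℝ) + 1) ≠ 0 := by positivity
  simp only [mul_inv]
  field_simp

/-- the weighted sum over partitions -/
noncomputable def W (m n : ℕ) : ℝ := ∑ s ∈ Part m n, wt s

lemma W_rec (m : ℕ) : PRec m (W m) where
  zero := by
    have : Part m 0 = {0} := by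
      ext s
      rw [mem_Part, Finset.mem_singleton]
      constructor
      · rintro ⟨h1, h2⟩
        rw [Multiset.sum_eq_zero_iff] at h1
        apply Multiset.eq_zero_of_forall_notMem
        intro a ha
        have := h1 a ha
        have := (h2 a ha).1
        omega
      · rintro rfl; simp
    unfold W
    rw [this]
    simp [wt]
  step := by
    intro n
    unfold W
    rw [Finset.mul_sum]
    have h1 : ∀ s ∈ Part m n, (n:ℝ) * wt s = ∑ i ∈ s.toFinset, wt (s.erase i) := by
      intro s hs
      rw [mem_Part] at hs
      have e : (n:ℝ) = ∑ i ∈ s.toFinset, (i:ℝ) * (s.count i : ℝ) := by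
        rw [← hs.1, Finset.sum_multiset_count]
        push_cast
        apply Finset.sum_congr rfl
        intro i _
        simp [mul_comm]
      rw [e, Finset.sum_mul]
      apply Finset.sum_congr rfl
      intro i hi
      rw [Multiset.mem_toFinset] at hi
      have := wt_cons i (s.erase i) (hs.2 i hi).1
      rw [Multiset.cons_erase hi] at this
      rw [← this]; ring
    rw [Finset.sum_congr rfl h1, Finset.sum_sigma', Finset.sum_sigma']
    refine Finset.sum_bij' (fun x _ => (⟨x.2, x.1.erase x.2⟩ : (_ : ℕ) × Multiset ℕ))
      (fun y _ => (⟨y.1 ::ₘ y.2, y.1⟩ : (_ : Multiset ℕ) × ℕ)) ?_ ?_ ?_ ?_ ?_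
    · rintro ⟨s, i⟩ h
      simp only [Finset.mem_sigma, Multiset.mem_toFinset, mem_Part, Finset.mem_Icc, le_min_iff] at h ⊢
      obtain ⟨⟨h1, h2⟩, h3⟩ := h
      have h4 : i + (s.erase i).sum = n := by rw [← h1, Multiset.sum_erase h3]
      refine ⟨⟨(h2 i h3).1, (h2 i h3).2, by omega⟩, by omega, fun j hj => h2 j (Multiset.mem_of_mem_erase hj)⟩
    · rintro ⟨i, s⟩ h
      simp only [Finset.mem_sigma, Multiset.mem_toFinset, mem_Part, Finset.mem_Icc, le_min_iff] at h ⊢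
      obtain ⟨h1, h2, h3⟩ := h
      refine ⟨⟨by rw [Multiset.sum_cons]; omega, ?_⟩, by simp⟩
      intro j hj
      rw [Multiset.mem_cons] at hj
      rcases hj with rfl | hj
      · exact ⟨h1.1, h1.2.1⟩
      · exact h3 j hj
    · rintro ⟨s, i⟩ h
      simp only [Finset.mem_sigma, Multiset.mem_toFinset] at h
      simp [Multiset.cons_erase h.2]
    · rintro ⟨i, s⟩ h
      simp
    · rintro ⟨s, i⟩ h
      rfl

lemma filter_decomp (s : Multiset ℕ) (hs : ∀ i ∈ s, 1 ≤ i) :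
    s = s.filter (fun i => 2 ≤ i) + Multiset.replicate (s.count 1) 1 := by
  conv_lhs => rw [← Multiset.filter_add_not (fun i => 2 ≤ i) s]
  congr 1
  rw [← Multiset.filter_eq' s 1]
  apply Multiset.filter_congr
  intro i hi
  have := hs i hi
  omega

lemma parts_eq_iff (n : ℕ) (σ : Equiv.Perm (Fin n)) (s : Multiset ℕ) (h1 : s.sum = n)
    (hs : ∀ i ∈ s, 1 ≤ i) :
    σ.partition.parts = s ↔ σ.cycleType = s.filter (fun i => 2 ≤ i) := by
  constructor
  · intro h
    rw [← h, Equiv.Perm.filter_parts_partition_eq_cycleType]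
  · intro h
    rw [Equiv.Perm.parts_partition, ← Equiv.Perm.sum_cycleType, h, Fintype.card_fin]
    conv_rhs => rw [filter_decomp s hs]
    congr 2
    have := congrArg Multiset.sum (filter_decomp s hs)
    rw [Multiset.sum_add, Multiset.sum_replicate, h1] at this
    simp at this
    omega

lemma card_fiber (n : ℕ) (s : Multiset ℕ) (h1 : s.sum = n) (hs : ∀ i ∈ s, 1 ≤ i) :
    ((Finset.univ.filter (fun σ : Equiv.Perm (Fin n) => σ.partition.parts = s)).card : ℝ) =
      n.factorial * wt s := by
  classical
  set t := s.filter (fun i => 2 ≤ i) with ht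
  have hd : s = t + Multiset.replicate (s.count 1) 1 := filter_decomp s hs
  have hsum : t.sum + s.count 1 = n := by
    have := congrArg Multiset.sum hd
    rw [Multiset.sum_add, Multiset.sum_replicate, h1] at this
    simpa using this.symm
  have hprod : s.prod = t.prod := by
    have := congrArg Multiset.prod hd
    rw [Multiset.prod_add, Multiset.prod_replicate] at this
    simpa using this
  have hf : Finset.univ.filter (fun σ : Equiv.Perm (Fin n) => σ.partition.parts = s) =
      Finset.univ.filter (fun σ : Equiv.Perm (Fin n) => σ.cycleType = t) := by
    apply Finset.filter_congr
    intro σ _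
    rw [parts_eq_iff n σ s h1 hs]
  rw [hf]
  have hc := Equiv.Perm.card_of_cycleType_mul_eq (Fin n) t
  rw [if_pos, Fintype.card_fin] at hc
  swap
  · rw [Fintype.card_fin]
    refine ⟨by omega, fun a ha => ?_⟩
    rw [ht, Multiset.mem_filter] at ha
    exact ha.2
  have hw : wt s = (((n - t.sum).factorial : ℝ) * t.prod * (∏ i ∈ t.toFinset, ((t.count i).factorial : ℝ)))⁻¹ := by
    unfold wt
    congr 1
    have h1t : 1 ∉ t.toFinset := by
      rw [Multiset.mem_toFinset, ht, Multiset.mem_filter]; omega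
    have hsub : s.toFinset ⊆ insert 1 t.toFinset := by
      intro i hi
      rw [Multiset.mem_toFinset] at hi
      rw [Finset.mem_insert, Multiset.mem_toFinset, ht, Multiset.mem_filter]
      have := hs i hi
      by_cases h : i = 1
      · left; exact h
      · right; exact ⟨hi, by omega⟩
    rw [prod_fact_superset s _ hsub, Finset.prod_insert h1t, hprod]
    rw [show n - t.sum = s.count 1 by omega]
    have : ∏ i ∈ t.toFinset, ((s.count i).factorial : ℝ) = ∏ i ∈ t.toFinset, ((t.count i).factorial : ℝ) := by
      apply Finset.prod_congr rfl
      intro i hi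
      rw [Multiset.mem_toFinset, ht, Multiset.mem_filter] at hi
      rw [ht, Multiset.count_filter, if_pos hi.2]
    rw [this]; ring
  rw [hw, ← hc]
  have hne : (((n - t.sum).factorial : ℝ) * t.prod * (∏ i ∈ t.toFinset, ((t.count i).factorial : ℝ))) ≠ 0 := by
    have : t.prod ≠ 0 := by
      apply Multiset.prod_ne_zero
      intro h0
      rw [ht, Multiset.mem_filter] at h0
      omega
    have h2 : (t.prod : ℝ) ≠ 0 := by exact_mod_cast this
    have h3 : (∏ i ∈ t.toFinset, ((t.count i).factorial : ℝ)) ≠ 0 := by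
      rw [Finset.prod_ne_zero_iff]; intro i _; positivity
    have h4 : ((n - t.sum).factorial : ℝ) ≠ 0 := by positivity
    exact mul_ne_zero (mul_ne_zero h4 h2) h3
  push_cast at hne ⊢
  rw [mul_assoc, mul_inv_cancel₀ hne, mul_one]

lemma permProb_eq (n m : ℕ) (hm : 1 ≤ m) : permProb n m = W m n := by
  classical
  unfold permProb W
  rw [div_eq_iff (by positivity), mul_comm, Finset.mul_sum]
  rw [Nat.card_eq_fintype_card, Fintype.card_subtype]
  rw [Finset.card_eq_sum_card_fiberwise (f := fun σ : Equiv.Perm (Fin n) => σ.partition.parts)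
    (t := Part m n)]
  · push_cast
    apply Finset.sum_congr rfl
    intro s hs
    rw [mem_Part] at hs
    rw [← card_fiber n s hs.1 (fun i hi => (hs.2 i hi).1)]
    congr 2
    rw [Finset.filter_filter]
    apply Finset.filter_congr
    intro σ _
    constructor
    · exact fun h => h.2
    · intro h
      refine ⟨fun c hc => ?_, h⟩
      have : c ∈ s := by
        rw [← h, Equiv.Perm.parts_partition, Multiset.mem_add]; left; exact hc
      exact (hs.2 c this).2
  · intro σ hσ
    simp only [Finset.coe_filter, Finset.mem_univ, true_and, Set.mem_ofPred_eq] at hσ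
    simp only [Finset.mem_coe, mem_Part]
    refine ⟨by rw [σ.partition.parts_sum, Fintype.card_fin], fun i hi => ⟨σ.partition.parts_pos hi, ?_⟩⟩
    rw [Equiv.Perm.parts_partition, Multiset.mem_add] at hi
    rcases hi with hi | hi
    · exact hσ i hi
    · rw [Multiset.eq_of_mem_replicate hi]; exact hm

end Friable

open Real
namespace Friable
open PowerSeries

/-- absolutely convergent evaluation of a power series -/
def HasVal (A : PowerSeries ℝ) (y v : ℝ) : Prop :=
  Summable (fun n => ‖coeff n A * y ^ n‖) ∧ ∑' n, coeff n A * y ^ n = v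

lemma HasVal.mul {A B : PowerSeries ℝ} {y v w : ℝ} (hA : HasVal A y v) (hB : HasVal B y w) :
    HasVal (A * B) y (v * w) := by
  have e : ∀ n, coeff n (A * B) * y ^ n =
      ∑ kl ∈ Finset.HasAntidiagonal.antidiagonal n, (coeff kl.1 A * y ^ kl.1) * (coeff kl.2 B * y ^ kl.2) := by
    intro n
    rw [coeff_mul, Finset.sum_mul]
    apply Finset.sum_congr rfl
    intro kl hkl
    rw [Finset.HasAntidiagonal.mem_antidiagonal] at hkl
    rw [← hkl, pow_add]; ring
  have h1 := summable_norm_sum_mul_antidiagonal_of_summable_norm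
    (f := fun n => coeff n A * y ^ n) (g := fun n => coeff n B * y ^ n) hA.1 hB.1
  have h2 := tsum_mul_tsum_eq_tsum_sum_antidiagonal_of_summable_norm
    (f := fun n => coeff n A * y ^ n) (g := fun n => coeff n B * y ^ n) hA.1 hB.1
  rw [hA.2, hB.2] at h2
  have e' : (fun n => coeff n (A * B) * y ^ n) = fun n =>
      ∑ kl ∈ Finset.HasAntidiagonal.antidiagonal n,
        (coeff kl.1 A * y ^ kl.1) * (coeff kl.2 B * y ^ kl.2) := funext e
  constructor
  · have : (fun n => ‖coeff n (A * B) * y ^ n‖) = fun n => ‖(fun n => coeff n (A * B) * y ^ n) n‖ := rfl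
    rw [this, e']
    exact h1
  · rw [e']
    exact h2.symm

lemma HasVal.one (y : ℝ) : HasVal 1 y 1 := by
  have h : ∀ n ∉ ({0} : Finset ℕ), coeff n (1 : PowerSeries ℝ) * y ^ n = 0 := by
    intro n hn
    simp at hn
    simp [coeff_one, hn]
  constructor
  · apply summable_of_ne_finset_zero (s := {0})
    intro n hn
    rw [h n hn]; simp
  · rw [tsum_eq_sum h]; simp

lemma HasVal.prod {ι : Type*} (S : Finset ι) (A : ι → PowerSeries ℝ) (v : ι → ℝ) (y : ℝ)
    (h : ∀ i ∈ S, HasVal (A i) y (v i)) : HasVal (∏ i ∈ S, A i) y (∏ i ∈ S, v i) := by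
  classical
  induction S using Finset.induction_on with
  | empty => simpa using HasVal.one y
  | insert i S hi ih =>
    rw [Finset.prod_insert hi, Finset.prod_insert hi]
    exact (h i (Finset.mem_insert_self _ _)).mul (ih fun j hj => h j (Finset.mem_insert_of_mem hj))

/-- logarithmic derivative relation -/
def LD (A L : PowerSeries ℝ) : Prop := X * derivative (R := ℝ) A = L * A

lemma LD.mul {A B L M : PowerSeries ℝ} (hA : LD A L) (hB : LD B M) : LD (A * B) (L + M) := by
  unfold LD at *
  rw [Derivation.leibniz, smul_eq_mul, smul_eq_mul]
  linear_combination A * hB + B * hA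

lemma LD.one : LD 1 0 := by
  unfold LD; simp

lemma LD.prod {ι : Type*} (S : Finset ι) (A : ι → PowerSeries ℝ) (L : ι → PowerSeries ℝ)
    (h : ∀ i ∈ S, LD (A i) (L i)) : LD (∏ i ∈ S, A i) (∑ i ∈ S, L i) := by
  classical
  induction S using Finset.induction_on with
  | empty => simpa using LD.one
  | insert i S hi ih =>
    rw [Finset.prod_insert hi, Finset.sum_insert hi]
    exact (h i (Finset.mem_insert_self _ _)).mul (ih fun j hj => h j (Finset.mem_insert_of_mem hj))

lemma coeff_X_deriv (A : PowerSeries ℝ) (n : ℕ) : coeff n (X * derivative (R := ℝ) A) = n * coeff n A := by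
  cases n with
  | zero => simp
  | succ n => rw [coeff_succ_X_mul, coeff_derivative]; push_cast; ring

lemma LD_iff (A L : PowerSeries ℝ) : LD A L ↔
    ∀ n : ℕ, (n:ℝ) * coeff n A = ∑ kl ∈ Finset.HasAntidiagonal.antidiagonal n, coeff kl.1 L * coeff kl.2 A := by
  unfold LD
  rw [PowerSeries.ext_iff]
  simp_rw [coeff_X_deriv, coeff_mul]

/-- `exp(X^i/i)` -/
noncomputable def ee (i : ℕ) : PowerSeries ℝ :=
  mk fun n => if i ∣ n then ((i:ℝ) ^ (n / i) * ((n / i).factorial : ℝ))⁻¹ else 0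

lemma hasSum_dvd (i : ℕ) (hi : 1 ≤ i) (f : ℕ → ℝ) (g : ℕ → ℝ) (v : ℝ)
    (h0 : ∀ n, ¬ i ∣ n → f n = 0) (hk : ∀ k, f (i * k) = g k) (hg : HasSum g v) : HasSum f v := by
  have hinj : Function.Injective (fun k : ℕ => i * k) := fun a b h => Nat.eq_of_mul_eq_mul_left hi h
  rw [← hinj.hasSum_iff]
  · convert hg using 1
    funext k
    exact hk k
  · intro n hn
    apply h0
    rintro ⟨k, rfl⟩
    exact hn ⟨k, rfl⟩

lemma HasVal_of_nonneg (A : PowerSeries ℝ) (y v : ℝ) (hA : ∀ n, 0 ≤ coeff n A) (hy : 0 ≤ y)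
    (h : HasSum (fun n => coeff n A * y ^ n) v) : HasVal A y v := by
  refine ⟨?_, h.tsum_eq⟩
  convert h.summable using 2 with n
  rw [Real.norm_of_nonneg]
  exact mul_nonneg (hA n) (pow_nonneg hy n)

lemma ee_val (i : ℕ) (hi : 1 ≤ i) (y : ℝ) (hy : 0 ≤ y) : HasVal (ee i) y (Real.exp (y ^ i / i)) := by
  apply HasVal_of_nonneg _ _ _ _ hy
  · have hg : HasSum (fun k : ℕ => (y ^ i / i) ^ k / (k.factorial : ℝ)) (Real.exp (y ^ i / i)) := by
      rw [Real.exp_eq_exp_ℝ]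
      exact NormedSpace.expSeries_div_hasSum_exp (y ^ i / (i:ℝ))
    refine hasSum_dvd i hi _ _ _ ?_ ?_ hg
    · intro n hn
      simp [ee, hn]
    · intro k
      simp only [ee, coeff_mk, dvd_mul_right, if_true]
      rw [Nat.mul_div_cancel_left _ (by omega), div_pow, ← pow_mul, mul_inv, div_eq_mul_inv, div_eq_mul_inv]
      ring
  · intro n
    simp only [ee, coeff_mk]
    split_ifs <;> positivity

lemma ee_LD (i : ℕ) (hi : 1 ≤ i) : LD (ee i) (X ^ i) := by
  unfold LD
  ext n
  rw [coeff_X_deriv, coeff_X_pow_mul']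
  simp only [ee, coeff_mk]
  by_cases hn : i ∣ n
  · obtain ⟨k, rfl⟩ := hn
    cases k with
    | zero => simp; omega
    | succ k =>
      have h1 : i ≤ i * (k + 1) := Nat.le_mul_of_pos_right _ (by omega)
      have h2 : i * (k + 1) - i = i * k := by rw [mul_add, mul_one, Nat.add_sub_cancel]
      rw [if_pos (dvd_mul_right _ _), if_pos h1, h2, if_pos (dvd_mul_right _ _),
        Nat.mul_div_cancel_left _ (by omega), Nat.mul_div_cancel_left _ (by omega), Nat.factorial_succ]
      have : (i:ℝ) ≠ 0 := by exact_mod_cast (by omega : i ≠ 0)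
      push_cast
      field_simp
      ring
  · rw [if_neg hn, mul_zero]
    split_ifs with h1 h2
    · exact absurd ((Nat.dvd_sub_iff_left h1 dvd_rfl).1 h2) hn
    · rfl
    · rfl

/-- the generating function of friable permutations -/
noncomputable def QQ (m : ℕ) : PowerSeries ℝ := ∏ i ∈ Finset.Icc 1 m, ee i

lemma QQ_val (m : ℕ) (y : ℝ) (hy : 0 ≤ y) :
    HasVal (QQ m) y (Real.exp (∑ i ∈ Finset.Icc 1 m, y ^ i / (i:ℝ))) := by
  rw [Real.exp_sum]
  apply HasVal.prod
  intro i hi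
  exact ee_val i (Finset.mem_Icc.1 hi).1 y hy

lemma QQ_LD (m : ℕ) : LD (QQ m) (∑ i ∈ Finset.Icc 1 m, X ^ i) := by
  apply LD.prod
  intro i hi
  exact ee_LD i (Finset.mem_Icc.1 hi).1

lemma PRec.unique {m : ℕ} {p p' : ℕ → ℝ} (h : PRec m p) (h' : PRec m p') : p = p' := by
  funext n
  induction n using Nat.strong_induction_on with
  | _ n ih =>
    rcases Nat.eq_zero_or_pos n with rfl | hn
    · rw [h.zero, h'.zero]
    · have hn0 : (n:ℝ) ≠ 0 := by exact_mod_cast hn.ne'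
      apply mul_left_cancel₀ hn0
      rw [h.step, h'.step]
      apply Finset.sum_congr rfl
      intro i hi
      rw [Finset.mem_Icc] at hi
      exact ih _ (by omega)

lemma QQ_PRec (m : ℕ) : PRec m (fun n => coeff n (QQ m)) where
  zero := by
    simp only [QQ, coeff_zero_eq_constantCoeff, map_prod]
    apply Finset.prod_eq_one
    intro i hi
    rw [← coeff_zero_eq_constantCoeff_apply]
    simp [ee]
  step := by
    intro n
    have h := QQ_LD m
    unfold LD at h
    have h2 := congrArg (coeff n) h
    rw [coeff_X_deriv, Finset.sum_mul, map_sum] at h2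
    simp_rw [coeff_X_pow_mul'] at h2
    rw [h2, ← Finset.sum_filter]
    apply Finset.sum_congr
    · ext i; simp; omega
    · intros; rfl

end Friable

open Real
namespace Friable
open PowerSeries

/-- `1/(1 - (X/q)^d)` -/
noncomputable def geo (q : ℝ) (d : ℕ) : PowerSeries ℝ :=
  mk fun n => if d ∣ n then (q ^ n)⁻¹ else 0

lemma geo_eq (q : ℝ) (d : ℕ) (hd : 1 ≤ d) (hq : q ≠ 0) :
    geo q d = 1 + C (q ^ d)⁻¹ * X ^ d * geo q d := by
  ext n
  rw [map_add, mul_assoc, coeff_C_mul, coeff_X_pow_mul', coeff_one]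
  simp only [geo, coeff_mk]
  by_cases hn : n = 0
  · subst hn
    rw [if_pos (dvd_zero _), if_pos rfl, if_neg (by omega)]; simp
  rw [if_neg hn, zero_add]
  by_cases h : d ≤ n
  · rw [if_pos h]
    have h3 : d ∣ n - d ↔ d ∣ n := Nat.dvd_sub_iff_left h dvd_rfl
    by_cases h2 : d ∣ n
    · rw [if_pos h2, if_pos (h3.2 h2), ← mul_inv, ← pow_add]
      congr 3; omega
    · rw [if_neg h2, if_neg (fun h' => h2 (h3.1 h'))]; simp
  · rw [if_neg h, if_neg (fun h2 => h (Nat.le_of_dvd (by omega) h2))]; simp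

lemma geo_LD (q : ℝ) (d : ℕ) (hd : 1 ≤ d) (hq : q ≠ 0) :
    LD (geo q d) (C (d:ℝ) * (geo q d - 1)) := by
  rw [LD_iff]
  have h : LD (geo q d) (C (d:ℝ) * (geo q d - 1)) := by
    unfold LD
    have h1 := geo_eq q d hd hq
    set g := geo q d with hg
    set t : PowerSeries ℝ := C (q ^ d)⁻¹ with ht
    have h2 : derivative (R := ℝ) g = t * (X ^ d * derivative (R := ℝ) g + g * ((d : PowerSeries ℝ) * (X : PowerSeries ℝ) ^ (d - 1))) := by
      conv_lhs => rw [h1]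
      rw [map_add, mul_assoc, Derivation.leibniz, Derivation.leibniz, ht, derivative_C, smul_zero, add_zero,
        derivative_pow, derivative_X, derivative_one]
      simp only [smul_eq_mul, mul_one, zero_add]
    have h3 : (X : PowerSeries ℝ) * X ^ (d - 1) = X ^ d := by
      rw [← pow_succ']; congr 1; omega
    have h4 : (C (d:ℝ) : PowerSeries ℝ) = (d : PowerSeries ℝ) := by simp
    rw [h4]
    have h5 : g * (1 - t * X ^ d) = 1 := by linear_combination h1
    linear_combination (g * X) * h2 + ((d : PowerSeries ℝ) * t * g ^ 2) * h3 - (X * derivative (R := ℝ) g) * h5 - ((d : PowerSeries ℝ) * g) * h1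
  rw [← LD_iff]; exact h

lemma geo_val (q : ℝ) (d : ℕ) (hd : 1 ≤ d) (hq : 0 < q) (y : ℝ) (hy : 0 ≤ y) (hyq : y < q) :
    HasVal (geo q d) y (1 - (y / q) ^ d)⁻¹ := by
  apply HasVal_of_nonneg _ _ _ _ hy
  · have hr : (y / q) ^ d < 1 := pow_lt_one₀ (by positivity) ((div_lt_one hq).2 hyq) (by omega)
    refine hasSum_dvd d hd _ _ _ ?_ ?_ (hasSum_geometric_of_lt_one (by positivity) hr)
    · intro n hn
      simp [geo, hn]
    · intro k
      simp only [geo, coeff_mk, dvd_mul_right, if_true]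
      rw [← pow_mul, div_pow]
      field_simp
  · intro n
    simp only [geo, coeff_mk]
    split_ifs <;> positivity

section poly
variable (F : Type) [Field F] [Fintype F]

/-- monic polynomials of degree `n` all of whose monic irreducible factors lie in `S` -/
def NS (S : Set (Polynomial F)) (n : ℕ) : Set (Polynomial F) :=
  {f | f.Monic ∧ f.natDegree = n ∧ ∀ p : Polynomial F, p.Monic → Irreducible p → p ∣ f → p ∈ S}

lemma card_monic (n : ℕ) :
    Set.ncard {f : Polynomial F | f.Monic ∧ f.natDegree = n} = Fintype.card F ^ n := by
  rw [← Nat.card_coe_set_eq]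
  have e : {f : Polynomial F | f.Monic ∧ f.natDegree = n} ≃ (Fin n → F) :=
    (Polynomial.monicEquivDegreeLT (R := F) n).trans (Polynomial.degreeLTEquiv F n).toEquiv
  rw [Nat.card_congr e]
  simp

lemma finite_monic (n : ℕ) : {f : Polynomial F | f.Monic ∧ f.natDegree = n}.Finite := by
  apply Set.finite_of_ncard_ne_zero
  rw [card_monic]
  exact pow_ne_zero _ Fintype.card_ne_zero

lemma NS_finite (S : Set (Polynomial F)) (n : ℕ) : (NS F S n).Finite :=
  (finite_monic F n).subset fun _ hf => ⟨hf.1, hf.2.1⟩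

lemma NS_empty (n : ℕ) : (NS F ∅ n).ncard = if n = 0 then 1 else 0 := by
  split_ifs with h
  · subst h
    rw [Set.ncard_eq_one]
    refine ⟨1, ?_⟩
    ext f
    simp only [NS, Set.mem_ofPred_eq, Set.mem_singleton_iff]
    constructor
    · rintro ⟨h1, h2, _⟩
      exact (h1.natDegree_eq_zero).1 h2
    · rintro rfl
      refine ⟨Polynomial.monic_one, by simp, fun p _ hi hp => ?_⟩
      exact absurd (isUnit_of_dvd_one hp) hi.not_isUnit
  · rw [Set.ncard_eq_zero (NS_finite F ∅ n)]
    rw [Set.eq_empty_iff_forall_notMem]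
    rintro f ⟨h1, h2, h3⟩
    obtain ⟨p, hp1, hp2, hp3⟩ := Polynomial.exists_monic_irreducible_factor f
      (Polynomial.not_isUnit_of_natDegree_pos f (by omega))
    exact h3 p hp1 hp2 hp3

lemma NS_insert_of_le (S : Set (Polynomial F)) (P : Polynomial F) (hP : P.Monic) (hI : Irreducible P)
    (hPS : P ∉ S) (n : ℕ) (hn : P.natDegree ≤ n) :
    (NS F (insert P S) n).ncard = (NS F S n).ncard + (NS F (insert P S) (n - P.natDegree)).ncard := by
  have hinj : Function.Injective (fun f : Polynomial F => P * f) :=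
    fun a b h => mul_left_cancel₀ hI.ne_zero h
  rw [← Set.ncard_image_of_injective (NS F (insert P S) (n - P.natDegree)) hinj,
    ← Set.ncard_union_eq _ (NS_finite F _ _) ((NS_finite F _ _).image _)]
  · congr 1
    ext f
    constructor
    · rintro ⟨h1, h2, h3⟩
      by_cases hd : P ∣ f
      · right
        obtain ⟨g, rfl⟩ := hd
        have hg : g.Monic := hP.of_mul_monic_left h1
        refine ⟨g, ⟨hg, ?_, ?_⟩, rfl⟩
        · rw [hP.natDegree_mul hg] at h2; omega
        · intro p hp1 hp2 hp3
          exact h3 p hp1 hp2 (hp3.mul_left _)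
      · left
        refine ⟨h1, h2, fun p hp1 hp2 hp3 => ?_⟩
        rcases h3 p hp1 hp2 hp3 with rfl | h
        · exact absurd hp3 hd
        · exact h
    · rintro (⟨h1, h2, h3⟩ | ⟨g, ⟨h1, h2, h3⟩, rfl⟩)
      · exact ⟨h1, h2, fun p hp1 hp2 hp3 => Set.mem_insert_of_mem _ (h3 p hp1 hp2 hp3)⟩
      · refine ⟨hP.mul h1, ?_, ?_⟩
        · rw [hP.natDegree_mul h1]; omega
        · intro p hp1 hp2 hp3
          rcases hp2.prime.dvd_or_dvd hp3 with h | h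
          · left
            exact Polynomial.eq_of_monic_of_associated hp1 hP (hp2.associated_of_dvd hI h)
          · exact h3 p hp1 hp2 h
  · rw [Set.disjoint_left]
    rintro f ⟨h1, h2, h3⟩ ⟨g, _, rfl⟩
    exact hPS (h3 P hP hI (dvd_mul_right _ _))

lemma NS_insert_of_lt (S : Set (Polynomial F)) (P : Polynomial F) (n : ℕ) (hn : n < P.natDegree) :
    (NS F (insert P S) n).ncard = (NS F S n).ncard := by
  congr 1
  ext f
  constructor
  · rintro ⟨h1, h2, h3⟩
    refine ⟨h1, h2, fun p hp1 hp2 hp3 => ?_⟩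
    rcases h3 p hp1 hp2 hp3 with rfl | h
    · have := Polynomial.natDegree_le_of_dvd hp3 h1.ne_zero
      omega
    · exact h
  · rintro ⟨h1, h2, h3⟩
    exact ⟨h1, h2, fun p hp1 hp2 hp3 => Set.mem_insert_of_mem _ (h3 p hp1 hp2 hp3)⟩

/-- normalized generating series -/
noncomputable def AS (S : Set (Polynomial F)) : PowerSeries ℝ :=
  mk fun n => ((NS F S n).ncard : ℝ) / (Fintype.card F : ℝ) ^ n

lemma AS_eq_prod (S : Finset (Polynomial F)) (hS : ∀ P ∈ S, P.Monic ∧ Irreducible P) :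
    AS F (S : Set (Polynomial F)) = ∏ P ∈ S, geo (Fintype.card F) P.natDegree := by
  classical
  have hq : (Fintype.card F : ℝ) ≠ 0 := by exact_mod_cast Fintype.card_ne_zero
  induction S using Finset.induction_on with
  | empty =>
    ext n
    simp only [AS, coeff_mk, Finset.coe_empty, NS_empty, Finset.prod_empty, coeff_one]
    split_ifs with h
    · simp [h]
    · simp
  | insert P S hPS ih =>
    rw [Finset.prod_insert hPS, ← ih fun Q hQ => hS Q (Finset.mem_insert_of_mem hQ)]
    obtain ⟨hP, hI⟩ := hS P (Finset.mem_insert_self _ _)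
    have hd : 1 ≤ P.natDegree := hI.natDegree_pos
    have h1 : AS F ((insert P S : Finset _) : Set (Polynomial F)) = AS F (S : Set _) +
        C ((Fintype.card F : ℝ) ^ P.natDegree)⁻¹ * X ^ P.natDegree * AS F ((insert P S : Finset _) : Set (Polynomial F)) := by
      ext n
      rw [map_add, mul_assoc, coeff_C_mul, coeff_X_pow_mul']
      simp only [AS, coeff_mk, Finset.coe_insert]
      split_ifs with hn
      · rw [NS_insert_of_le F S P hP hI (by simpa using hPS) n hn]
        obtain ⟨k, rfl⟩ := Nat.exists_eq_add_of_le' hn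
        rw [Nat.add_sub_cancel, pow_add]
        push_cast
        field_simp
      · rw [NS_insert_of_lt F S P n (by omega)]; simp
    have h2 := geo_eq (Fintype.card F : ℝ) P.natDegree hd hq
    set A := AS F ((insert P S : Finset _) : Set (Polynomial F))
    set g := geo (Fintype.card F : ℝ) P.natDegree
    linear_combination g * h1 - A * h2

/-- irreducibles of degree at most `m` -/
def Irr (m : ℕ) : Set (Polynomial F) := {p | p.Monic ∧ Irreducible p ∧ p.natDegree ≤ m}

lemma Irr_finite (m : ℕ) : (Irr F m).Finite := by
  apply ((Set.finite_Iic m).biUnion (fun n _ => finite_monic F n)).subset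
  rintro p ⟨h1, _, h2⟩
  simp only [Set.mem_iUnion]
  exact ⟨p.natDegree, h2, h1, rfl⟩

/-- irreducibles of degree at most `m`, as a finset -/
noncomputable def Ir (m : ℕ) : Finset (Polynomial F) := (Irr_finite F m).toFinset

lemma mem_Ir (m : ℕ) (p : Polynomial F) : p ∈ Ir F m ↔ p.Monic ∧ Irreducible p ∧ p.natDegree ≤ m := by
  simp [Ir, Irr]

lemma coe_Ir (m : ℕ) : (Ir F m : Set (Polynomial F)) = Irr F m := by simp [Ir]

/-- generating series of `polyProb` -/
noncomputable def AA (m : ℕ) : PowerSeries ℝ := AS F (Irr F m)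

lemma AA_prod (m : ℕ) : AA F m = ∏ P ∈ Ir F m, geo (Fintype.card F) P.natDegree := by
  rw [← AS_eq_prod, coe_Ir]; rfl
  intro P hP
  rw [mem_Ir] at hP
  exact ⟨hP.1, hP.2.1⟩

lemma polyProb_eq (n m : ℕ) : polyProb F n m = coeff n (AA F m) := by
  unfold polyProb AA AS
  rw [coeff_mk]
  congr 2
  rw [← Nat.card_coe_set_eq]
  apply Nat.card_congr
  apply Equiv.subtypeEquivRight
  intro f
  simp only [NS, Irr, Set.mem_ofPred_eq]
  constructor
  · rintro ⟨h1, h2, h3⟩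
    exact ⟨h1, h2, fun p a b c => ⟨a, b, h3 p a b c⟩⟩
  · rintro ⟨h1, h2, h3⟩
    exact ⟨h1, h2, fun p a b c => (h3 p a b c).2.2⟩

lemma AA_small (n m : ℕ) (h : n ≤ m) : coeff n (AA F m) = 1 := by
  unfold AA AS
  rw [coeff_mk]
  have : NS F (Irr F m) n = {f | f.Monic ∧ f.natDegree = n} := by
    ext f
    constructor
    · rintro ⟨h1, h2, _⟩; exact ⟨h1, h2⟩
    · rintro ⟨h1, h2⟩
      refine ⟨h1, h2, fun p a b c => ⟨a, b, ?_⟩⟩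
      have := Polynomial.natDegree_le_of_dvd c h1.ne_zero
      omega
  rw [this, card_monic]
  push_cast
  apply div_self
  have hq : (Fintype.card F : ℝ) ≠ 0 := by exact_mod_cast Fintype.card_ne_zero
  positivity

/-- von Mangoldt type coefficients -/
noncomputable def CC (m : ℕ) : PowerSeries ℝ :=
  ∑ P ∈ Ir F m, C (P.natDegree : ℝ) * (geo (Fintype.card F) P.natDegree - 1)

lemma AA_LD (m : ℕ) : LD (AA F m) (CC F m) := by
  rw [AA_prod]
  apply LD.prod
  intro P hP
  rw [mem_Ir] at hP
  exact geo_LD _ _ hP.2.1.natDegree_pos (by exact_mod_cast Fintype.card_ne_zero)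

lemma AA_val (m : ℕ) (y : ℝ) (hy : 0 ≤ y) (hyq : y < Fintype.card F) :
    HasVal (AA F m) y (FqFun F m y) := by
  have : FqFun F m y = ∏ P ∈ Ir F m, (1 - (y / (Fintype.card F : ℝ)) ^ P.natDegree)⁻¹ := by
    unfold FqFun
    exact finprod_mem_eq_finite_toFinset_prod _ (Irr_finite F m)
  rw [this, AA_prod]
  apply HasVal.prod
  intro P hP
  rw [mem_Ir] at hP
  exact geo_val _ _ hP.2.1.natDegree_pos (by linarith) y hy hyq

end poly
end Friable

open Real
namespace Friable
open PowerSeries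
section fin
variable (F : Type) [Field F] [Fintype F]

lemma card_ge_two : (2 : ℝ) ≤ Fintype.card F := by
  have : 1 < Fintype.card F := Fintype.one_lt_card
  exact_mod_cast this

lemma CC_coeff (m i : ℕ) (hi : 1 ≤ i) :
    coeff i (CC F m) = ∑ P ∈ Ir F m, if P.natDegree ∣ i then
      (P.natDegree : ℝ) * ((Fintype.card F : ℝ) ^ i)⁻¹ else 0 := by
  unfold CC
  rw [map_sum]
  apply Finset.sum_congr rfl
  intro P _
  rw [coeff_C_mul, map_sub, coeff_one, if_neg (by omega), sub_zero]
  simp only [geo, coeff_mk]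
  split_ifs <;> simp

lemma CC_zero (m : ℕ) : coeff 0 (CC F m) = 0 := by
  unfold CC
  rw [map_sum]
  apply Finset.sum_eq_zero
  intro P _
  rw [coeff_C_mul, map_sub, coeff_one, if_pos rfl]
  simp [geo, coeff_mk]

lemma CC_nonneg (m i : ℕ) : 0 ≤ coeff i (CC F m) := by
  rcases Nat.eq_zero_or_pos i with h | h
  · rw [h, CC_zero]
  · rw [CC_coeff F m i h]
    apply Finset.sum_nonneg
    intro P _
    split_ifs <;> positivity

lemma CC_small (m i : ℕ) (hi : 1 ≤ i) (him : i ≤ m) : coeff i (CC F m) = 1 := by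
  have key : ∀ n, n ≤ m → ∑ k ∈ Finset.range (n + 1), coeff k (CC F m) = n := by
    intro n hn
    have h := (LD_iff _ _).1 (AA_LD F m) n
    rw [AA_small F n m hn, mul_one, Finset.Nat.sum_antidiagonal_eq_sum_range_succ_mk] at h
    rw [h]
    apply Finset.sum_congr rfl
    intro k _
    simp only
    rw [AA_small F (n - k) m (by omega), mul_one]
  obtain ⟨j, rfl⟩ : ∃ j, i = j + 1 := ⟨i - 1, by omega⟩
  have h1 := key (j + 1) him
  have h2 := key j (by omega)
  rw [Finset.sum_range_succ, h2] at h1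
  push_cast at h1
  linarith

lemma deg_sum (m d : ℕ) (hd : 1 ≤ d) :
    ∑ P ∈ (Ir F m).filter (fun P => P.natDegree = d), (P.natDegree : ℝ) ≤ (Fintype.card F : ℝ) ^ d := by
  have hq := card_ge_two F
  have h := CC_small F d d hd le_rfl
  rw [CC_coeff F d d hd] at h
  have hle : ∑ P ∈ (Ir F m).filter (fun P => P.natDegree = d), (P.natDegree : ℝ) * ((Fintype.card F : ℝ) ^ d)⁻¹ ≤
      ∑ P ∈ Ir F d, if P.natDegree ∣ d then
      (P.natDegree : ℝ) * ((Fintype.card F : ℝ) ^ d)⁻¹ else 0 := by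
    calc _ = ∑ P ∈ (Ir F m).filter (fun P => P.natDegree = d), (if P.natDegree ∣ d then
      (P.natDegree : ℝ) * ((Fintype.card F : ℝ) ^ d)⁻¹ else 0) := by
          apply Finset.sum_congr rfl
          intro P hP
          rw [Finset.mem_filter] at hP
          rw [if_pos (by rw [hP.2])]
      _ ≤ _ := by
          apply Finset.sum_le_sum_of_subset_of_nonneg
          · intro P hP
            rw [Finset.mem_filter, mem_Ir] at hP
            rw [mem_Ir]
            exact ⟨hP.1.1, hP.1.2.1, hP.2.le⟩
          · intro P _ _
            split_ifs <;> positivity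
  rw [h, ← Finset.sum_mul] at hle
  rwa [← div_eq_mul_inv, div_le_one (by positivity)] at hle

lemma CC_le (m i : ℕ) (hi : m < i) :
    coeff i (CC F m) ≤ 2 * (Fintype.card F : ℝ) ^ (i / 2) * ((Fintype.card F : ℝ) ^ i)⁻¹ := by
  have hq := card_ge_two F
  rw [CC_coeff F m i (by omega)]
  have h1 : ∑ P ∈ Ir F m, (if P.natDegree ∣ i then
      (P.natDegree : ℝ) * ((Fintype.card F : ℝ) ^ i)⁻¹ else 0) =
      (∑ P ∈ (Ir F m).filter (fun P => P.natDegree ∣ i), (P.natDegree : ℝ)) * ((Fintype.card F : ℝ) ^ i)⁻¹ := by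
    rw [Finset.sum_mul, Finset.sum_filter]
  rw [h1]
  apply mul_le_mul_of_nonneg_right _ (by positivity)
  have h2 : ∑ P ∈ (Ir F m).filter (fun P => P.natDegree ∣ i), (P.natDegree : ℝ) =
      ∑ d ∈ Finset.Icc 1 (i/2), ∑ P ∈ ((Ir F m).filter (fun P => P.natDegree ∣ i)).filter (fun P => P.natDegree = d),
        (P.natDegree : ℝ) := by
    symm
    apply Finset.sum_fiberwise_of_maps_to
    intro P hP
    rw [Finset.mem_filter, mem_Ir] at hP
    rw [Finset.mem_Icc]
    refine ⟨hP.1.2.1.natDegree_pos, ?_⟩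
    obtain ⟨k, hk⟩ := hP.2
    have hk2 : 2 ≤ k := by
      by_contra hcon
      have : k = 0 ∨ k = 1 := by omega
      have h3 := hP.1.2.2
      rcases this with rfl | rfl <;> omega
    rw [Nat.le_div_iff_mul_le (by norm_num), hk]
    exact Nat.mul_le_mul_left _ hk2
  rw [h2]
  have h3 : ∀ d ∈ Finset.Icc 1 (i/2), ∑ P ∈ ((Ir F m).filter (fun P => P.natDegree ∣ i)).filter (fun P => P.natDegree = d),
        (P.natDegree : ℝ) ≤ (Fintype.card F : ℝ) ^ d := by
    intro d hd
    rw [Finset.mem_Icc] at hd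
    refine le_trans ?_ (deg_sum F m d hd.1)
    apply Finset.sum_le_sum_of_subset_of_nonneg
    · intro P hP
      simp only [Finset.mem_filter] at hP ⊢
      exact ⟨hP.1.1, hP.2⟩
    · intro P _ _; positivity
  refine (Finset.sum_le_sum h3).trans ?_
  generalize i / 2 = N
  have h4 : ∀ N : ℕ, ∑ d ∈ Finset.Icc 1 N, (Fintype.card F : ℝ) ^ d ≤ 2 * (Fintype.card F : ℝ) ^ N - 2 := by
    intro N
    induction N with
    | zero => simp
    | succ k ih =>
      rw [Finset.sum_Icc_succ_top (by omega), pow_succ]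
      have : (0:ℝ) < (Fintype.card F : ℝ) ^ k := by positivity
      nlinarith
  linarith [h4 N]

/-- the quotient series -/
noncomputable def gg (m : ℕ) : PowerSeries ℝ := AA F m * (QQ m)⁻¹

lemma QQ_cc (m : ℕ) : constantCoeff (QQ m) = 1 := by
  have := (QQ_PRec m).zero
  simpa using this

lemma gg_mul (m : ℕ) : gg F m * QQ m = AA F m := by
  unfold gg
  rw [mul_assoc, PowerSeries.inv_mul_cancel _ (by rw [QQ_cc]; norm_num), mul_one]

/-- log derivative of `gg` -/
noncomputable def DD (m : ℕ) : PowerSeries ℝ := CC F m - ∑ i ∈ Finset.Icc 1 m, X ^ i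

lemma gg_LD (m : ℕ) : LD (gg F m) (DD F m) := by
  have hA := AA_LD F m
  have hQ := QQ_LD m
  rw [← gg_mul] at hA
  unfold LD at hA hQ ⊢
  have hQ0 : QQ m ≠ 0 := by
    intro h
    have := QQ_cc m
    rw [h] at this
    simp at this
  apply mul_right_cancel₀ hQ0
  rw [Derivation.leibniz] at hA
  simp only [smul_eq_mul] at hA
  unfold DD
  linear_combination hA - gg F m * hQ

lemma DD_small (m i : ℕ) (h : i ≤ m) : coeff i (DD F m) = 0 := by
  unfold DD
  rw [map_sub, map_sum]
  simp only [coeff_X_pow]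
  rw [Finset.sum_ite_eq]
  rcases Nat.eq_zero_or_pos i with h0 | h0
  · subst h0; rw [CC_zero]; simp
  · rw [CC_small F m i h0 h, if_pos (Finset.mem_Icc.2 ⟨h0, h⟩), sub_self]

lemma DD_large (m i : ℕ) (h : m < i) : coeff i (DD F m) = coeff i (CC F m) := by
  unfold DD
  rw [map_sub, map_sum]
  simp only [coeff_X_pow]
  rw [Finset.sum_ite_eq, if_neg (by rw [Finset.mem_Icc]; omega), sub_zero]

lemma DD_nonneg (m i : ℕ) : 0 ≤ coeff i (DD F m) := by
  rcases le_or_gt i m with h | h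
  · rw [DD_small F m i h]
  · rw [DD_large F m i h]; exact CC_nonneg F m i

lemma gg_zero (m : ℕ) : coeff 0 (gg F m) = 1 := by
  have h := congrArg (coeff 0) (gg_mul F m)
  rw [AA_small F 0 m (by omega), coeff_zero_eq_constantCoeff_apply, map_mul, QQ_cc, mul_one] at h
  simpa using h

lemma gg_nonneg (m j : ℕ) : 0 ≤ coeff j (gg F m) := by
  induction j using Nat.strong_induction_on with
  | _ j ih =>
    rcases Nat.eq_zero_or_pos j with h0 | h0
    · subst h0; rw [gg_zero]; norm_num
    · have h := (LD_iff _ _).1 (gg_LD F m) j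
      have h2 : 0 ≤ (j:ℝ) * coeff j (gg F m) := by
        rw [h]
        apply Finset.sum_nonneg
        rintro ⟨k, l⟩ hkl
        rw [Finset.HasAntidiagonal.mem_antidiagonal] at hkl
        simp only at hkl ⊢
        rcases Nat.eq_zero_or_pos k with hk | hk
        · subst hk; rw [DD_small F m 0 (by omega), zero_mul]
        · exact mul_nonneg (DD_nonneg F m k) (ih l (by omega))
      exact nonneg_of_mul_nonneg_right h2 (by exact_mod_cast h0)

lemma gg_small (m j : ℕ) (h1 : 1 ≤ j) (h2 : j ≤ m) : coeff j (gg F m) = 0 := by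
  have h := (LD_iff _ _).1 (gg_LD F m) j
  have h3 : (j:ℝ) * coeff j (gg F m) = 0 := by
    rw [h]
    apply Finset.sum_eq_zero
    rintro ⟨k, l⟩ hkl
    rw [Finset.HasAntidiagonal.mem_antidiagonal] at hkl
    simp only at hkl ⊢
    rw [DD_small F m k (by omega), zero_mul]
  rcases mul_eq_zero.1 h3 with h4 | h4
  · have : j = 0 := by exact_mod_cast h4
    omega
  · exact h4

lemma AA_sum (m n : ℕ) : coeff n (AA F m) = ∑ j ∈ Finset.range (n + 1), coeff j (gg F m) * coeff (n - j) (QQ m) := by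
  rw [← gg_mul, coeff_mul, Finset.Nat.sum_antidiagonal_eq_sum_range_succ_mk]

lemma gg_val (m : ℕ) (hm : 1 ≤ m) (y : ℝ) (hy : 0 ≤ y) (hyq : y < Fintype.card F) :
    HasVal (gg F m) y (Gq F m y) := by
  have hA := AA_val F m y hy hyq
  have hQ := QQ_val m y hy
  have hp := QQ_PRec m
  have hs : Summable (fun n => ‖coeff n (gg F m) * y ^ n‖) := by
    refine Summable.of_nonneg_of_le (fun _ => norm_nonneg _) ?_ hA.1
    intro n
    rw [norm_mul, norm_mul]
    apply mul_le_mul_of_nonneg_right _ (norm_nonneg _)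
    have h1 : coeff n (gg F m) ≤ coeff n (AA F m) := by
      rw [AA_sum, Finset.sum_range_succ, Nat.sub_self]
      have h2 := hp.zero
      rw [h2, mul_one]
      have : 0 ≤ ∑ j ∈ Finset.range n, coeff j (gg F m) * coeff (n - j) (QQ m) :=
        Finset.sum_nonneg fun j _ => mul_nonneg (gg_nonneg F m j) (hp.pos hm (n - j)).le
      linarith
    rw [Real.norm_of_nonneg (gg_nonneg F m n)]
    exact h1.trans (le_abs_self _)
  refine ⟨hs, ?_⟩
  have hG : HasVal (gg F m) y (∑' n, coeff n (gg F m) * y ^ n) := ⟨hs, rfl⟩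
  have h3 := (hG.mul hQ).2
  rw [gg_mul, hA.2] at h3
  unfold Gq
  rw [h3, Real.exp_neg, mul_assoc, mul_inv_cancel₀ (Real.exp_ne_zero _), mul_one]

lemma gg_one_le (m : ℕ) (hm : 1 ≤ m) (y : ℝ) (hy : 0 ≤ y) (hyq : y < Fintype.card F) : 1 ≤ Gq F m y := by
  obtain ⟨h1, h2⟩ := gg_val F m hm y hy hyq
  rw [← h2]
  have h3 := (Summable.of_norm h1).le_tsum 0 (fun j _ => mul_nonneg (gg_nonneg F m j) (pow_nonneg hy j))
  rw [gg_zero] at h3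
  simpa using h3

lemma hasSum_sub (m : ℕ) (hm : 1 ≤ m) (y : ℝ) (hy : 0 ≤ y) (hyq : y < Fintype.card F) :
    HasSum (fun j => coeff j (gg F m) * y ^ j - if j = 0 then 1 else 0) (Gq F m y - 1) := by
  obtain ⟨h1, h2⟩ := gg_val F m hm y hy hyq
  have h3 := (Summable.of_norm h1).hasSum
  rw [h2] at h3
  exact h3.sub (hasSum_ite_eq 0 1)

lemma G_D (m : ℕ) (hm : 1 ≤ m) (y v : ℝ) (hy : 0 ≤ y) (hyq : y < Fintype.card F)
    (hD : HasVal (DD F m) y v) : ((m:ℝ) + 1) * (Gq F m y - 1) ≤ v * Gq F m y := by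
  have h1 := hD.mul (gg_val F m hm y hy hyq)
  have h2 := gg_LD F m
  unfold LD at h2
  rw [← h2] at h1
  have h3 := (Summable.of_norm h1.1).hasSum
  rw [h1.2] at h3
  refine hasSum_le ?_ ((hasSum_sub F m hm y hy hyq).mul_left ((m:ℝ)+1)) h3
  intro j
  rw [coeff_X_deriv]
  rcases Nat.eq_zero_or_pos j with h0 | h0
  · subst h0; rw [gg_zero]; simp
  · rw [if_neg (by omega), sub_zero]
    rcases le_or_gt j m with h | h
    · rw [gg_small F m j h0 h]; simp
    · have h4 : ((m:ℝ) + 1) ≤ j := by exact_mod_cast h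
      rw [mul_assoc]
      exact mul_le_mul_of_nonneg_right h4 (mul_nonneg (gg_nonneg F m j) (pow_nonneg hy j))

end fin
end Friable

open Real
namespace Friable
open PowerSeries
section fin
variable (F : Type) [Field F] [Fintype F]

lemma DD_val (m : ℕ) (y K r : ℝ) (hy : 0 ≤ y) (hr : 0 ≤ r) (hr1 : r < 1)
    (h : ∀ k : ℕ, coeff (k + (m + 1)) (DD F m) * y ^ (k + (m + 1)) ≤ K * r ^ k) :
    ∃ v, HasVal (DD F m) y v ∧ 0 ≤ v ∧ v ≤ K * (1 - r)⁻¹ := by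
  set f : ℕ → ℝ := fun i => coeff i (DD F m) * y ^ i with hf
  have hf0 : ∀ i, 0 ≤ f i := fun i => mul_nonneg (DD_nonneg F m i) (pow_nonneg hy i)
  have hg := (hasSum_geometric_of_lt_one hr hr1).mul_left K
  have hs1 : Summable (fun k => f (k + (m + 1))) :=
    Summable.of_nonneg_of_le (fun k => hf0 _) h hg.summable
  have hs : Summable f := (summable_nat_add_iff (m + 1)).1 hs1
  refine ⟨∑' i, f i, HasVal_of_nonneg _ _ _ (DD_nonneg F m) hy hs.hasSum, tsum_nonneg hf0, ?_⟩
  rw [← hs.sum_add_tsum_nat_add (m + 1)]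
  have h0 : ∑ i ∈ Finset.range (m + 1), f i = 0 := by
    apply Finset.sum_eq_zero
    intro i hi
    rw [Finset.mem_range] at hi
    simp only [hf]
    rw [DD_small F m i (by omega), zero_mul]
  rw [h0, zero_add]
  exact hasSum_le h hs1.hasSum hg

lemma pow_bound (q : ℝ) (hq : 2 ≤ q) (m k : ℕ) :
    q ^ ((k + (m + 1)) / 2) * (q ^ (k + (m + 1)))⁻¹ ≤ (q ^ ((m + 2) / 2))⁻¹ * (10 / 7 * (5 / 7) ^ k) := by
  obtain ⟨s, hs⟩ : ∃ s, k + (m + 1) = (k + (m + 1)) / 2 + (m + 2) / 2 + s :=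
    ⟨k + (m + 1) - (k + (m + 1)) / 2 - (m + 2) / 2, by omega⟩
  have hs2 : k + 1 ≤ 2 * (s + 1) := by omega
  have h1 : q ^ (k + (m + 1)) = q ^ ((k + (m + 1)) / 2) * q ^ ((m + 2) / 2) * q ^ s := by
    rw [← pow_add, ← pow_add, ← hs]
  rw [h1]
  have hq0 : 0 < q := by linarith
  have h2 : (q ^ s)⁻¹ ≤ 10 / 7 * (5 / 7) ^ k := by
    calc (q ^ s)⁻¹ ≤ ((2:ℝ) ^ s)⁻¹ := by gcongr
      _ = 2 * (1 / 2) ^ (s + 1) := by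
          rw [pow_succ, one_div, inv_pow]; ring
      _ ≤ 2 * ((5/7)^2) ^ (s + 1) := by gcongr; norm_num
      _ = 2 * (5/7) ^ (2 * (s + 1)) := by rw [← pow_mul]
      _ ≤ 2 * (5/7) ^ (k + 1) := by
          gcongr 2 * ?_
          exact pow_le_pow_of_le_one (by norm_num) (by norm_num) hs2
      _ = _ := by ring
  have h3 : q ^ ((k + (m + 1)) / 2) * (q ^ ((k + (m + 1)) / 2) * q ^ ((m + 2) / 2) * q ^ s)⁻¹ =
      (q ^ ((m + 2) / 2))⁻¹ * (q ^ s)⁻¹ := by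
    field_simp
  rw [h3]
  gcongr

lemma DD_big (m : ℕ) : ∃ v, HasVal (DD F m) (5/4) v ∧ 0 ≤ v ∧
    v ≤ 34 * ((Fintype.card F : ℝ) ^ ((m + 2) / 2))⁻¹ * (5/4) ^ m := by
  have hq := card_ge_two F
  set Q := ((Fintype.card F : ℝ) ^ ((m + 2) / 2))⁻¹ with hQ
  have hQ0 : 0 < Q := by positivity
  obtain ⟨v, h1, h2, h3⟩ := DD_val F m (5/4) (25 / 7 * Q * (5/4) ^ m) (25/28) (by norm_num) (by norm_num) (by norm_num) (by
    intro k
    rw [DD_large F m _ (by omega)]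
    have h1 := CC_le F m (k + (m + 1)) (by omega)
    have h2 := pow_bound (Fintype.card F) hq m k
    rw [← hQ] at h2
    calc _ ≤ (2 * (Q * (10 / 7 * (5 / 7) ^ k))) * (5/4) ^ (k + (m + 1)) := by
          apply mul_le_mul_of_nonneg_right _ (by positivity)
          linarith
      _ = _ := by
          rw [pow_add, pow_add, show (25/28 : ℝ) = (5/7) * (5/4) by norm_num, mul_pow]; ring)
  refine ⟨v, h1, h2, h3.trans ?_⟩
  have : 0 < Q * (5/4) ^ m := by positivity
  nlinarith

lemma G_big (m : ℕ) (hm : 25 ≤ m) :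
    (Gq F m (5/4) - 1) * ((5/4 : ℝ) ^ m)⁻¹ ≤ 68 / m * ((Fintype.card F : ℝ) ^ ((m + 2) / 2))⁻¹ := by
  have hq := card_ge_two F
  obtain ⟨v, h1, h2, h3⟩ := DD_big F m
  have h4 := G_D F m (by omega) (5/4) v (by norm_num) (by linarith) h1
  have h5 := gg_one_le F m (by omega) (5/4) (by norm_num) (by linarith)
  set G := Gq F m (5/4) with hG
  have hm' : (25:ℝ) ≤ m := by exact_mod_cast hm
  set Q := ((Fintype.card F : ℝ) ^ ((m + 2) / 2))⁻¹ with hQ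
  have hQ0 : 0 < Q := by positivity
  have hQ1 : Q ≤ (5/7) ^ (m + 1) := by
    calc Q ≤ ((2:ℝ) ^ ((m + 2) / 2))⁻¹ := by rw [hQ]; gcongr
      _ = (1/2) ^ ((m + 2) / 2) := by rw [one_div, inv_pow]
      _ ≤ ((5/7)^2) ^ ((m + 2) / 2) := by gcongr; norm_num
      _ = (5/7) ^ (2 * ((m + 2) / 2)) := by rw [← pow_mul]
      _ ≤ (5/7) ^ (m + 1) := pow_le_pow_of_le_one (by norm_num) (by norm_num) (by omega)
  have hv : v ≤ 2 := by
    calc v ≤ 34 * Q * (5/4) ^ m := h3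
      _ ≤ 34 * (5/7) ^ (m + 1) * (5/4) ^ m := by gcongr
      _ = 34 * (5/7) * (25/28) ^ m := by
          rw [pow_succ, show (25/28 : ℝ) = (5/7) * (5/4) by norm_num, mul_pow]; ring
      _ ≤ 34 * (5/7) * (25/28) ^ 25 := by
          gcongr 34 * (5/7) * ?_
          exact pow_le_pow_of_le_one (by norm_num) (by norm_num) hm
      _ ≤ 2 := by norm_num
  have hG2 : G ≤ 2 := by nlinarith
  have hfin : G - 1 ≤ 2 * v / m := by
    rw [le_div_iff₀ (by linarith)]
    nlinarith
  have hy : (0:ℝ) < (5/4) ^ m := by positivity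
  rw [← div_eq_mul_inv, div_le_iff₀ hy]
  calc G - 1 ≤ 2 * v / m := hfin
    _ ≤ 2 * (34 * Q * (5/4) ^ m) / m := by gcongr
    _ = _ := by ring

lemma case_one :
    |polyProb F 1 1 / (permProb 1 1 * Gq F 1 1) - 1| ≤ 2 / (Fintype.card F : ℝ) := by
  have hq := card_ge_two F
  set q : ℝ := (Fintype.card F : ℝ) with hqd
  have h1 : polyProb F 1 1 = 1 := by rw [polyProb_eq, AA_small F 1 1 le_rfl]
  have h2 : permProb 1 1 = 1 := by rw [permProb_eq 1 1 le_rfl]; exact (W_rec 1).eq_one 1 le_rfl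
  obtain ⟨v, hv, hv0, hv1⟩ := DD_val F 1 1 q⁻¹ q⁻¹ (by norm_num) (by positivity)
    (inv_lt_one_of_one_lt₀ (by linarith)) (by
      intro k
      rw [DD_large F 1 _ (by omega), CC_coeff F 1 _ (by omega), one_pow, mul_one, ← hqd]
      have hd := deg_sum F 1 1 le_rfl
      have hfil : (Ir F 1).filter (fun P => P.natDegree = 1) = Ir F 1 := by
        apply Finset.filter_true_of_mem
        intro P hP
        rw [mem_Ir] at hP
        have := hP.2.1.natDegree_pos
        omega
      rw [hfil, pow_one, ← hqd] at hd
      calc _ ≤ ∑ P ∈ Ir F 1, (P.natDegree : ℝ) * (q ^ (k + (1 + 1)))⁻¹ := by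
            apply Finset.sum_le_sum
            intro P _
            split_ifs
            · exact le_rfl
            · positivity
        _ = (∑ P ∈ Ir F 1, (P.natDegree : ℝ)) * (q ^ (k + (1 + 1)))⁻¹ := by rw [Finset.sum_mul]
        _ ≤ q * (q ^ (k + (1 + 1)))⁻¹ := by gcongr
        _ = q⁻¹ * q⁻¹ ^ k := by
            rw [inv_pow]; field_simp; ring)
  have h4 := G_D F 1 le_rfl 1 v (by norm_num) (by linarith) hv
  have h5 := gg_one_le F 1 le_rfl 1 (by norm_num) (by linarith)
  set G := Gq F 1 1
  have hv2 : v ≤ 1 / (q - 1) := by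
    refine hv1.trans (le_of_eq ?_)
    have : q - 1 ≠ 0 := by linarith
    have h6 : 1 - q⁻¹ ≠ 0 := by
      have : q⁻¹ < 1 := inv_lt_one_of_one_lt₀ (by linarith)
      linarith
    field_simp
  have hv3 : v ≤ 2 / q := by
    refine hv2.trans ?_
    rw [div_le_div_iff₀ (by linarith) (by linarith)]
    linarith
  have hv4 : v ≤ 1 := hv3.trans (by rw [div_le_one (by linarith)]; exact hq)
  norm_num at h4
  have hG : G ≤ 2 := by nlinarith
  have hG1 : G - 1 ≤ v := by nlinarith
  rw [h1, h2, one_mul, abs_sub_comm]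
  have h7 : 1 - 1 / G = (G - 1) / G := by field_simp
  rw [h7, abs_of_nonneg (div_nonneg (by linarith) (by linarith)), div_le_iff₀ (by linarith)]
  nlinarith [div_nonneg (zero_le_two (α := ℝ)) (by linarith : (0:ℝ) ≤ q)]

lemma case_two (n m : ℕ) (hm : 1 ≤ m) (hmn : m ≤ n) (hn : 2 ≤ n)
    (h : Real.sqrt (10 * (n : ℝ) * Real.log n) ≤ (m : ℝ)) :
    |polyProb F n m / (permProb n m * Gq F m (Real.exp (xi ((n:ℝ)/m) / (m : ℝ)))) - 1| ≤
      5440 * Real.log ((n:ℝ)/m + 1) / ((m : ℝ) * (Fintype.card F : ℝ) ^ ((m + 2) / 2)) := by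
  have hq := card_ge_two F
  obtain ⟨hm25, hsz⟩ := size_facts n m hm hmn hn h
  have hm0 : (0:ℝ) < m := by exact_mod_cast hm
  set u : ℝ := (n:ℝ)/m with hu
  have hu1 : 1 ≤ u := by
    rw [hu, le_div_iff₀ hm0, one_mul]; exact_mod_cast hmn
  have hxl : xi u ≤ Real.log n := xi_le_log n m hm hmn hn hsz
  have hx0 : 0 ≤ xi u := xi_nonneg u hu1
  set z := Real.exp (xi u / (m:ℝ)) with hz
  have hz98 : z ≤ 9/8 := by
    refine le_trans ?_ exp_num1
    apply Real.exp_le_exp.2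
    rw [div_le_iff₀ hm0]
    have hl : 0 ≤ Real.log n := hx0.trans hxl
    nlinarith
  have hz0 : 0 ≤ z := (Real.exp_pos _).le
  have hp : PRec m (fun n => coeff n (QQ m)) := QQ_PRec m
  have hperm : permProb n m = coeff n (QQ m) := by
    rw [permProb_eq n m hm, (W_rec m).unique hp]
  have hpn : 0 < coeff n (QQ m) := hp.pos hm n
  have hGz := gg_one_le F m hm z hz0 (by linarith)
  set G := Gq F m z with hG
  have hGs : HasSum (fun j => coeff j (gg F m) * z ^ j) G := by
    obtain ⟨h1, h2⟩ := gg_val F m hm z hz0 (by linarith)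
    rw [hG, ← h2]; exact (Summable.of_norm h1).hasSum
  set K := 20 * (Real.exp (xi u) / u) with hK
  have hK0 : 0 ≤ K := by positivity
  -- main sum
  have hA : HasSum (fun j => coeff j (gg F m) * (if j ≤ n then coeff (n - j) (QQ m) / coeff n (QQ m) else 0))
      (polyProb F n m / permProb n m) := by
    have h1 : polyProb F n m / permProb n m = ∑ j ∈ Finset.range (n + 1), coeff j (gg F m) *
        (if j ≤ n then coeff (n - j) (QQ m) / coeff n (QQ m) else 0) := by
      rw [polyProb_eq, AA_sum, hperm, Finset.sum_div]
      apply Finset.sum_congr rfl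
      intro j hj
      rw [Finset.mem_range] at hj
      rw [if_pos (by omega), mul_div_assoc]
    rw [h1]
    apply hasSum_sum_of_ne_finset_zero
    intro j hj
    rw [Finset.mem_range] at hj
    rw [if_neg (by omega), mul_zero]
  have hdiff := hA.sub hGs
  have hbd := (hasSum_sub F m hm (5/4) (by norm_num) (by linarith)).mul_left (K * ((5/4 : ℝ) ^ m)⁻¹)
  have hmain : |polyProb F n m / permProb n m - G| ≤ K * ((5/4 : ℝ) ^ m)⁻¹ * (Gq F m (5/4) - 1) := by
    rw [← hdiff.tsum_eq, ← Real.norm_eq_abs]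
    apply tsum_of_norm_bounded hbd
    intro j
    rcases Nat.eq_zero_or_pos j with h0 | h0
    · subst h0
      rw [gg_zero]
      simp [hpn.ne']
    rw [if_neg (by omega : ¬ j = 0), sub_zero]
    rcases le_or_gt j m with hjm | hjm
    · rw [gg_small F m j h0 hjm]; simp
    obtain ⟨k, hk, rfl⟩ : ∃ k, 1 ≤ k ∧ j = m + k := ⟨j - m, by omega, by omega⟩
    have hest := main_est hp hm n hmn hn h k hk
    rw [← hu, ← hz, ← hK] at hest
    rw [← mul_sub, norm_mul, Real.norm_of_nonneg (gg_nonneg F m _), Real.norm_eq_abs]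
    calc _ ≤ coeff (m + k) (gg F m) * (K * (5/4) ^ k) :=
          mul_le_mul_of_nonneg_left hest (gg_nonneg F m _)
      _ = _ := by
          rw [pow_add]; field_simp
  have hGb := G_big F m hm25
  have hex := exp_xi_le u hu1
  have hlog : 0 ≤ Real.log (u + 1) := Real.log_nonneg (by linarith)
  have hfin : |polyProb F n m / permProb n m - G| ≤ 5440 * Real.log (u + 1) / ((m : ℝ) * (Fintype.card F : ℝ) ^ ((m + 2) / 2)) := by
    calc _ ≤ K * ((Gq F m (5/4) - 1) * ((5/4 : ℝ) ^ m)⁻¹) := by rw [mul_comm (Gq F m (5/4) - 1), ← mul_assoc]; exact hmain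
      _ ≤ K * (68 / m * ((Fintype.card F : ℝ) ^ ((m + 2) / 2))⁻¹) := mul_le_mul_of_nonneg_left hGb hK0
      _ ≤ (20 * (4 * Real.log (u + 1))) * (68 / m * ((Fintype.card F : ℝ) ^ ((m + 2) / 2))⁻¹) := by
          apply mul_le_mul_of_nonneg_right _ (by positivity)
          rw [hK]; linarith
      _ = _ := by
          field_simp; ring
  have hpp : permProb n m ≠ 0 := by rw [hperm]; exact hpn.ne'
  have hG0 : 0 < G := by linarith
  have heq : polyProb F n m / (permProb n m * G) - 1 = (polyProb F n m / permProb n m - G) / G := by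
    field_simp
  rw [heq, abs_div, abs_of_pos hG0]
  exact (div_le_self (abs_nonneg _) hGz).trans hfin

end fin
end Friable

/-- There exists an absolute constant `C > 0` such that for every prime
power `q` (the cardinality of a finite field `F`) and all integers
`n ≥ m ≥ √(10·n·log n)`, writing `u = n/m`, one has
`|p_{n,m,q}/(p_{n,m}·G_q(e^{ξ(u)/m})) − 1| ≤ C·log(u+1)/(m·q^{⌈(m+1)/2⌉})`. -/
theorem stmt10 :
    ∃ C : ℝ, 0 < C ∧ ∀ (F : Type) [Field F] [Fintype F], ∀ n m : ℕ, 1 ≤ m → m ≤ n →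
      Real.sqrt (10 * (n : ℝ) * Real.log n) ≤ (m : ℝ) →
      ∀ u : ℝ, u = (n : ℝ) / (m : ℝ) →
      |polyProb F n m / (permProb n m * Gq F m (Real.exp (xi u / (m : ℝ)))) - 1| ≤
        C * Real.log (u + 1) / ((m : ℝ) * (Fintype.card F : ℝ) ^ ((m + 2) / 2)) := by
  refine ⟨5440, by norm_num, ?_⟩
  intro F _ _ n m hm hmn h u hu
  subst hu
  by_cases hn : 2 ≤ n
  · exact Friable.case_two F n m hm hmn hn h
  · have hn1 : n = 1 := by omega
    have hm1 : m = 1 := by omega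
    subst hn1
    subst hm1
    have hq := Friable.card_ge_two F
    have h1 := Friable.case_one F
    have h2 : Real.exp (xi (((1:ℕ):ℝ) / ((1:ℕ):ℝ)) / ((1:ℕ):ℝ)) = 1 := by
      simp [Friable.xi_one]
    rw [h2]
    refine h1.trans ?_
    have hl : (0.6931471803 : ℝ) < Real.log 2 := Real.log_two_gt_d9
    norm_num
    apply div_le_div_of_nonneg_right _ (by linarith)
    linarith
end

section
/- For every ε > 0 there exists C > 0 such that for every prime power q and all integers n ≥ m ≥ (2+ε)·(log n)/(log q), writing u = n/m and a = 1 if m is even and a = 0 if m is odd, one has | p_{n,m,q}/p_{n,m} − G_q(x) | ≤ C·n^{(1+a)/m}·min{m, log(u+1)} / ( m·q^{⌈(m+1)/2⌉} ). -/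
open Real

namespace Fri
open PowerSeries Finset

/-- The Euler operator `X d/dX` on power series. -/
noncomputable def theta (A : PowerSeries ℝ) : PowerSeries ℝ :=
  PowerSeries.mk fun n => (n : ℝ) * coeff n A

theorem coeff_theta (A : PowerSeries ℝ) (n : ℕ) : coeff n (theta A) = (n : ℝ) * coeff n A := by
  simp [theta]

theorem theta_mul (A B : PowerSeries ℝ) : theta (A * B) = theta A * B + A * theta B := by
  ext n
  rw [coeff_theta, map_add, coeff_mul, coeff_mul, coeff_mul, mul_sum, ← sum_add_distrib]
  refine sum_congr rfl fun p hp => ?_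
  rw [HasAntidiagonal.mem_antidiagonal] at hp
  rw [coeff_theta, coeff_theta, ← hp]
  push_cast
  ring

theorem theta_one : theta 1 = 0 := by
  ext n
  rw [coeff_theta, coeff_one]
  split_ifs with h <;> simp [h]

theorem theta_prod {ι : Type*} (s : Finset ι) (A L : ι → PowerSeries ℝ)
    (h : ∀ i ∈ s, theta (A i) = A i * L i) :
    theta (∏ i ∈ s, A i) = (∏ i ∈ s, A i) * ∑ i ∈ s, L i := by
  classical
  induction s using Finset.induction_on with
  | empty => simp [theta_one]
  | insert a s ha ih =>
    rw [prod_insert ha, sum_insert ha, theta_mul, ih fun i hi => h i (mem_insert_of_mem hi),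
      h a (mem_insert_self _ _)]
    ring

/-- Uniqueness for the equation theta A = A L. -/
theorem theta_unique {A B L : PowerSeries ℝ} (hL : coeff 0 L = 0)
    (h0 : coeff 0 A = coeff 0 B) (hA : theta A = A * L) (hB : theta B = B * L) : A = B := by
  ext n
  induction n using Nat.strong_induction_on with
  | _ n ih =>
    rcases Nat.eq_zero_or_pos n with rfl | hn
    · exact h0
    have h1 := congrArg (coeff n) hA
    have h2 := congrArg (coeff n) hB
    rw [coeff_theta, coeff_mul] at h1 h2
    have : ∑ p ∈ antidiagonal n, coeff p.1 A * coeff p.2 L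
        = ∑ p ∈ antidiagonal n, coeff p.1 B * coeff p.2 L := by
      refine sum_congr rfl fun p hp => ?_
      rw [HasAntidiagonal.mem_antidiagonal] at hp
      rcases Nat.eq_zero_or_pos p.2 with h | h
      · rw [h, hL]; simp
      · rw [ih p.1 (by omega)]
    have hn' : (n : ℝ) ≠ 0 := by positivity
    apply mul_left_cancel₀ hn'
    rw [h1, h2, this]

/-- `A` converges at `x` with sum `s`. -/
def Ev (A : PowerSeries ℝ) (x s : ℝ) : Prop := HasSum (fun n => coeff n A * x ^ n) s

theorem Ev.mul {A B : PowerSeries ℝ} {x s t : ℝ} (hA : Ev A x s) (hB : Ev B x t) :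
    Ev (A * B) x (s * t) := by
  unfold Ev at *
  have e : (fun n => coeff n (A * B) * x ^ n) = fun n => ∑ kl ∈ antidiagonal n,
      (coeff kl.1 A * x ^ kl.1) * (coeff kl.2 B * x ^ kl.2) := by
    funext n
    rw [coeff_mul, sum_mul]
    refine sum_congr rfl fun p hp => ?_
    rw [HasAntidiagonal.mem_antidiagonal] at hp
    rw [← hp, pow_add]
    ring
  rw [e]
  have hA' := hA.summable.norm
  have hB' := hB.summable.norm
  have h1 := tsum_mul_tsum_eq_tsum_sum_antidiagonal_of_summable_norm hA' hB'
  rw [hA.tsum_eq, hB.tsum_eq] at h1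
  rw [h1]
  exact (summable_norm_sum_mul_antidiagonal_of_summable_norm hA' hB').of_norm.hasSum

theorem Ev.one (x : ℝ) : Ev 1 x 1 := by
  unfold Ev
  have := hasSum_ite_eq (0 : ℕ) (1 : ℝ)
  convert this using 2 with n
  rw [coeff_one]
  split_ifs with h <;> simp [h]

theorem Ev.prod {ι : Type*} (s : Finset ι) (A : ι → PowerSeries ℝ) (v : ι → ℝ) (x : ℝ)
    (h : ∀ i ∈ s, Ev (A i) x (v i)) : Ev (∏ i ∈ s, A i) x (∏ i ∈ s, v i) := by
  classical
  induction s using Finset.induction_on with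
  | empty => simpa using Ev.one x
  | insert a s ha ih =>
    rw [prod_insert ha, prod_insert ha]
    exact (h a (mem_insert_self _ _)).mul (ih fun i hi => h i (mem_insert_of_mem hi))

theorem Ev.add {A B : PowerSeries ℝ} {x s t : ℝ} (hA : Ev A x s) (hB : Ev B x t) :
    Ev (A + B) x (s + t) := by
  unfold Ev at *
  simpa [add_mul] using HasSum.add hA hB

theorem Ev.unique {A : PowerSeries ℝ} {x s t : ℝ} (hA : Ev A x s) (hB : Ev A x t) : s = t :=
  HasSum.unique hA hB

/-- A series supported on multiples of `d`. -/
theorem ev_multiples {d : ℕ} (hd : 0 < d) (b : ℕ → ℝ) (x s : ℝ)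
    (h : HasSum (fun k => b k * (x ^ d) ^ k) s) :
    Ev (PowerSeries.mk fun n => if d ∣ n then b (n / d) else 0) x s := by
  unfold Ev
  have inj : Function.Injective (fun k : ℕ => d * k) := fun a b hab =>
    Nat.eq_of_mul_eq_mul_left hd hab
  rw [← inj.hasSum_iff]
  · convert h using 2 with k
    simp [pow_mul, Nat.mul_div_cancel_left _ hd]
  · intro n hn
    have : ¬ d ∣ n := fun ⟨k, hk⟩ => hn ⟨k, hk.symm⟩
    simp [this]

/-- `exp (X^i / i)`. -/
noncomputable def expS (i : ℕ) : PowerSeries ℝ :=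
  PowerSeries.mk fun n => if i ∣ n then ((1 : ℝ) / i) ^ (n / i) / ((n / i).factorial : ℝ) else 0

theorem expS_ev {i : ℕ} (hi : 0 < i) (x : ℝ) : Ev (expS i) x (Real.exp (x ^ i / i)) := by
  refine ev_multiples hi (fun k => ((1 : ℝ) / i) ^ k / (k.factorial : ℝ)) x _ ?_
  have := NormedSpace.expSeries_div_hasSum_exp (x ^ i / (i : ℝ))
  rw [← Real.exp_eq_exp_ℝ] at this
  have e : (fun k : ℕ => ((1 : ℝ) / i) ^ k / (k.factorial : ℝ) * (x ^ i) ^ k) =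
      fun k => (x ^ i / (i : ℝ)) ^ k / (k.factorial : ℝ) := by
    funext k
    rw [div_pow, div_pow]
    simp
    ring
  rw [e]
  exact this

theorem expS_theta {i : ℕ} (hi : 0 < i) : theta (expS i) = expS i * X ^ i := by
  ext n
  rw [coeff_theta, coeff_mul_X_pow']
  simp only [expS, coeff_mk]
  by_cases h1 : i ∣ n
  · rw [if_pos h1]
    obtain ⟨k, rfl⟩ := h1
    rcases k with _ | k
    · simp; omega
    · have h2 : i * (k + 1) - i = i * k := by rw [Nat.mul_succ]; omega
      rw [if_pos (by nlinarith), h2, if_pos (dvd_mul_right _ _),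
        Nat.mul_div_cancel_left _ hi, Nat.mul_div_cancel_left _ hi, Nat.factorial_succ]
      have : (i : ℝ) ≠ 0 := by positivity
      have : ((k.factorial : ℕ) : ℝ) ≠ 0 := by positivity
      push_cast
      rw [pow_succ]
      field_simp
  · rw [if_neg h1, mul_zero]
    split_ifs with h2 h3
    · exact absurd ((Nat.dvd_sub_iff_left h2 (dvd_refl i)).mp h3) h1
    · rfl
    · rfl

/-- The geometric series `1/(1-X^d)`. -/
noncomputable def geoS (d : ℕ) : PowerSeries ℝ :=
  PowerSeries.mk fun n => if d ∣ n then 1 else 0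

theorem geoS_ev {d : ℕ} (hd : 0 < d) {y : ℝ} (h0 : 0 ≤ y) (h1 : y < 1) :
    Ev (geoS d) y (1 - y ^ d)⁻¹ := by
  refine ev_multiples hd (fun _ => 1) y _ ?_
  simpa using hasSum_geometric_of_lt_one (pow_nonneg h0 d) (pow_lt_one₀ h0 h1 hd.ne')

theorem geoS_mul {d : ℕ} (hd : 0 < d) : geoS d * X ^ d = geoS d - 1 := by
  ext n
  rw [coeff_mul_X_pow', map_sub, coeff_one]
  simp only [geoS, coeff_mk]
  by_cases h0 : n = 0
  · subst h0; simp; omega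
  rw [if_neg h0, sub_zero]
  split_ifs with h1 h2 h3 h3 h2
  · rfl
  · exact absurd ((Nat.dvd_sub_iff_left h1 (dvd_refl d)).mp h2) h3
  · exact absurd ((Nat.dvd_sub h3 (dvd_refl d))) h2
  · rfl
  · exact absurd (Nat.le_of_dvd (by omega) h2) h1
  · rfl

theorem geoS_theta {d : ℕ} (hd : 0 < d) :
    theta (geoS d) = geoS d * (PowerSeries.C (d : ℝ) * (geoS d - 1)) := by
  have h1 : theta (geoS d * X ^ d) = theta (geoS d) := by
    rw [geoS_mul hd]
    ext n
    rw [coeff_theta, coeff_theta, map_sub, coeff_one]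
    split_ifs with h <;> simp [h]
  have h2 : theta (X ^ d : PowerSeries ℝ) = PowerSeries.C (d : ℝ) * X ^ d := by
    ext n
    rw [coeff_theta, coeff_C_mul, coeff_X_pow]
    split_ifs with h <;> simp [h]
  rw [theta_mul, h2] at h1
  have h3 : geoS d * (1 - X ^ d) = 1 := by rw [mul_sub, geoS_mul hd]; ring
  have h4 : theta (geoS d) * (1 - X ^ d) = geoS d * (PowerSeries.C (d : ℝ) * X ^ d) := by
    linear_combination -h1
  calc theta (geoS d) = theta (geoS d) * (1 - X ^ d) * geoS d := by
        linear_combination (-(theta (geoS d))) * h3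
    _ = geoS d * (PowerSeries.C (d : ℝ) * (geoS d * X ^ d)) := by rw [h4]; ring
    _ = _ := by rw [geoS_mul hd]

end Fri


namespace Fri
open Finset

/-- The weight `1/z_μ` of a cycle type. -/
noncomputable def wt (s : Multiset ℕ) : ℝ :=
  ((s.prod : ℝ) * ((∏ i ∈ s.toFinset, (s.count i).factorial : ℕ) : ℝ))⁻¹

theorem prod_count_factorial_subset (s : Multiset ℕ) (T : Finset ℕ) (h : s.toFinset ⊆ T) :
    ∏ i ∈ s.toFinset, (s.count i).factorial = ∏ i ∈ T, (s.count i).factorial := by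
  refine prod_subset h fun i _ hi => ?_
  rw [Multiset.mem_toFinset] at hi
  rw [Multiset.count_eq_zero_of_notMem hi]
  rfl

theorem wt_cons (i : ℕ) (hi : 0 < i) (s : Multiset ℕ) :
    ((i ::ₘ s).count i : ℝ) * i * wt (i ::ₘ s) = wt s := by
  have h1 : ∏ j ∈ (i ::ₘ s).toFinset, ((i ::ₘ s).count j).factorial =
      (s.count i + 1) * ∏ j ∈ s.toFinset, (s.count j).factorial := by
    rw [prod_count_factorial_subset s (insert i s.toFinset) (subset_insert _ _),
      Multiset.toFinset_cons,
      ← mul_prod_erase _ _ (mem_insert_self i _), ← mul_prod_erase _ _ (mem_insert_self i _),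
      Multiset.count_cons_self, Nat.factorial_succ, mul_assoc]
    congr 2
    refine prod_congr rfl fun j hj => ?_
    rw [Multiset.count_cons_of_ne (ne_of_mem_erase hj)]
  unfold wt
  rw [h1, Multiset.count_cons_self, Multiset.prod_cons]
  have : (i : ℝ) ≠ 0 := by positivity
  have : ((s.count i : ℕ) : ℝ) + 1 ≠ 0 := by positivity
  push_cast
  rw [mul_inv, mul_inv, mul_inv, mul_inv]
  field_simp

/-- Partitions of `n` into parts at most `m`. -/
noncomputable def partsLe (n m : ℕ) : Finset (Nat.Partition n) :=
  univ.filter fun p => ∀ c ∈ p.parts, c ≤ m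

/-- `p_{n,m}` as a sum over partitions. -/
noncomputable def Pw (n m : ℕ) : ℝ := ∑ p ∈ partsLe n m, wt p.parts

theorem parts_sum_eq {n m : ℕ} (p : Nat.Partition n) (hp : p ∈ partsLe n m) :
    (n : ℝ) = ∑ i ∈ Icc 1 m, ((p.parts.count i : ℝ) * i) := by
  have h := Finset.sum_multiset_count_of_subset p.parts (Icc 1 m) (by
    intro i hi
    rw [Multiset.mem_toFinset] at hi
    rw [mem_Icc]
    exact ⟨p.parts_pos hi, (mem_filter.mp hp).2 i hi⟩)
  rw [p.parts_sum] at h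
  have h' := congrArg (Nat.cast : ℕ → ℝ) h
  push_cast at h'
  simpa using h'

theorem sum_erase_part {n m i : ℕ} (hi : i ∈ Icc 1 m) :
    ∑ p ∈ partsLe n m, ((p.parts.count i : ℝ) * i) * wt p.parts =
      if i ≤ n then Pw (n - i) m else 0 := by
  rw [mem_Icc] at hi
  have hz : ∀ p : Nat.Partition n, i ∉ p.parts → ((p.parts.count i : ℝ) * i) * wt p.parts = 0 := by
    intro p hp
    rw [Multiset.count_eq_zero_of_notMem hp]
    simp
  split_ifs with hin
  · unfold Pw
    rw [← sum_filter_add_sum_filter_not _ (fun p : Nat.Partition n => i ∈ p.parts)]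
    rw [sum_eq_zero (s := filter (fun p : Nat.Partition n => ¬ i ∈ p.parts) _)
      (fun p hp => hz p (mem_filter.mp hp).2), add_zero]
    symm
    refine sum_bij (fun (p : Nat.Partition (n - i)) _ =>
      (⟨i ::ₘ p.parts, ?_, ?_⟩ : Nat.Partition n)) ?_ ?_ ?_ ?_
    · intro j hj
      rcases Multiset.mem_cons.mp hj with h | h
      · omega
      · exact p.parts_pos h
    · rw [Multiset.sum_cons, p.parts_sum]; omega
    · intro p hp
      simp only [partsLe, mem_filter, mem_univ, true_and, Multiset.mem_cons] at hp ⊢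
      refine ⟨fun c hc => ?_, Or.inl trivial⟩
      rcases hc with h | h
      · omega
      · exact hp c h
    · intro p _ p' _ h
      have := congrArg Nat.Partition.parts h
      simp only [Multiset.cons_inj_right] at this
      exact Nat.Partition.ext this
    · intro p hp
      simp only [partsLe, mem_filter, mem_univ, true_and] at hp
      have hc := Multiset.cons_erase hp.2
      refine ⟨⟨p.parts.erase i, fun h => p.parts_pos (Multiset.mem_of_mem_erase h), ?_⟩, ?_, ?_⟩
      · have := p.parts_sum
        rw [← hc, Multiset.sum_cons] at this
        omega
      · simp only [partsLe, mem_filter, mem_univ, true_and]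
        exact fun c h => hp.1 c (Multiset.mem_of_mem_erase h)
      · exact Nat.Partition.ext hc
    · intro p _
      exact (wt_cons i (by omega) p.parts).symm
  · refine sum_eq_zero fun p _ => hz p fun h => hin ?_
    have := Multiset.single_le_sum (fun _ _ => Nat.zero_le _) i h
    rwa [p.parts_sum] at this

theorem Pw_rec (n m : ℕ) :
    (n : ℝ) * Pw n m = ∑ i ∈ Icc 1 m, if i ≤ n then Pw (n - i) m else 0 := by
  rw [sum_congr rfl fun i hi => (sum_erase_part (n := n) hi).symm, sum_comm]
  conv_lhs => rw [Pw, mul_sum]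
  refine sum_congr rfl fun p hp => ?_
  rw [← sum_mul, ← parts_sum_eq p hp]

theorem Pw_zero (m : ℕ) : Pw 0 m = 1 := by
  unfold Pw partsLe
  have h0 : ∀ p : Nat.Partition 0, p.parts = 0 := by
    intro p
    have := p.parts_sum
    rw [Multiset.sum_eq_zero_iff] at this
    refine Multiset.eq_zero_of_forall_notMem fun a ha => ?_
    have h1 := this a ha
    have h2 := p.parts_pos ha
    omega
  rw [filter_true_of_mem (fun p _ => by rw [h0 p]; simp)]
  simp [wt]

theorem card_partition_eq {α : Type*} [Fintype α] [DecidableEq α]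
    (p : (Fintype.card α).Partition) :
    ((univ.filter fun σ : Equiv.Perm α => σ.partition = p).card : ℝ) =
      (Fintype.card α).factorial * wt p.parts := by
  set μ := p.parts.filter (fun n => 2 ≤ n) with hμ
  have hsplit : p.parts = μ + Multiset.replicate (p.parts.count 1) 1 := by
    have h := Multiset.filter_add_not (fun n => 2 ≤ n) p.parts
    conv_lhs => rw [← h]
    rw [← hμ]
    congr 1
    rw [← Multiset.filter_eq']
    refine Multiset.filter_congr fun x hx => ?_
    have := p.parts_pos hx
    omega
  have hsum : Fintype.card α - μ.sum = p.parts.count 1 ∧ μ.sum ≤ Fintype.card α := by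
    have h := p.parts_sum
    rw [hsplit] at h
    rw [Multiset.sum_add, Multiset.sum_replicate] at h
    simp only [smul_eq_mul, mul_one] at h
    omega
  have hset : (univ.filter fun σ : Equiv.Perm α => σ.partition = p) =
      univ.filter fun σ : Equiv.Perm α => σ.cycleType = μ := by
    ext σ
    simp only [mem_filter, mem_univ, true_and]
    constructor
    · rintro rfl
      exact Equiv.Perm.filter_parts_partition_eq_cycleType.symm
    · intro h
      refine Nat.Partition.ext ?_
      rw [Equiv.Perm.parts_partition, ← Equiv.Perm.sum_cycleType, h, hsum.1]
      exact hsplit.symm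
  have hc := Equiv.Perm.card_of_cycleType_mul_eq α μ
  rw [if_pos ⟨hsum.2, fun a ha => (Multiset.mem_filter.mp ha).2⟩, hsum.1] at hc
  have hprod : p.parts.prod = μ.prod := by
    conv_lhs => rw [hsplit]
    simp
  have h1μ : 1 ∉ μ.toFinset := by
    rw [Multiset.mem_toFinset, hμ, Multiset.mem_filter]
    omega
  have hfac : ∏ i ∈ p.parts.toFinset, (p.parts.count i).factorial =
      (p.parts.count 1).factorial * ∏ i ∈ μ.toFinset, (μ.count i).factorial := by
    rw [prod_count_factorial_subset p.parts (insert 1 μ.toFinset), prod_insert h1μ]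
    · congr 1
      refine prod_congr rfl fun j hj => ?_
      rw [Multiset.mem_toFinset, hμ, Multiset.mem_filter] at hj
      rw [hμ, Multiset.count_filter, if_pos hj.2]
    · intro j hj
      rw [Multiset.mem_toFinset] at hj
      rw [mem_insert, Multiset.mem_toFinset, hμ, Multiset.mem_filter]
      have := p.parts_pos hj
      by_cases h : j = 1
      · exact Or.inl h
      · exact Or.inr ⟨hj, by omega⟩
  rw [hset, wt, hprod, hfac, ← hc]
  have e1 : (μ.prod : ℝ) ≠ 0 := by
    have : μ.prod ≠ 0 := by
      rw [Ne, Multiset.prod_eq_zero_iff, hμ, Multiset.mem_filter]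
      omega
    exact_mod_cast this
  have e2 : ((∏ i ∈ μ.toFinset, (μ.count i).factorial : ℕ) : ℝ) ≠ 0 := by
    have : ∏ i ∈ μ.toFinset, (μ.count i).factorial ≠ 0 :=
      prod_ne_zero_iff.mpr fun i _ => Nat.factorial_ne_zero _
    exact_mod_cast this
  have e3 : (((p.parts.count 1).factorial : ℕ) : ℝ) ≠ 0 := by positivity
  generalize ∏ i ∈ μ.toFinset, (μ.count i).factorial = Q at *
  rw [Nat.cast_mul _ Q, eq_mul_inv_iff_mul_eq₀ (by positivity), Nat.cast_mul, Nat.cast_mul,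
    Nat.cast_mul]
  ring

theorem card_friable {α : Type*} [Fintype α] [DecidableEq α] (m : ℕ) (hm : 1 ≤ m) :
    (Nat.card {σ : Equiv.Perm α // ∀ c ∈ σ.cycleType, c ≤ m} : ℝ) =
      (Fintype.card α).factorial * Pw (Fintype.card α) m := by
  classical
  rw [Nat.card_eq_fintype_card, Fintype.card_subtype, Pw, mul_sum]
  have hmap : ∀ σ ∈ univ.filter (fun σ : Equiv.Perm α => ∀ c ∈ σ.cycleType, c ≤ m),
      σ.partition ∈ partsLe (Fintype.card α) m := by
    intro σ hσ
    simp only [partsLe, mem_filter, mem_univ, true_and] at hσ ⊢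
    intro c hc
    rw [Equiv.Perm.parts_partition] at hc
    rcases Multiset.mem_add.mp hc with h | h
    · exact hσ c h
    · rw [Multiset.eq_of_mem_replicate h]; exact hm
  rw [card_eq_sum_card_fiberwise hmap]
  push_cast
  refine sum_congr rfl fun p hp => ?_
  rw [← card_partition_eq p]
  congr 2
  ext σ
  simp only [partsLe, mem_filter, mem_univ, true_and] at hp ⊢
  constructor
  · exact fun h => h.2
  · intro h
    refine ⟨fun c hc => hp c ?_, h⟩
    rw [← h, Equiv.Perm.parts_partition]
    exact Multiset.mem_add.mpr (Or.inl hc)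

theorem permProb_eq (n m : ℕ) (hm : 1 ≤ m) : permProb n m = Pw n m := by
  unfold permProb
  rw [card_friable m hm, Fintype.card_fin]
  have : ((n.factorial : ℕ) : ℝ) ≠ 0 := by positivity
  field_simp

open PowerSeries in
theorem Pw_series (m : ℕ) : (PowerSeries.mk fun n => Pw n m) = ∏ i ∈ Icc 1 m, expS i := by
  have hL : coeff 0 (∑ i ∈ Icc 1 m, (X : PowerSeries ℝ) ^ i) = 0 := by
    rw [map_sum]
    refine sum_eq_zero fun i hi => ?_
    rw [mem_Icc] at hi
    rw [coeff_X_pow, if_neg (by omega)]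
  refine theta_unique hL ?_ ?_ (theta_prod _ _ _ fun i hi => expS_theta (by
    rw [mem_Icc] at hi; omega))
  · rw [coeff_mk, Pw_zero]
    rw [coeff_zero_eq_constantCoeff_apply, map_prod]
    symm
    refine prod_eq_one fun i _ => ?_
    rw [← coeff_zero_eq_constantCoeff_apply]
    simp [expS]
  · ext n
    rw [coeff_theta, coeff_mk, Pw_rec, mul_sum, map_sum]
    refine sum_congr rfl fun i _ => ?_
    rw [coeff_mul_X_pow', coeff_mk]

theorem Pw_ev (m : ℕ) (x : ℝ) :
    Ev (PowerSeries.mk fun n => Pw n m) x (Real.exp (∑ i ∈ Icc 1 m, x ^ i / (i : ℝ))) := by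
  rw [Pw_series, Real.exp_sum]
  refine Ev.prod _ _ _ _ fun i hi => expS_ev (by rw [mem_Icc] at hi; omega) x

end Fri


namespace Fri
open Finset

/-- `∑_{i=1}^m y^i`. -/
noncomputable def sg (m : ℕ) (y : ℝ) : ℝ := ∑ i ∈ Icc 1 m, y ^ i

theorem sg_mono {m : ℕ} {y z : ℝ} (hy : 0 ≤ y) (h : y ≤ z) : sg m y ≤ sg m z :=
  sum_le_sum fun _ _ => pow_le_pow_left₀ hy h _

theorem sg_succ (m : ℕ) (y : ℝ) : sg (m + 1) y = sg m y + y ^ (m + 1) := by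
  unfold sg
  rw [sum_Icc_succ_top (by omega)]

theorem cheb (m : ℕ) {y : ℝ} (hy : 1 ≤ y) :
    ((m : ℝ) + 1) * sg m y ≤ 2 * ∑ i ∈ Icc 1 m, (i : ℝ) * y ^ i := by
  induction m with
  | zero => simp [sg]
  | succ m ih =>
    rw [sg_succ, sum_Icc_succ_top (by omega)]
    have h : sg m y ≤ m * y ^ (m + 1) := by
      calc sg m y ≤ ∑ i ∈ Icc 1 m, y ^ (m + 1) :=
            sum_le_sum fun i hi => pow_le_pow_right₀ hy (by rw [mem_Icc] at hi; omega)
        _ = m * y ^ (m + 1) := by simp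
    push_cast
    nlinarith

theorem sg_scale (m : ℕ) {y h : ℝ} (hy : 1 ≤ y) (hh : 0 ≤ h) :
    sg m y * (1 + h * ((m : ℝ) + 1) / 2) ≤ sg m (y * (1 + h)) := by
  have h1 : sg m y + h * ∑ i ∈ Icc 1 m, (i : ℝ) * y ^ i ≤ sg m (y * (1 + h)) := by
    unfold sg
    rw [mul_sum, ← sum_add_distrib]
    refine sum_le_sum fun i _ => ?_
    rw [mul_pow]
    have := one_add_mul_le_pow (by linarith : (-2 : ℝ) ≤ h) i
    have hp : 0 ≤ y ^ i := by positivity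
    nlinarith
  have := cheb m hy
  nlinarith

section seq
variable {m : ℕ} {P : ℕ → ℝ}

/-- The recurrence satisfied by `p_{n,m}`. -/
def Rec (m : ℕ) (P : ℕ → ℝ) : Prop :=
  1 ≤ m ∧ P 0 = 1 ∧
    ∀ n : ℕ, (n : ℝ) * P n = ∑ i ∈ Icc 1 m, if i ≤ n then P (n - i) else 0

theorem Rec.rng (h : Rec m P) (n : ℕ) :
    (n : ℝ) * P n = ∑ i ∈ range m, if i + 1 ≤ n then P (n - (i + 1)) else 0 := by
  rw [h.2.2 n, ← Finset.Ico_add_one_right_eq_Icc, sum_Ico_eq_sum_range]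
  refine sum_congr (by simp) fun i _ => ?_
  rw [add_comm 1 i]

theorem Rec.pos (h : Rec m P) (n : ℕ) : 0 < P n := by
  induction n using Nat.strong_induction_on with
  | _ n ih =>
    rcases Nat.eq_zero_or_pos n with rfl | hn
    · rw [h.2.1]; norm_num
    · have h1 := h.2.2 n
      have h2 : 0 < ∑ i ∈ Icc 1 m, if i ≤ n then P (n - i) else 0 := by
        refine sum_pos' (fun i hi => ?_) ⟨1, ?_, ?_⟩
        · rw [mem_Icc] at hi
          split_ifs
          · exact (ih _ (by omega)).le
          · exact le_rfl
        · rw [mem_Icc]; exact ⟨le_rfl, h.1⟩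
        · rw [if_pos (by omega)]; exact ih _ (by omega)
      rw [← h1] at h2
      exact pos_of_mul_pos_right h2 (Nat.cast_nonneg n)

theorem Rec.diff (h : Rec m P) (n : ℕ) :
    ((n : ℝ) + 1) * (P n - P (n + 1)) = if m ≤ n then P (n - m) else 0 := by
  have h1 := h.rng n
  have h2 := h.rng (n + 1)
  have h3 := sum_range_succ (fun i => if i ≤ n then P (n - i) else 0) m
  rw [sum_range_succ'] at h3
  simp only [Nat.add_le_add_iff_right, Nat.add_sub_add_right] at h2
  rw [← h1, ← h2] at h3
  simp only [Nat.zero_le, if_true, Nat.sub_zero] at h3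
  push_cast at h3
  linarith

theorem Rec.anti (h : Rec m P) (n : ℕ) : P (n + 1) ≤ P n := by
  have h1 := h.diff n
  have h2 : 0 ≤ ((n : ℝ) + 1) * (P n - P (n + 1)) := by
    rw [h1]
    split_ifs
    · exact (h.pos _).le
    · exact le_rfl
  have := nonneg_of_mul_nonneg_right h2 (by positivity)
  linarith

theorem ratio_mono (hP : ∀ n, 0 < P n) {j M : ℕ}
    (h : ∀ k, k + 1 < M → P k * P (k + 2) ≤ P (k + 1) ^ 2) (k : ℕ) (hjk : j ≤ k) (hk : k < M) :
    P j * P (k + 1) ≤ P (j + 1) * P k := by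
  induction k, hjk using Nat.le_induction with
  | base => rw [mul_comm]
  | succ k hjk ih =>
    have h1 := ih (by omega)
    have h2 := h k hk
    have a := hP k; have b := hP (k + 1); have c := hP (k + 2)
    have d := hP j; have e := hP (j + 1)
    refine le_of_mul_le_mul_right ?_ (mul_pos a b)
    have h3 := mul_le_mul h1 h2 (by positivity) (by positivity)
    have e1 : P j * P (k + 1 + 1) * (P k * P (k + 1)) =
      P j * P (k + 1) * (P k * P (k + 2)) := by ring
    have e2 : P (j + 1) * P (k + 1) * (P k * P (k + 1)) =
      P (j + 1) * P k * P (k + 1) ^ 2 := by ring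
    rw [e1, e2]
    exact h3

theorem Rec.logconcave (h : Rec m P) (n : ℕ) : P n * P (n + 2) ≤ P (n + 1) ^ 2 := by
  induction n using Nat.strong_induction_on with
  | _ n ih =>
    have d1 := h.diff n
    have d2 := h.diff (n + 1)
    have a := h.pos (n + 1)
    have a' := h.pos n
    set b := (if m ≤ n + 1 then P (n + 1 - m) else 0) with hb
    set b' := (if m ≤ n then P (n - m) else 0) with hb'
    have key : 0 ≤ ((n : ℝ) + 1) * P (n + 1) * (b - b') + b' * (b - P (n + 1)) := by
      by_cases hmn : m ≤ n
      · obtain ⟨t, rfl⟩ := Nat.exists_eq_add_of_le hmn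
        have eb : b = P (t + 1) := by
          rw [hb, if_pos (by omega)]; congr 1; omega
        have eb' : b' = P t := by
          rw [hb', if_pos (by omega)]; congr 1; omega
        rw [eb, eb']
        have hS : ((m + t : ℕ) + 1 : ℝ) * P (m + t + 1) = ∑ i ∈ range m, P (t + 1 + i) := by
          have := h.rng (m + t + 1)
          push_cast at this ⊢
          rw [this, ← sum_range_reflect]
          refine sum_congr rfl fun i hi => ?_
          rw [mem_range] at hi
          rw [if_pos (by omega)]
          congr 1
          omega
        have hD : P (t + 1) - P (m + t + 1) =
            ∑ i ∈ range m, (P (t + 1 + i) - P (t + 1 + (i + 1))) := by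
          rw [sum_range_sub' (fun i => P (t + 1 + i))]
          congr 2
          omega
        rw [hS, hD, sum_mul, mul_sum, ← sum_add_distrib]
        refine sum_nonneg fun i hi => ?_
        rw [mem_range] at hi
        have := ratio_mono (j := t) (M := m + t + 1) h.pos (fun k hk => ih k (by omega))
          (t + 1 + i) (by omega) (by omega)
        have e : t + 1 + (i + 1) = t + 1 + i + 1 := by omega
        rw [e]
        nlinarith
      · have eb' : b' = 0 := by rw [hb', if_neg hmn]
        have hb0 : 0 ≤ b := by
          rw [hb]
          split_ifs
          · exact (h.pos _).le
          · exact le_rfl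
        rw [eb']
        simp only [sub_zero, zero_mul, add_zero]
        positivity
    have hn : (0 : ℝ) < (n : ℝ) + 1 := by positivity
    push_cast at d2
    have hn2 : (0 : ℝ) < (n : ℝ) + 1 + 1 := by positivity
    have e : ((n : ℝ) + 1) * ((n : ℝ) + 1 + 1) * (P (n + 1) ^ 2 - P n * P (n + 2)) =
        ((n : ℝ) + 1) * P (n + 1) * (b - b') + b' * (b - P (n + 1)) := by
      rw [← d1, ← d2]
      ring
    rw [← e] at key
    have := nonneg_of_mul_nonneg_right key (by positivity)
    linarith

/-- ratio of consecutive terms -/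
noncomputable def rho (P : ℕ → ℝ) (k : ℕ) : ℝ := P k / P (k + 1)

theorem Rec.rho_mul (h : Rec m P) (k : ℕ) : rho P k * P (k + 1) = P k := by
  have := h.pos (k + 1)
  unfold rho
  field_simp

theorem Rec.rho_ge_one (h : Rec m P) (k : ℕ) : 1 ≤ rho P k := by
  unfold rho
  rw [le_div_iff₀ (h.pos _), one_mul]
  exact h.anti k

theorem Rec.rho_mono (h : Rec m P) {j k : ℕ} (hjk : j ≤ k) : rho P j ≤ rho P k := by
  unfold rho
  rw [div_le_div_iff₀ (h.pos _) (h.pos _), mul_comm (P k)]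
  exact ratio_mono (M := k + 1) h.pos (fun k _ => h.logconcave k) k hjk (by omega)

theorem Rec.chain_le (h : Rec m P) {n k : ℕ} (hk : k ≤ n) {c : ℝ}
    (hc : ∀ j, j < n → n ≤ j + k → rho P j ≤ c) : P (n - k) ≤ c ^ k * P n := by
  induction k with
  | zero => simp
  | succ k ih =>
    have h1 := ih (by omega) fun j hj hj' => hc j hj (by omega)
    have h2 := hc (n - (k + 1)) (by omega) (by omega)
    have h3 := h.rho_mul (n - (k + 1))
    have e : n - (k + 1) + 1 = n - k := by omega
    rw [e] at h3
    rw [← h3, pow_succ]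
    have := h.pos (n - k)
    have h4 := h.rho_ge_one (n - (k + 1))
    calc rho P (n - (k + 1)) * P (n - k) ≤ c * (c ^ k * P n) :=
          mul_le_mul h2 h1 this.le (by linarith)
      _ = _ := by ring

theorem Rec.chain_ge (h : Rec m P) {n k : ℕ} (hk : k ≤ n) {c : ℝ} (hc0 : 0 ≤ c)
    (hc : ∀ j, j < n → n ≤ j + k → c ≤ rho P j) : c ^ k * P n ≤ P (n - k) := by
  induction k with
  | zero => simp
  | succ k ih =>
    have h1 := ih (by omega) fun j hj hj' => hc j hj (by omega)
    have h2 := hc (n - (k + 1)) (by omega) (by omega)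
    have h3 := h.rho_mul (n - (k + 1))
    have e : n - (k + 1) + 1 = n - k := by omega
    rw [e] at h3
    rw [← h3, pow_succ]
    have := h.pos (n - k)
    have h4 := h.rho_ge_one (n - (k + 1))
    have h5 := h.pos n
    calc c ^ k * c * P n = c * (c ^ k * P n) := by ring
      _ ≤ rho P (n - (k + 1)) * P (n - k) := mul_le_mul h2 h1 (by positivity) (by linarith)

theorem Rec.sg_ge (h : Rec m P) (k : ℕ) : (k : ℝ) + 1 ≤ sg m (rho P k) := by
  have h1 := h.2.2 (k + 1)
  have h0 := h.pos (k + 1)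
  have h5 := h.rho_ge_one k
  have h2 : ∑ i ∈ Icc 1 m, (if i ≤ k + 1 then P (k + 1 - i) else 0) ≤
      sg m (rho P k) * P (k + 1) := by
    unfold sg
    rw [sum_mul]
    refine sum_le_sum fun i _ => ?_
    split_ifs with hi
    · exact h.chain_le hi fun j hj _ => h.rho_mono (by omega)
    · positivity
  rw [← h1] at h2
  push_cast at h2
  exact le_of_mul_le_mul_right h2 h0

theorem Rec.sg_le (h : Rec m P) (k : ℕ) : sg m (rho P k) ≤ (k : ℝ) + m := by
  have h1 := h.2.2 (k + m)
  have h0 := h.pos (k + m)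
  have h5 := h.rho_ge_one k
  have h2 : sg m (rho P k) * P (k + m) ≤
      ∑ i ∈ Icc 1 m, (if i ≤ k + m then P (k + m - i) else 0) := by
    unfold sg
    rw [sum_mul]
    refine sum_le_sum fun i hi => ?_
    rw [mem_Icc] at hi
    rw [if_pos (by omega)]
    exact h.chain_ge (by omega) (by linarith) fun j hj _ => h.rho_mono (by omega)
  rw [← h1] at h2
  push_cast at h2
  exact le_of_mul_le_mul_right h2 h0

theorem Rec.upper (h : Rec m P) {n : ℕ} {x : ℝ} (hn : 1 ≤ n) (hx : 1 ≤ x) (hs : sg m x = n)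
    {k : ℕ} (hk : k ≤ n) : P (n - k) ≤ (x * (1 + 2 / n)) ^ k * P n := by
  have hn' : (0 : ℝ) < n := by exact_mod_cast hn
  refine h.chain_le hk fun j hj _ => ?_
  by_contra hcon
  push Not at hcon
  have h1 := sg_scale m hx (by positivity : (0 : ℝ) ≤ 2 / n)
  have h2 := sg_mono (m := m) (by positivity : 0 ≤ x * (1 + 2 / n)) hcon.le
  have h3 := h.sg_le j
  have hj' : (j : ℝ) + 1 ≤ n := by exact_mod_cast hj
  have h4 : sg m x * (1 + 2 / n * ((m : ℝ) + 1) / 2) = n + m + 1 := by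
    rw [hs]; field_simp; ring
  linarith

theorem Rec.rho_lower (h : Rec m P) {n : ℕ} {x : ℝ} (hn : 1 ≤ n) (hx : 1 ≤ x) (hs : sg m x = n)
    {j : ℕ} (hj : 2 * j ≤ n) (hjn : j < n) :
    x * (1 - 4 * j / (n * m)) ≤ rho P (n - (j + 1)) := by
  have hn' : (0 : ℝ) < n := by exact_mod_cast hn
  have hm' : (1 : ℝ) ≤ m := by exact_mod_cast h.1
  set r := rho P (n - (j + 1)) with hr
  have hr1 : 1 ≤ r := h.rho_ge_one _
  rcases le_or_gt x r with hxr | hxr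
  · refine le_trans ?_ hxr
    have : (0 : ℝ) ≤ 4 * j / (n * m) := by positivity
    nlinarith
  · have h1 := h.sg_ge (n - (j + 1))
    rw [← hr] at h1
    have e : ((n - (j + 1) : ℕ) : ℝ) + 1 = n - j := by
      rw [Nat.cast_sub (by omega)]; push_cast; ring
    rw [e] at h1
    set t := x / r - 1 with ht
    have hxt : x = r * (1 + t) := by rw [ht]; field_simp; ring
    have ht0 : 0 ≤ t := by
      rw [ht, sub_nonneg, one_le_div (by linarith)]; exact hxr.le
    have h2 := sg_scale m hr1 ht0
    rw [← hxt, hs] at h2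
    have hj2 : 2 * (j : ℝ) ≤ n := by exact_mod_cast hj
    have h3 : ((n : ℝ) - j) * (1 + t * ((m : ℝ) + 1) / 2) ≤ n :=
      le_trans (mul_le_mul_of_nonneg_right h1 (by positivity)) h2
    have h4 : t * (n * m) ≤ 4 * j := by
      have : 0 ≤ t * m := by positivity
      nlinarith
    have h5 : t ≤ 4 * j / (n * m) := by
      rw [le_div_iff₀ (by positivity)]; exact h4
    calc x * (1 - 4 * j / (n * m)) ≤ x * (1 - t) := by gcongr
      _ = r * (1 - t ^ 2) := by rw [hxt]; ring
      _ ≤ r := by nlinarith [sq_nonneg t]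

theorem Rec.lower (h : Rec m P) {n : ℕ} {x : ℝ} (hn : 1 ≤ n) (hmn : m ≤ n)
    (hx : 1 ≤ x) (hs : sg m x = n)
    {k : ℕ} (hk : k ≤ n) : x ^ k * (1 - 4 * k ^ 2 / (n * m)) * P n ≤ P (n - k) := by
  have hn' : (0 : ℝ) < n := by exact_mod_cast hn
  have hm' : (1 : ℝ) ≤ m := by exact_mod_cast h.1
  have hmn' : (m : ℝ) ≤ n := by exact_mod_cast hmn
  have hPn := h.pos n
  induction k with
  | zero => simp
  | succ k ih =>
    have ih' := ih (by omega)
    have hpos := h.pos (n - (k + 1))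
    rcases le_or_gt (1 : ℝ) (4 * (k : ℝ) ^ 2 / (n * m)) with hbig | hsmall
    · have : (4 * (k : ℝ) ^ 2 / (n * m)) ≤ 4 * ((k + 1 : ℕ) : ℝ) ^ 2 / (n * m) := by
        gcongr
        omega
      have h1 : (1 - 4 * ((k + 1 : ℕ) : ℝ) ^ 2 / (n * m)) ≤ 0 := by linarith
      have h2 : 0 ≤ x ^ (k + 1) * P n := by positivity
      nlinarith
    · rw [div_lt_one (by positivity)] at hsmall
      have hk2 : 2 * k ≤ n := by
        by_contra hcon
        have : (n : ℝ) ≤ 2 * k := by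
          push Not at hcon
          exact_mod_cast hcon.le
        nlinarith
      have h1 := h.rho_lower hn hx hs hk2 (by omega)
      have h3 := h.rho_mul (n - (k + 1))
      have e : n - (k + 1) + 1 = n - k := by omega
      rw [e] at h3
      set A : ℝ := 1 / (n * m) with hA
      have hA0 : 0 ≤ A := by positivity
      have e1 : 4 * (k : ℝ) ^ 2 / (n * m) = 4 * k ^ 2 * A := by rw [hA]; ring
      have e2 : 4 * (k : ℝ) / (n * m) = 4 * k * A := by rw [hA]; ring
      have e3 : 4 * ((k + 1 : ℕ) : ℝ) ^ 2 / (n * m) = 4 * (k + 1) ^ 2 * A := by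
        rw [hA]; push_cast; ring
      have hs1 : 4 * (k : ℝ) ^ 2 * A ≤ 1 := by
        rw [← e1, div_le_one (by positivity)]; exact hsmall.le
      have hs2 : 4 * (k : ℝ) * A ≤ 1 := by
        refine le_trans ?_ hs1
        rcases Nat.eq_zero_or_pos k with rfl | hk0
        · simp
        · have : (1 : ℝ) ≤ k := by exact_mod_cast hk0
          have : (k : ℝ) * A ≤ k ^ 2 * A := by
            apply mul_le_mul_of_nonneg_right _ hA0
            nlinarith
          linarith
      rw [e1] at ih'
      rw [e2] at h1
      rw [e3, ← h3]
      have hx0 : 0 < x := by linarith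
      have hkk : (0 : ℝ) ≤ k := Nat.cast_nonneg k
      calc x ^ (k + 1) * (1 - 4 * ((k : ℝ) + 1) ^ 2 * A) * P n
          ≤ x ^ (k + 1) * ((1 - 4 * k * A) * (1 - 4 * k ^ 2 * A)) * P n := by
            gcongr
            have : 0 ≤ 16 * (k : ℝ) ^ 3 * A ^ 2 := by positivity
            nlinarith [mul_nonneg hkk hA0]
        _ = (x * (1 - 4 * k * A)) * (x ^ k * (1 - 4 * k ^ 2 * A) * P n) := by ring
        _ ≤ rho P (n - (k + 1)) * P (n - k) := by
            refine mul_le_mul h1 ih' ?_ ?_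
            · have : 0 ≤ 1 - 4 * (k : ℝ) ^ 2 * A := by linarith
              positivity
            · linarith [h.rho_ge_one (n - (k + 1))]

theorem Rec.main (h : Rec m P) {n : ℕ} {x : ℝ} (hmn : m ≤ n)
    (hx : 1 ≤ x) (hs : sg m x = n) {k : ℕ} (hk : m ≤ k) :
    |(if k ≤ n then P (n - k) else 0) - x ^ k * P n| ≤
      (2 * Real.exp 2 + 4) * (k : ℝ) ^ 2 / (n * m) * x ^ k * P n := by
  have hn : 1 ≤ n := le_trans h.1 hmn
  have hn' : (0 : ℝ) < n := by exact_mod_cast hn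
  have hm' : (1 : ℝ) ≤ m := by exact_mod_cast h.1
  have hmn' : (m : ℝ) ≤ n := by exact_mod_cast hmn
  have hmk' : (m : ℝ) ≤ k := by exact_mod_cast hk
  have hPn := h.pos n
  have hxk : 0 < x ^ k := by positivity
  have hZ : 0 < x ^ k * P n := by positivity
  have he : 0 < Real.exp 2 := Real.exp_pos 2
  have hB : 0 ≤ (k : ℝ) ^ 2 / (n * m) := by positivity
  split_ifs with hkn
  · have hkn' : (k : ℝ) ≤ n := by exact_mod_cast hkn
    have h1 := h.lower hn hmn hx hs hkn
    have h2 := h.upper hn hx hs hkn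
    have h3 : (1 + 2 / (n : ℝ)) ^ k ≤ 1 + 2 * Real.exp 2 * ((k : ℝ) ^ 2 / (n * m)) := by
      have a1 : (1 + 2 / (n : ℝ)) ^ k ≤ Real.exp (2 * k / n) := by
        have : (1 + 2 / (n : ℝ)) ≤ Real.exp (2 / n) := by
          have := Real.add_one_le_exp (2 / (n : ℝ)); linarith
        calc (1 + 2 / (n : ℝ)) ^ k ≤ (Real.exp (2 / n)) ^ k :=
              pow_le_pow_left₀ (by positivity) this k
          _ = Real.exp (2 * k / n) := by rw [← Real.exp_nat_mul]; congr 1; ring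
      set t : ℝ := 2 * k / n with ht
      have ht0 : 0 ≤ t := by positivity
      have ht2 : t ≤ 2 := by rw [ht, div_le_iff₀ hn']; linarith
      have a2 : Real.exp t ≤ 1 + t * Real.exp 2 := by
        have b1 := Real.add_one_le_exp (-t)
        have b2 : Real.exp (-t) * Real.exp t = 1 := by rw [← Real.exp_add]; simp
        have b3 : Real.exp t ≤ Real.exp 2 := Real.exp_le_exp.mpr ht2
        have b4 := Real.exp_pos t
        nlinarith
      have a3 : t ≤ 2 * ((k : ℝ) ^ 2 / (n * m)) := by
        rw [ht, mul_div_assoc]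
        gcongr 2 * ?_
        rw [div_le_div_iff₀ hn' (by positivity)]
        have : (k : ℝ) * (n * m) ≤ k * (n * k) := by gcongr
        nlinarith
      nlinarith
    rw [abs_le]
    have e1 : (2 * Real.exp 2 + 4) * (k : ℝ) ^ 2 / (n * m) * x ^ k * P n =
      (2 * Real.exp 2 + 4) * ((k : ℝ) ^ 2 / (n * m)) * (x ^ k * P n) := by ring
    have e2 : x ^ k * (1 - 4 * (k : ℝ) ^ 2 / (n * m)) * P n =
      (1 - 4 * ((k : ℝ) ^ 2 / (n * m))) * (x ^ k * P n) := by ring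
    have e3 : (x * (1 + 2 / (n : ℝ))) ^ k * P n = (1 + 2 / (n : ℝ)) ^ k * (x ^ k * P n) := by
      rw [mul_pow]; ring
    rw [e1]
    rw [e2] at h1
    rw [e3] at h2
    have h4 := mul_le_mul_of_nonneg_right h3 hZ.le
    have h5 : 0 ≤ (k : ℝ) ^ 2 / (n * m) * (x ^ k * P n) := by positivity
    constructor
    · nlinarith
    · nlinarith
  · push Not at hkn
    have hkn' : (n : ℝ) ≤ k := by exact_mod_cast hkn.le
    rw [zero_sub, abs_neg, abs_of_pos hZ]
    have h1 : 1 ≤ (k : ℝ) ^ 2 / (n * m) := by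
      rw [one_le_div (by positivity)]
      nlinarith
    have e1 : (2 * Real.exp 2 + 4) * (k : ℝ) ^ 2 / (n * m) * x ^ k * P n =
      (2 * Real.exp 2 + 4) * ((k : ℝ) ^ 2 / (n * m)) * (x ^ k * P n) := by ring
    rw [e1]
    have : 1 ≤ (2 * Real.exp 2 + 4) * ((k : ℝ) ^ 2 / (n * m)) := by nlinarith
    nlinarith

end seq

theorem Pw_Rec (m : ℕ) (hm : 1 ≤ m) : Rec m (fun n => Pw n m) :=
  ⟨hm, Pw_zero m, fun n => Pw_rec n m⟩

end Fri


namespace Fri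
open Finset Polynomial

section poly
variable {F : Type} [Field F] [Fintype F]

theorem monic_finite (n : ℕ) : {f : F[X] | f.Monic ∧ f.natDegree = n}.Finite ∧
    {f : F[X] | f.Monic ∧ f.natDegree = n}.ncard = Fintype.card F ^ n := by
  have e : {f : F[X] // f.Monic ∧ f.natDegree = n} ≃ (Fin n → F) :=
    (monicEquivDegreeLT n).trans (degreeLTEquiv F n).toEquiv
  constructor
  · have : Finite {f : F[X] // f.Monic ∧ f.natDegree = n} := Finite.of_equiv _ e.symm
    exact Set.finite_coe_iff.mp this
  · have : Nat.card {f : F[X] // f.Monic ∧ f.natDegree = n} = Fintype.card F ^ n := by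
      rw [Nat.card_congr e]
      simp
    exact this

/-- Monic polynomials of degree `n` all of whose monic irreducible factors lie in `S`. -/
def Fr (S : Finset F[X]) (n : ℕ) : Set F[X] :=
  {f | f.Monic ∧ f.natDegree = n ∧ ∀ p : F[X], p.Monic → Irreducible p → p ∣ f → p ∈ S}

theorem Fr_finite (S : Finset F[X]) (n : ℕ) : (Fr S n).Finite :=
  (monic_finite n).1.subset fun _ hf => ⟨hf.1, hf.2.1⟩

theorem monic_irr_eq {p P : F[X]} (hp : p.Monic) (hpi : Irreducible p) (hP : P.Monic)
    (hPi : Irreducible P) (h : p ∣ P) : p = P :=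
  eq_of_monic_of_associated hp hP (hpi.associated_of_dvd hPi h)

open Classical in
theorem Fr_insert {S : Finset F[X]} {P : F[X]} (hP : P.Monic) (hPi : Irreducible P) (hPS : P ∉ S)
    (n : ℕ) : (Fr (insert P S) n).ncard =
      (Fr S n).ncard + if P.natDegree ≤ n then (Fr (insert P S) (n - P.natDegree)).ncard else 0 := by
  have hsub : Fr S n ⊆ Fr (insert P S) n := fun f hf =>
    ⟨hf.1, hf.2.1, fun p h1 h2 h3 => mem_insert_of_mem (hf.2.2 p h1 h2 h3)⟩
  have hndvd : ∀ f ∈ Fr (insert P S) n, ¬ P ∣ f → f ∈ Fr S n := by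
    intro f hf hd
    refine ⟨hf.1, hf.2.1, fun p h1 h2 h3 => ?_⟩
    rcases mem_insert.mp (hf.2.2 p h1 h2 h3) with h | h
    · exact absurd (h ▸ h3) hd
    · exact h
  have hdvd : ∀ f ∈ Fr S n, ¬ P ∣ f := fun f hf h => hPS (hf.2.2 P hP hPi h)
  split_ifs with hd
  · have hU : Fr (insert P S) n =
        Fr S n ∪ (fun g => P * g) '' Fr (insert P S) (n - P.natDegree) := by
      ext f
      constructor
      · intro hf
        by_cases h : P ∣ f
        · right
          obtain ⟨g, rfl⟩ := h
          have hg : g.Monic := hP.of_mul_monic_left hf.1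
          refine ⟨g, ⟨hg, ?_, fun p h1 h2 h3 => hf.2.2 p h1 h2 (h3.mul_left P)⟩, rfl⟩
          have := hf.2.1
          rw [hP.natDegree_mul hg] at this
          omega
        · exact Or.inl (hndvd f hf h)
      · rintro (hf | ⟨g, hg, rfl⟩)
        · exact hsub hf
        · refine ⟨hP.mul hg.1, ?_, fun p h1 h2 h3 => ?_⟩
          · change (P * g).natDegree = n
            rw [hP.natDegree_mul hg.1, hg.2.1]; omega
          · rcases h2.prime.dvd_or_dvd h3 with h | h
            · rw [monic_irr_eq h1 h2 hP hPi h]; exact mem_insert_self _ _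
            · exact hg.2.2 p h1 h2 h
    rw [hU, Set.ncard_union_eq ?_ (Fr_finite _ _) ((Fr_finite _ _).image _),
      Set.ncard_image_of_injective _ (mul_right_injective₀ hP.ne_zero)]
    rw [Set.disjoint_left]
    rintro f hf ⟨g, _, rfl⟩
    exact hdvd _ hf (dvd_mul_right _ _)
  · rw [add_zero]
    congr 1
    refine Set.Subset.antisymm (fun f hf => hndvd f hf fun h => hd ?_) hsub
    rw [← hf.2.1]
    exact natDegree_le_of_dvd h hf.1.ne_zero

theorem Fr_empty (n : ℕ) : (Fr (∅ : Finset F[X]) n).ncard = if n = 0 then 1 else 0 := by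
  split_ifs with h
  · subst h
    have : Fr (∅ : Finset F[X]) 0 = {1} := by
      ext f
      simp only [Fr, Set.mem_setOf_eq, Set.mem_singleton_iff]
      constructor
      · rintro ⟨h1, h2, _⟩
        exact h1.natDegree_eq_zero.mp h2
      · rintro rfl
        exact ⟨monic_one, natDegree_one, fun p _ h2 h3 =>
          absurd (isUnit_of_dvd_one h3) h2.not_isUnit⟩
    rw [this, Set.ncard_singleton]
  · have : Fr (∅ : Finset F[X]) n = ∅ := by
      rw [Set.eq_empty_iff_forall_notMem]
      intro f hf
      obtain ⟨p, h1, h2, h3⟩ := exists_monic_irreducible_factor f (fun hu => h (by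
        rw [← hf.2.1]; exact natDegree_eq_zero_of_isUnit hu))
      exact absurd (hf.2.2 p h1 h2 h3) (notMem_empty _)
    rw [this, Set.ncard_empty]

theorem Fr_series (S : Finset F[X]) (hS : ∀ P ∈ S, P.Monic ∧ Irreducible P) :
    (PowerSeries.mk fun n => ((Fr S n).ncard : ℝ)) = ∏ P ∈ S, geoS P.natDegree := by
  classical
  induction S using Finset.induction_on with
  | empty =>
    ext n
    rw [prod_empty, PowerSeries.coeff_mk, Fr_empty, PowerSeries.coeff_one]
    split_ifs <;> simp
  | insert P S hPS ih =>
    have hP := hS P (mem_insert_self _ _)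
    rw [prod_insert hPS, ← ih fun Q hQ => hS Q (mem_insert_of_mem hQ)]
    have hd : 0 < P.natDegree := hP.2.natDegree_pos
    set A := PowerSeries.mk fun n => ((Fr (insert P S) n).ncard : ℝ) with hA
    set B := PowerSeries.mk fun n => ((Fr S n).ncard : ℝ) with hB
    have h1 : A = B + A * PowerSeries.X ^ P.natDegree := by
      ext n
      rw [map_add, PowerSeries.coeff_mul_X_pow', hA, hB, PowerSeries.coeff_mk,
        PowerSeries.coeff_mk, PowerSeries.coeff_mk, Fr_insert hP.1 hP.2 hPS n]
      push_cast
      rfl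
    have h3 : geoS P.natDegree * (1 - PowerSeries.X ^ P.natDegree) = 1 := by
      rw [mul_sub, geoS_mul hd]; ring
    linear_combination (geoS P.natDegree) * h1 - A * h3

/-- The finite set of monic irreducible polynomials of degree at most `m`. -/
theorem irr_finite (m : ℕ) :
    {p : F[X] | p.Monic ∧ Irreducible p ∧ p.natDegree ≤ m}.Finite := by
  refine ((Set.finite_Iic m).biUnion (t := fun n => {f : F[X] | f.Monic ∧ f.natDegree = n})
    (fun n _ => (monic_finite n).1)).subset ?_
  intro p hp
  simp only [Set.mem_iUnion]
  exact ⟨p.natDegree, hp.2.2, hp.1, rfl⟩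

/-- monic irreducibles of degree at most `m` -/
noncomputable def Irr (F : Type) [Field F] [Fintype F] (m : ℕ) : Finset F[X] :=
  (irr_finite (F := F) m).toFinset

theorem mem_Irr {m : ℕ} {p : F[X]} :
    p ∈ Irr F m ↔ p.Monic ∧ Irreducible p ∧ p.natDegree ≤ m := by
  simp [Irr]

/-- number of monic irreducibles of degree `d` -/
noncomputable def irrCount (F : Type) [Field F] [Fintype F] (m d : ℕ) : ℕ :=
  ((Irr F m).filter fun p => p.natDegree = d).card

theorem polyProb_eq (n m : ℕ) :
    polyProb F n m = ((Fr (Irr F m) n).ncard : ℝ) / (Fintype.card F : ℝ) ^ n := by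
  unfold polyProb
  congr 2
  change _ = Nat.card (Fr (Irr F m) n)
  refine Nat.card_congr (Equiv.subtypeEquivRight fun f => ?_)
  simp only [Fr, Set.mem_setOf_eq, mem_Irr]
  constructor
  · rintro ⟨h1, h2, h3⟩
    exact ⟨h1, h2, fun p a b c => ⟨a, b, h3 p a b c⟩⟩
  · rintro ⟨h1, h2, h3⟩
    exact ⟨h1, h2, fun p a b c => (h3 p a b c).2.2⟩

theorem Fr_small {n m : ℕ} (h : n ≤ m) : (Fr (Irr F m) n).ncard = Fintype.card F ^ n := by
  rw [← (monic_finite (F := F) n).2]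
  congr 1
  ext f
  simp only [Fr, Set.mem_setOf_eq, mem_Irr]
  constructor
  · rintro ⟨h1, h2, _⟩
    exact ⟨h1, h2⟩
  · rintro ⟨h1, h2⟩
    exact ⟨h1, h2, fun p a b c => ⟨a, b, by
      have := natDegree_le_of_dvd c h1.ne_zero
      omega⟩⟩

theorem deg_mem {m : ℕ} {p : F[X]} (hp : p ∈ Irr F m) : p.natDegree ∈ Icc 1 m := by
  rw [mem_Irr] at hp
  rw [mem_Icc]
  exact ⟨hp.2.1.natDegree_pos, hp.2.2⟩

/-- The coefficients `c_j = ∑_{d ∣ j, d ≤ m} d π(d)`. -/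
noncomputable def cc (F : Type) [Field F] [Fintype F] (m j : ℕ) : ℝ :=
  if j = 0 then 0 else ∑ d ∈ Icc 1 m, if d ∣ j then (d : ℝ) * irrCount F m d else 0

theorem theta_Fr (m : ℕ) :
    theta (PowerSeries.mk fun n => ((Fr (Irr F m) n).ncard : ℝ)) =
      (PowerSeries.mk fun n => ((Fr (Irr F m) n).ncard : ℝ)) * PowerSeries.mk (cc F m) := by
  have hS : ∀ P ∈ Irr F m, P.Monic ∧ Irreducible P := fun P hP =>
    ⟨(mem_Irr.mp hP).1, (mem_Irr.mp hP).2.1⟩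
  rw [Fr_series _ hS, theta_prod _ _ _ fun P hP => geoS_theta (hS P hP).2.natDegree_pos]
  congr 1
  ext j
  rw [map_sum, PowerSeries.coeff_mk, cc]
  have e : ∀ P ∈ Irr F m, PowerSeries.coeff j (PowerSeries.C ((P.natDegree : ℕ) : ℝ) *
      (geoS P.natDegree - 1)) =
      if j = 0 then 0 else if P.natDegree ∣ j then (P.natDegree : ℝ) else 0 := by
    intro P _
    rw [PowerSeries.coeff_C_mul, map_sub, PowerSeries.coeff_one, geoS, PowerSeries.coeff_mk]
    split_ifs with h1 h2 h3 <;> simp_all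
  rw [sum_congr rfl e]
  split_ifs with h
  · simp
  · rw [← sum_fiberwise_of_maps_to (fun P hP => deg_mem hP)]
    refine sum_congr rfl fun d _ => ?_
    rw [sum_congr rfl (g := fun _ => if d ∣ j then (d : ℝ) else 0) fun P hP => by
      rw [(mem_filter.mp hP).2]]
    rw [sum_const, irrCount, nsmul_eq_mul]
    split_ifs <;> ring

theorem cc_small {m j : ℕ} (hj : 1 ≤ j) (hjm : j ≤ m) : cc F m j = (Fintype.card F : ℝ) ^ j := by
  obtain ⟨n, rfl⟩ : ∃ n, j = n + 1 := ⟨j - 1, by omega⟩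
  have h1 := congrArg (PowerSeries.coeff n) (theta_Fr (F := F) m)
  have h2 := congrArg (PowerSeries.coeff (n + 1)) (theta_Fr (F := F) m)
  rw [coeff_theta, PowerSeries.coeff_mul] at h1 h2
  rw [Finset.Nat.sum_antidiagonal_succ] at h2
  simp only [PowerSeries.coeff_mk] at h1 h2
  rw [Fr_small (by omega : n ≤ m)] at h1
  rw [Fr_small hjm, Fr_small (by omega : 0 ≤ m)] at h2
  have h3 : ∑ x ∈ antidiagonal n, ((Fr (Irr F m) (x.1 + 1)).ncard : ℝ) * cc F m x.2 =
      (Fintype.card F : ℝ) * ∑ x ∈ antidiagonal n, ((Fr (Irr F m) x.1).ncard : ℝ) * cc F m x.2 := by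
    rw [mul_sum]
    refine sum_congr rfl fun x hx => ?_
    rw [HasAntidiagonal.mem_antidiagonal] at hx
    rw [Fr_small (by omega : x.1 + 1 ≤ m), Fr_small (by omega : x.1 ≤ m)]
    push_cast
    ring
  rw [h3, ← h1] at h2
  push_cast at h2
  linear_combination -h2

theorem cc_nonneg (m j : ℕ) : 0 ≤ cc F m j := by
  unfold cc
  split_ifs
  · exact le_rfl
  · refine sum_nonneg fun d _ => ?_
    split_ifs
    · positivity
    · exact le_rfl

theorem irrCount_le {m d : ℕ} (hd : d ∈ Icc 1 m) :
    (d : ℝ) * irrCount F m d ≤ (Fintype.card F : ℝ) ^ d := by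
  have hd' := mem_Icc.mp hd
  rw [← cc_small hd'.1 hd'.2, cc, if_neg (by omega)]
  have := single_le_sum (f := fun e => if e ∣ d then (e : ℝ) * irrCount F m e else 0)
    (fun e _ => by split_ifs <;> positivity) hd
  simpa using this

theorem card_two_le : (2 : ℝ) ≤ Fintype.card F := by
  have : 1 < Fintype.card F := Fintype.one_lt_card
  exact_mod_cast this

theorem geom_sum_le {q : ℝ} (hq : 2 ≤ q) (M : ℕ) : ∑ d ∈ Icc 1 M, q ^ d ≤ 2 * q ^ M := by
  induction M with
  | zero => simp
  | succ M ih =>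
    rw [sum_Icc_succ_top (by omega), pow_succ]
    have : 0 < q ^ M := by positivity
    nlinarith

theorem cc_large {m j : ℕ} (hj : m < j) : cc F m j ≤ 2 * (Fintype.card F : ℝ) ^ (j / 2) := by
  have hq := card_two_le (F := F)
  rw [cc, if_neg (by omega)]
  calc ∑ d ∈ Icc 1 m, (if d ∣ j then (d : ℝ) * irrCount F m d else 0)
      ≤ ∑ d ∈ Icc 1 m, (if d ≤ j / 2 then (Fintype.card F : ℝ) ^ d else 0) := by
        refine sum_le_sum fun d hd => ?_
        have hd' := mem_Icc.mp hd
        split_ifs with h1 h2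
        · exact irrCount_le hd
        · exfalso
          obtain ⟨k, rfl⟩ := h1
          apply h2
          have : 2 ≤ k := by
            by_contra hk
            have : k ≤ 1 := by omega
            nlinarith
          rw [Nat.le_div_iff_mul_le (by norm_num)]
          nlinarith
        · positivity
        · exact le_rfl
    _ = ∑ d ∈ (Icc 1 m).filter (fun d => d ≤ j / 2), (Fintype.card F : ℝ) ^ d := by
        rw [sum_filter]
    _ ≤ ∑ d ∈ Icc 1 (j / 2), (Fintype.card F : ℝ) ^ d := by
        refine sum_le_sum_of_subset_of_nonneg ?_ fun _ _ _ => by positivity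
        intro d hd
        rw [mem_filter, mem_Icc] at hd
        rw [mem_Icc]
        exact ⟨hd.1.1, hd.2⟩
    _ ≤ _ := geom_sum_le hq _

/-- normalized coefficients -/
noncomputable def ee (F : Type) [Field F] [Fintype F] (m j : ℕ) : ℝ :=
  cc F m j / (Fintype.card F : ℝ) ^ j

theorem theta_poly (m : ℕ) :
    theta (PowerSeries.mk fun n => polyProb F n m) =
      (PowerSeries.mk fun n => polyProb F n m) * PowerSeries.mk (ee F m) := by
  have hq := card_two_le (F := F)
  ext n
  have h := congrArg (PowerSeries.coeff n) (theta_Fr (F := F) m)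
  rw [coeff_theta, PowerSeries.coeff_mul] at h ⊢
  simp only [PowerSeries.coeff_mk] at h ⊢
  rw [polyProb_eq, mul_div_assoc', h, sum_div]
  refine sum_congr rfl fun p hp => ?_
  rw [HasAntidiagonal.mem_antidiagonal] at hp
  rw [polyProb_eq, ee, ← hp, pow_add]
  field_simp

theorem polyProb_zero (m : ℕ) : polyProb F 0 m = 1 := by
  rw [polyProb_eq, Fr_small (by omega)]
  simp

theorem polyProb_nonneg (n m : ℕ) : 0 ≤ polyProb F n m := by
  rw [polyProb_eq]; positivity

theorem FqFun_eq (m : ℕ) (x : ℝ) :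
    FqFun F m x = ∏ p ∈ Irr F m, (1 - (x / (Fintype.card F : ℝ)) ^ p.natDegree)⁻¹ := by
  unfold FqFun
  rw [finprod_mem_eq_finite_toFinset_prod _ (irr_finite (F := F) m)]
  rfl

theorem FqFun_eq' (m : ℕ) (x : ℝ) :
    FqFun F m x = ∏ d ∈ Icc 1 m, ((1 - (x / (Fintype.card F : ℝ)) ^ d)⁻¹) ^ irrCount F m d := by
  rw [FqFun_eq, ← prod_fiberwise_of_maps_to (fun P hP => deg_mem hP)]
  refine prod_congr rfl fun d _ => ?_
  rw [prod_congr rfl (g := fun _ => (1 - (x / (Fintype.card F : ℝ)) ^ d)⁻¹) fun P hP => by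
      rw [(mem_filter.mp hP).2]]
  rw [prod_const, irrCount]

theorem poly_ev (m : ℕ) {x : ℝ} (hx : 0 ≤ x) (hxq : x < Fintype.card F) :
    Ev (PowerSeries.mk fun n => polyProb F n m) x (FqFun F m x) := by
  have hq := card_two_le (F := F)
  have hS : ∀ P ∈ Irr F m, P.Monic ∧ Irreducible P := fun P hP =>
    ⟨(mem_Irr.mp hP).1, (mem_Irr.mp hP).2.1⟩
  have h : Ev (PowerSeries.mk fun n => ((Fr (Irr F m) n).ncard : ℝ)) (x / Fintype.card F)
      (FqFun F m x) := by
    rw [Fr_series _ hS, FqFun_eq]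
    refine Ev.prod _ _ _ _ fun P hP => geoS_ev (hS P hP).2.natDegree_pos (by positivity) ?_
    rw [div_lt_one (by linarith)]
    exact hxq
  unfold Ev at h ⊢
  convert h using 2 with n
  rw [PowerSeries.coeff_mk, PowerSeries.coeff_mk, polyProb_eq, div_pow]
  ring

end poly
end Fri


namespace Fri
open PowerSeries Finset

/-- Solution of `theta G = G * mk e`. -/
noncomputable def gg (e : ℕ → ℝ) : ℕ → ℝ
  | 0 => 1
  | k + 1 => (∑ i : Fin (k + 1), gg e i * e (k + 1 - i)) / ((k : ℝ) + 1)

theorem gg_zero (e : ℕ → ℝ) : gg e 0 = 1 := by rw [gg]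

theorem gg_succ (e : ℕ → ℝ) (k : ℕ) :
    gg e (k + 1) = (∑ i ∈ range (k + 1), gg e i * e (k + 1 - i)) / ((k : ℝ) + 1) := by
  rw [gg, Finset.sum_range]

theorem gg_theta (e : ℕ → ℝ) (h0 : e 0 = 0) :
    theta (mk (gg e)) = mk (gg e) * mk e := by
  ext n
  rw [coeff_theta, coeff_mul]
  simp only [coeff_mk]
  rw [Nat.sum_antidiagonal_eq_sum_range_succ_mk]
  rcases n with _ | k
  · simp [h0]
  · rw [sum_range_succ, gg_succ]
    simp only [Nat.sub_self, h0, mul_zero, add_zero]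
    push_cast
    have : (k : ℝ) + 1 ≠ 0 := by positivity
    field_simp

theorem gg_nonneg (e : ℕ → ℝ) (he : ∀ j, 0 ≤ e j) (k : ℕ) : 0 ≤ gg e k := by
  induction k using Nat.strong_induction_on with
  | _ k ih =>
    rcases k with _ | k
    · rw [gg_zero]; norm_num
    · rw [gg_succ]
      refine div_nonneg (sum_nonneg fun i hi => mul_nonneg (ih i ?_) (he _)) (by positivity)
      rw [mem_range] at hi; omega

theorem gg_small (e : ℕ → ℝ) (m : ℕ) (he : ∀ j, j ≤ m → e j = 0) (k : ℕ) (hk : 1 ≤ k)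
    (hkm : k ≤ m) : gg e k = 0 := by
  obtain ⟨k, rfl⟩ : ∃ j, k = j + 1 := ⟨k - 1, by omega⟩
  rw [gg_succ, sum_eq_zero, zero_div]
  intro i hi
  rw [he _ (by omega), mul_zero]

/-- The tail coefficients. -/
noncomputable def hh (F : Type) [Field F] [Fintype F] (m j : ℕ) : ℝ :=
  if j ≤ m then 0 else ee F m j

section
variable {F : Type} [Field F] [Fintype F]

theorem ee_nonneg (m j : ℕ) : 0 ≤ ee F m j := div_nonneg (cc_nonneg m j) (by positivity)

theorem hh_nonneg (m j : ℕ) : 0 ≤ hh F m j := by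
  unfold hh; split_ifs
  · exact le_rfl
  · exact ee_nonneg m j

theorem hh_small {m j : ℕ} (h : j ≤ m) : hh F m j = 0 := if_pos h

theorem Pw_theta (m : ℕ) : theta (mk fun n => Pw n m) =
    (mk fun n => Pw n m) * ∑ i ∈ Icc 1 m, X ^ i := by
  rw [Pw_series]
  exact theta_prod _ _ _ fun i hi => expS_theta (by rw [mem_Icc] at hi; omega)

theorem ee_split (m : ℕ) : mk (ee F m) = mk (hh F m) + ∑ i ∈ Icc 1 m, (X : PowerSeries ℝ) ^ i := by
  have hq := card_two_le (F := F)
  ext j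
  rw [map_add, map_sum]
  simp only [coeff_mk, coeff_X_pow]
  rw [sum_ite_eq, hh]
  by_cases h0 : j = 0
  · subst h0; simp [ee, cc]
  by_cases h : j ≤ m
  · rw [if_pos h, if_pos (mem_Icc.mpr ⟨by omega, h⟩), ee, cc_small (by omega) h, zero_add,
      div_self (by positivity)]
  · rw [if_neg h, if_neg (by rw [mem_Icc]; omega), add_zero]

theorem poly_conv (m : ℕ) : (mk fun n => polyProb F n m) =
    mk (gg (hh F m)) * mk fun n => Pw n m := by
  refine theta_unique (L := mk (ee F m)) (by simp [ee, cc]) ?_ (theta_poly m) ?_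
  · rw [coeff_mul]
    simp [polyProb_zero, gg_zero, Pw_zero]
  · rw [theta_mul, gg_theta _ (hh_small (by omega)), Pw_theta, ee_split]
    ring

theorem polyProb_sum (n m : ℕ) : polyProb F n m =
    ∑ k ∈ range (n + 1), gg (hh F m) k * Pw (n - k) m := by
  have := congrArg (coeff n) (poly_conv (F := F) m)
  rw [coeff_mul] at this
  simp only [coeff_mk] at this
  rw [this, Nat.sum_antidiagonal_eq_sum_range_succ_mk]

theorem gg_le (n m : ℕ) (hm : 1 ≤ m) : gg (hh F m) n ≤ polyProb F n m := by
  rw [polyProb_sum]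
  have := single_le_sum (f := fun k => gg (hh F m) k * Pw (n - k) m)
    (fun k _ => mul_nonneg (gg_nonneg _ (hh_nonneg m) k) ((Pw_Rec m hm).pos (n - k)).le)
    (mem_range.mpr (Nat.lt_succ_self n))
  simpa [Pw_zero] using this

theorem Gq_ev (m : ℕ) (hm : 1 ≤ m) {x : ℝ} (hx : 0 ≤ x) (hxq : x < Fintype.card F) :
    Ev (mk (gg (hh F m))) x (Gq F m x) := by
  have h1 := poly_ev (F := F) m hx hxq
  have hs : Summable (fun n => coeff n (mk (gg (hh F m))) * x ^ n) := by
    refine Summable.of_nonneg_of_le (fun n => ?_) (fun n => ?_) h1.summable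
    · rw [coeff_mk]
      exact mul_nonneg (gg_nonneg _ (hh_nonneg m) n) (by positivity)
    · rw [coeff_mk, coeff_mk]
      exact mul_le_mul_of_nonneg_right (gg_le n m hm) (by positivity)
  have h2 : Ev (mk (gg (hh F m))) x (∑' n, coeff n (mk (gg (hh F m))) * x ^ n) := hs.hasSum
  have h3 := h2.mul (Pw_ev m x)
  rw [← poly_conv] at h3
  have h4 := h1.unique h3
  rw [Gq, h4, mul_assoc, ← Real.exp_add, add_neg_cancel, Real.exp_zero, mul_one]
  exact h2

theorem gg_second {e : ℕ → ℝ} (h0 : e 0 = 0) {x G H1 H2 : ℝ} (hG : Ev (mk (gg e)) x G)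
    (h1 : Ev (mk e) x H1) (h2 : Ev (theta (mk e)) x H2) :
    HasSum (fun k : ℕ => (k : ℝ) ^ 2 * gg e k * x ^ k) (G * (H1 ^ 2 + H2)) := by
  have ht : theta (theta (mk (gg e))) = mk (gg e) * mk e * mk e + mk (gg e) * theta (mk e) := by
    rw [gg_theta e h0, theta_mul, gg_theta e h0]
  have := ((hG.mul h1).mul h1).add (hG.mul h2)
  rw [← ht] at this
  unfold Ev at this
  convert this using 1
  · funext k
    rw [coeff_theta, coeff_theta, coeff_mk]
    ring
  · ring

theorem error_bound {n m : ℕ} (hm : 1 ≤ m) (hmn : m ≤ n) {x H1 H2 : ℝ} (hx : 1 ≤ x)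
    (hxq : x < Fintype.card F) (hs : sg m x = n)
    (h1 : Ev (mk (hh F m)) x H1) (h2 : Ev (theta (mk (hh F m))) x H2) :
    |polyProb F n m / permProb n m - Gq F m x| ≤
      (2 * Real.exp 2 + 4) / (n * m) * (Gq F m x * (H1 ^ 2 + H2)) := by
  have hP := (Pw_Rec m hm).pos n
  have hR := Pw_Rec m hm
  have hG := Gq_ev (F := F) m hm (by linarith) hxq
  have hS := gg_second (hh_small (Nat.zero_le m)) hG h1 h2
  set g := gg (hh F m) with hg
  have hg0 : ∀ k, 0 ≤ g k := gg_nonneg _ (hh_nonneg m)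
  rw [permProb_eq n m hm]
  have e1 : HasSum (fun k => g k * (if k ≤ n then Pw (n - k) m else 0)) (polyProb F n m) := by
    rw [polyProb_sum]
    have := hasSum_sum_of_ne_finset_zero (L := SummationFilter.unconditional ℕ) (f := fun k => g k * (if k ≤ n then Pw (n - k) m else 0))
      (s := range (n + 1)) (fun k hk => by
        rw [mem_range] at hk
        rw [if_neg (by omega), mul_zero])
    convert this using 1
    refine sum_congr rfl fun k hk => ?_
    rw [mem_range] at hk
    rw [if_pos (by omega)]
  have e2 : HasSum (fun k => g k * (x ^ k * Pw n m)) (Gq F m x * Pw n m) := by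
    have := HasSum.mul_right (Pw n m) hG
    have e : (fun k => g k * (x ^ k * Pw n m)) =
        fun k => coeff k (PowerSeries.mk g) * x ^ k * Pw n m := by
      funext k
      rw [coeff_mk]; ring
    rw [e]
    exact this
  have e3 := e1.sub e2
  have e4 := hS.mul_left ((2 * Real.exp 2 + 4) / (n * m) * Pw n m)
  have key : ∀ k, ‖g k * (if k ≤ n then Pw (n - k) m else 0) - g k * (x ^ k * Pw n m)‖ ≤
      (2 * Real.exp 2 + 4) / (n * m) * Pw n m * ((k : ℝ) ^ 2 * g k * x ^ k) := by
    intro k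
    rw [← mul_sub, norm_mul, Real.norm_eq_abs, Real.norm_eq_abs, abs_of_nonneg (hg0 k)]
    by_cases hk : m ≤ k
    · have := mul_le_mul_of_nonneg_left (hR.main hmn hx hs hk) (hg0 k)
      refine this.trans (le_of_eq ?_)
      ring
    · by_cases hk0 : k = 0
      · subst hk0; simp
      · have : g k = 0 := gg_small _ m (fun j hj => hh_small hj) k (by omega) (by omega)
        simp [this]
  have e5 := tsum_of_norm_bounded e4 key
  rw [e3.tsum_eq, Real.norm_eq_abs] at e5
  have : polyProb F n m / Pw n m - Gq F m x = (polyProb F n m - Gq F m x * Pw n m) / Pw n m := by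
    field_simp
  rw [this, abs_div, abs_of_pos hP, div_le_iff₀ hP]
  refine e5.trans (le_of_eq ?_)
  ring

end
end Fri


namespace Fri
open PowerSeries Finset

theorem summable_half {r : ℝ} (h0 : 0 < r) (h1 : r < 1) :
    Summable fun t : ℕ => (1 + (t : ℝ)) * r ^ (t / 2) := by
  set s := Real.sqrt r with hs
  have hs0 : 0 < s := Real.sqrt_pos.mpr h0
  have hs2 : s ^ 2 = r := Real.sq_sqrt h0.le
  have hs1 : s < 1 := by
    rw [hs, Real.sqrt_lt' (by norm_num)]; simpa using h1
  have a1 : Summable fun t : ℕ => s ^ t := summable_geometric_of_lt_one hs0.le hs1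
  have a2 : Summable fun t : ℕ => (t : ℝ) ^ 1 * s ^ t :=
    summable_pow_mul_geometric_of_norm_lt_one 1 (by rwa [Real.norm_eq_abs, abs_of_pos hs0])
  refine Summable.of_nonneg_of_le (fun t => by positivity) (fun t => ?_)
    ((a1.add a2).mul_left s⁻¹)
  have h : r ^ (t / 2) ≤ s⁻¹ * s ^ t := by
    rw [inv_mul_eq_div, le_div_iff₀ hs0, ← hs2, ← pow_mul, ← pow_succ]
    exact pow_le_pow_of_le_one hs0.le hs1.le (by omega)
  calc (1 + (t : ℝ)) * r ^ (t / 2) ≤ (1 + (t : ℝ)) * (s⁻¹ * s ^ t) := by gcongr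
    _ = _ := by ring

/-- The constant `K2`. -/
noncomputable def K2 (r : ℝ) : ℝ := ∑' t : ℕ, (1 + (t : ℝ)) * r ^ (t / 2)

theorem K2_pos {r : ℝ} (h0 : 0 < r) (h1 : r < 1) : 0 < K2 r :=
  (summable_half h0 h1).tsum_pos (fun t => by positivity) 0 (by simp)

theorem tail_sum {r : ℝ} (h0 : 0 < r) (h1 : r < 1) (f : ℕ → ℝ) (m : ℕ) (c : ℝ)
    (hf : ∀ j, 0 ≤ f j) (hfm : ∀ j, j ≤ m → f j = 0)
    (hb : ∀ t, f (t + (m + 1)) ≤ c * ((1 + (t : ℝ)) * r ^ (t / 2))) :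
    ∃ S, HasSum f S ∧ 0 ≤ S ∧ S ≤ c * K2 r := by
  have hK := (summable_half h0 h1).mul_left c
  have hs : Summable fun t => f (t + (m + 1)) :=
    Summable.of_nonneg_of_le (fun t => hf _) hb hK
  have hs' : Summable f := (summable_nat_add_iff (m + 1)).mp hs
  refine ⟨∑' j, f j, hs'.hasSum, tsum_nonneg hf, ?_⟩
  rw [← hs'.sum_add_tsum_nat_add (m + 1), sum_eq_zero, zero_add, K2, ← tsum_mul_left]
  · exact hs.tsum_le_tsum hb hK
  · intro j hj
    rw [mem_range] at hj
    exact hfm j (by omega)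

section
variable {F : Type} [Field F] [Fintype F]

theorem hh_bound {m t : ℕ} {x r : ℝ} (hx : 1 ≤ x) (hr1 : r < 1)
    (hxr : x ^ 2 / Fintype.card F ≤ r) :
    hh F m (t + (m + 1)) * x ^ (t + (m + 1)) ≤
      2 * (x ^ 2 / Fintype.card F) ^ ((m + 2) / 2) * r ^ (t / 2) := by
  have hq := card_two_le (F := F)
  set q : ℝ := (Fintype.card F : ℝ) with hqd
  set j := t + (m + 1) with hj
  have hq0 : 0 < q := by linarith
  have hx0 : 0 < x := by linarith
  have hη0 : 0 < x ^ 2 / q := by positivity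
  have hη1 : x ^ 2 / q ≤ 1 := by linarith
  rw [hh, if_neg (by omega), ee]
  have h1 := cc_large (F := F) (m := m) (j := j) (by omega)
  rw [← hqd] at h1 ⊢
  have e1 : q ^ j = q ^ (j / 2) * q ^ ((j + 1) / 2) := by
    rw [← pow_add]; congr 1; omega
  have e2 : x ^ j ≤ (x ^ 2) ^ ((j + 1) / 2) := by
    rw [← pow_mul]
    exact pow_le_pow_right₀ hx (by omega)
  calc cc F m j / q ^ j * x ^ j ≤ 2 * q ^ (j / 2) / q ^ j * (x ^ 2) ^ ((j + 1) / 2) := by gcongr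
    _ = 2 * (x ^ 2 / q) ^ ((j + 1) / 2) := by
        rw [e1, div_pow]; field_simp
    _ ≤ 2 * (x ^ 2 / q) ^ ((m + 2) / 2 + t / 2) := by
        refine mul_le_mul_of_nonneg_left ?_ (by norm_num)
        exact pow_le_pow_of_le_one hη0.le hη1 (by omega)
    _ = 2 * (x ^ 2 / q) ^ ((m + 2) / 2) * (x ^ 2 / q) ^ (t / 2) := by rw [pow_add]; ring
    _ ≤ _ := by gcongr

theorem H_bounds {m : ℕ} (hm : 1 ≤ m) {x r : ℝ} (hx : 1 ≤ x) (hr0 : 0 < r) (hr1 : r < 1)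
    (hxr : x ^ 2 / Fintype.card F ≤ r) :
    ∃ H1 H2, Ev (mk (hh F m)) x H1 ∧ Ev (theta (mk (hh F m))) x H2 ∧ 0 ≤ H1 ∧
      H1 ≤ 2 * (x ^ 2 / Fintype.card F) ^ ((m + 2) / 2) * K2 r ∧
      H2 ≤ 4 * m * (x ^ 2 / Fintype.card F) ^ ((m + 2) / 2) * K2 r := by
  have hx0 : 0 < x := by linarith
  have hm' : (1 : ℝ) ≤ m := by exact_mod_cast hm
  have hb := fun t => hh_bound (F := F) (m := m) (t := t) hx hr1 hxr
  set w := (x ^ 2 / (Fintype.card F : ℝ)) ^ ((m + 2) / 2) with hw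
  have hw0 : 0 ≤ w := by positivity
  obtain ⟨H1, a1, a2, a3⟩ := tail_sum hr0 hr1 (fun j => coeff j (mk (hh F m)) * x ^ j) m (2 * w)
    (fun j => by
      rw [coeff_mk]; exact mul_nonneg (hh_nonneg m j) (by positivity))
    (fun j hj => by rw [coeff_mk, hh_small hj, zero_mul])
    (fun t => by
      rw [coeff_mk]
      refine (hb t).trans ?_
      refine mul_le_mul_of_nonneg_left ?_ (by positivity)
      have : 0 ≤ r ^ (t / 2) := by positivity
      have : 0 ≤ (t : ℝ) := by positivity
      nlinarith)
  obtain ⟨H2, b1, b2, b3⟩ := tail_sum hr0 hr1 (fun j => coeff j (theta (mk (hh F m))) * x ^ j) m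
    (4 * m * w)
    (fun j => by
      rw [coeff_theta, coeff_mk]
      exact mul_nonneg (mul_nonneg (by positivity) (hh_nonneg m j)) (by positivity))
    (fun j hj => by rw [coeff_theta, coeff_mk, hh_small hj, mul_zero, zero_mul])
    (fun t => by
      rw [coeff_theta, coeff_mk, mul_assoc]
      have h1 : ((t + (m + 1) : ℕ) : ℝ) ≤ 2 * m * (1 + t) := by
        push_cast
        have : 0 ≤ (t : ℝ) := by positivity
        nlinarith
      have h2 : 0 ≤ hh F m (t + (m + 1)) * x ^ (t + (m + 1)) :=
        mul_nonneg (hh_nonneg m _) (by positivity)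
      calc _ ≤ (2 * m * (1 + t)) * (2 * w * r ^ (t / 2)) := by
            exact mul_le_mul h1 (hb t) h2 (by positivity)
        _ = _ := by ring)
  exact ⟨H1, H2, a1, b1, a2, a3, b3⟩

theorem Gq_le {m : ℕ} {x r : ℝ} (hx : 1 ≤ x) (hr1 : r < 1)
    (hxr : x ^ 2 / Fintype.card F ≤ r) :
    0 ≤ Gq F m x ∧ Gq F m x ≤ Real.exp (1 / (1 - r) * (1 / (1 - r))) := by
  have hq := card_two_le (F := F)
  have hI := fun d (hd : d ∈ Icc 1 m) => irrCount_le (F := F) hd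
  rw [Gq, FqFun_eq']
  set q : ℝ := (Fintype.card F : ℝ) with hqd
  have hx0 : 0 < x := by linarith
  have hq0 : 0 < q := by linarith
  have hr' : 0 < 1 - r := by linarith
  have hr0 : 0 < r := lt_of_lt_of_le (by positivity) hxr
  have hxq : x / q ≤ r := le_trans (by gcongr; nlinarith) hxr
  have ht : ∀ d ∈ Icc 1 m, (x / q) ^ d ≤ r := by
    intro d hd
    rw [mem_Icc] at hd
    calc (x / q) ^ d ≤ r ^ d := by gcongr
      _ ≤ r ^ 1 := pow_le_pow_of_le_one hr0.le hr1.le hd.1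
      _ = r := pow_one r
  have hterm : ∀ d ∈ Icc 1 m, ((1 - (x / q) ^ d)⁻¹) ^ irrCount F m d ≤
      Real.exp (x ^ d / d + 1 / (1 - r) * r ^ d) := by
    intro d hd
    have htd := ht d hd
    have hd1 : (1 : ℝ) ≤ d := by exact_mod_cast (mem_Icc.mp hd).1
    set T := (x / q) ^ d with hT
    have hT0 : 0 < T := by positivity
    have h1 : (1 - T)⁻¹ ≤ Real.exp (T + 1 / (1 - r) * T ^ 2) := by
      have : 0 < 1 - T := by linarith
      have e : (1 - T)⁻¹ = 1 + T + 1 / (1 - T) * T ^ 2 := by field_simp; ring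
      have h2 : 1 / (1 - T) ≤ 1 / (1 - r) := by gcongr
      have h3 := Real.add_one_le_exp (T + 1 / (1 - r) * T ^ 2)
      have h4 := mul_le_mul_of_nonneg_right h2 (sq_nonneg T)
      rw [e]; linarith
    have h1' : 0 ≤ (1 - T)⁻¹ := by
      rw [inv_nonneg]; linarith
    calc _ ≤ (Real.exp (T + 1 / (1 - r) * T ^ 2)) ^ irrCount F m d := by gcongr
      _ = Real.exp (irrCount F m d * T + 1 / (1 - r) * (irrCount F m d * T ^ 2)) := by
          rw [← Real.exp_nat_mul]; congr 1; ring
      _ ≤ _ := by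
        have hN : (irrCount F m d : ℝ) ≤ q ^ d / d := by
          rw [le_div_iff₀ (by linarith), mul_comm]; exact hI d hd
        have e1 : (irrCount F m d : ℝ) * T ≤ x ^ d / d := by
          calc _ ≤ q ^ d / d * T := by gcongr
            _ = _ := by rw [hT, div_pow]; field_simp
        have e2 : (irrCount F m d : ℝ) * T ^ 2 ≤ r ^ d := by
          calc _ ≤ q ^ d / d * T ^ 2 := by gcongr
            _ = (x ^ 2 / q) ^ d / d := by
                have e : (x ^ 2 / q) = x / q * (x / q) * q := by field_simp
                rw [e, mul_pow, mul_pow, ← hT]; ring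
            _ ≤ (x ^ 2 / q) ^ d / 1 := by gcongr
            _ ≤ r ^ d := by rw [div_one]; gcongr
        gcongr
  constructor
  · refine mul_nonneg (prod_nonneg fun d hd => pow_nonneg ?_ _) (Real.exp_pos _).le
    have := ht d hd
    rw [inv_nonneg]; linarith
  · have hprod : ∏ d ∈ Icc 1 m, ((1 - (x / q) ^ d)⁻¹) ^ irrCount F m d ≤
        Real.exp (∑ d ∈ Icc 1 m, (x ^ d / d + 1 / (1 - r) * r ^ d)) := by
      rw [Real.exp_sum]
      refine prod_le_prod (fun d hd => pow_nonneg ?_ _) hterm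
      have := ht d hd
      rw [inv_nonneg]; linarith
    calc _ ≤ Real.exp (∑ d ∈ Icc 1 m, (x ^ d / d + 1 / (1 - r) * r ^ d)) *
          Real.exp (-∑ i ∈ Icc 1 m, x ^ i / (i : ℝ)) := by gcongr
      _ = Real.exp (1 / (1 - r) * ∑ d ∈ Icc 1 m, r ^ d) := by
          rw [← Real.exp_add, sum_add_distrib, mul_sum]; congr 1; ring
      _ ≤ _ := by
          have : ∑ d ∈ Icc 1 m, r ^ d ≤ 1 / (1 - r) := by
            rw [one_div, ← tsum_geometric_of_lt_one hr0.le hr1]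
            exact (summable_geometric_of_lt_one hr0.le hr1).sum_le_tsum _
              fun i _ => by positivity
          gcongr
end

theorem sg_geom (m : ℕ) (x : ℝ) : sg m x * (x - 1) = x * (x ^ m - 1) := by
  induction m with
  | zero => simp [sg]
  | succ m ih => rw [sg_succ, add_mul, ih]; ring

theorem xm_bound {n m : ℕ} (hm : 1 ≤ m) (hmn : m ≤ n) {x : ℝ} (hx : 1 ≤ x) (hs : sg m x = n) :
    x ^ m ≤ 6 * ((n : ℝ) / m) * min (m : ℝ) (Real.log ((n : ℝ) / m + 1)) := by
  have hm' : (1 : ℝ) ≤ m := by exact_mod_cast hm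
  have hmn' : (m : ℝ) ≤ n := by exact_mod_cast hmn
  have hx0 : 0 < x := by linarith
  set u := (n : ℝ) / m with hu
  have hnu : (n : ℝ) = u * m := by rw [hu]; field_simp
  have hu1 : 1 ≤ u := by rw [hu, le_div_iff₀ (by linarith)]; linarith
  have hxm : x ^ m ≤ n := by
    rw [← hs]
    exact single_le_sum (f := fun i => x ^ i) (fun i _ => by positivity)
      (mem_Icc.mpr ⟨hm, le_rfl⟩)
  set y := x ^ m with hy
  have hy1 : 1 ≤ y := one_le_pow₀ hx
  have hL : Real.log y = m * Real.log x := by rw [hy, Real.log_pow]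
  have h1 : y - 1 ≤ u * Real.log y := by
    have a1 : x - 1 ≤ x * Real.log x := by
      have := Real.one_sub_inv_le_log_of_pos hx0
      have h := mul_le_mul_of_nonneg_left this hx0.le
      rwa [mul_sub, mul_inv_cancel₀ hx0.ne', mul_one] at h
    have a2 := sg_geom m x
    rw [hs] at a2
    have a3 : x * (y - 1) ≤ x * (n * Real.log x) := by
      rw [← a2]
      have := mul_le_mul_of_nonneg_left a1 (by linarith : (0 : ℝ) ≤ n)
      linarith
    have a4 := le_of_mul_le_mul_left a3 hx0
    rw [hL]; rw [hnu] at a4; linarith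
  have h2 : Real.log y ≤ 4 * Real.log (u + 1) := by
    have hlu : 0 ≤ Real.log (u + 1) := Real.log_nonneg (by linarith)
    rcases hy1.eq_or_lt with h | h
    · rw [← h, Real.log_one]; positivity
    · set s := Real.sqrt y with hsd
      have hs2 : s ^ 2 = y := Real.sq_sqrt (by linarith)
      have hs1 : 1 < s := by rw [hsd, Real.lt_sqrt (by norm_num)]; simpa using h
      have hls : Real.log y = 2 * Real.log s := by rw [← hs2, Real.log_pow]; norm_num
      have b1 : Real.log s ≤ s - 1 := Real.log_le_sub_one_of_pos (by linarith)
      have b2 : s + 1 ≤ 2 * u := by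
        by_contra hc
        push Not at hc
        have : u * Real.log y ≤ u * (2 * (s - 1)) := by
          rw [hls]; gcongr
        nlinarith
      have b3 : s ≤ (u + 1) ^ 2 := by nlinarith
      have b4 : Real.log s ≤ Real.log ((u + 1) ^ 2) := Real.log_le_log (by linarith) b3
      rw [Real.log_pow] at b4
      push_cast at b4
      linarith
  have h3 : 1 / 2 ≤ Real.log (u + 1) := by
    have := Real.log_two_gt_d9
    have h := Real.log_le_log (by norm_num) (by linarith : (2 : ℝ) ≤ u + 1)
    linarith
  rcases min_choice (m : ℝ) (Real.log (u + 1)) with h | h <;> rw [h]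
  · nlinarith
  · have : u * Real.log y ≤ u * (4 * Real.log (u + 1)) := by gcongr
    nlinarith

theorem final_bound {n m : ℕ} (hm : 1 ≤ m) (hmn : m ≤ n) {x q : ℝ} (hq : 0 < q) (hx : 1 ≤ x)
    (hs : sg m x = n) :
    (x ^ 2 / q) ^ ((m + 2) / 2) / n ≤
      6 * ((n : ℝ) ^ ((1 + (if Even m then (1 : ℝ) else 0)) / (m : ℝ)) *
          min (m : ℝ) (Real.log ((n : ℝ) / m + 1)) / ((m : ℝ) * q ^ ((m + 2) / 2))) := by
  have hm' : (1 : ℝ) ≤ m := by exact_mod_cast hm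
  have hmn' : (m : ℝ) ≤ n := by exact_mod_cast hmn
  have hn0 : (0 : ℝ) < n := by linarith
  have hx0 : 0 < x := by linarith
  have hxm : x ^ m ≤ n := by
    rw [← hs]
    exact single_le_sum (f := fun i => x ^ i) (fun i _ => by positivity)
      (mem_Icc.mpr ⟨hm, le_rfl⟩)
  have hb := xm_bound hm hmn hx hs
  obtain ⟨a, ha, hE⟩ : ∃ a : ℕ, (1 + (if Even m then (1 : ℝ) else 0)) = (a : ℝ) ∧
      2 * ((m + 2) / 2) = m + a := by
    by_cases h : Even m
    · refine ⟨2, by rw [if_pos h]; norm_num, ?_⟩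
      obtain ⟨k, rfl⟩ := h; omega
    · refine ⟨1, by rw [if_neg h]; norm_num, ?_⟩
      obtain ⟨k, rfl⟩ := Nat.not_even_iff_odd.mp h; omega
  rw [ha]
  have hxa : x ^ a ≤ (n : ℝ) ^ ((a : ℝ) / m) := by
    calc x ^ a = (x ^ m) ^ ((a : ℝ) / m) := by
          rw [← Real.rpow_natCast x m, ← Real.rpow_mul hx0.le, mul_div_cancel₀ _ (by positivity),
            Real.rpow_natCast]
      _ ≤ _ := by gcongr
  rw [div_pow, ← pow_mul, hE, pow_add]
  set M := min (m : ℝ) (Real.log ((n : ℝ) / m + 1))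
  set N := (n : ℝ) ^ ((a : ℝ) / m)
  have hN : 0 < N := by positivity
  calc x ^ m * x ^ a / q ^ ((m + 2) / 2) / n ≤
      (6 * ((n : ℝ) / m) * M) * N / q ^ ((m + 2) / 2) / n := by
        have : x ^ m * x ^ a ≤ (6 * ((n : ℝ) / m) * M) * N :=
          mul_le_mul hb hxa (by positivity) (le_trans (by positivity) hb)
        gcongr
    _ = _ := by field_simp

end Fri


/-- For every `ε > 0` there exists `C > 0` such that for every prime power
`q` (the cardinality of a finite field `F`) and all `n ≥ m ≥ (2+ε)·log_q n`, writing
`u = n/m` and `a = 1` if `m` is even, `a = 0` if `m` is odd, one has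
`|p_{n,m,q}/p_{n,m} − G_q(x)| ≤ C·n^{(1+a)/m}·min{m, log(u+1)}/(m·q^{⌈(m+1)/2⌉})`. -/
theorem stmt11 :
    ∀ ε : ℝ, 0 < ε → ∃ C : ℝ, 0 < C ∧
      ∀ (F : Type) [Field F] [Fintype F], ∀ n m : ℕ, 1 ≤ m → m ≤ n →
      (2 + ε) * Real.log n / Real.log (Fintype.card F) ≤ (m : ℝ) →
      ∀ x : ℝ, 0 < x → (∑ i ∈ Finset.Icc 1 m, x ^ i) = (n : ℝ) →
      ∀ u : ℝ, u = (n : ℝ) / (m : ℝ) →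
      |polyProb F n m / permProb n m - Gq F m x| ≤
        C * (n : ℝ) ^ ((1 + (if Even m then (1 : ℝ) else 0)) / (m : ℝ)) *
          min (m : ℝ) (Real.log (u + 1)) /
          ((m : ℝ) * (Fintype.card F : ℝ) ^ ((m + 2) / 2)) := by
  intro ε hε
  set r := Real.exp (-(ε / (2 + ε)) * Real.log 2) with hr
  have hl2 := Real.log_two_gt_d9
  have hr0 : 0 < r := Real.exp_pos _
  have hr1 : r < 1 := by
    rw [hr, Real.exp_lt_one_iff]
    have : 0 < ε / (2 + ε) := by positivity
    nlinarith
  have hK := Fri.K2_pos hr0 hr1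
  set K3 := Real.exp (1 / (1 - r) * (1 / (1 - r))) with hK3
  set K := Fri.K2 r with hKd
  have hA : 0 < 2 * Real.exp 2 + 4 := by positivity
  refine ⟨6 * ((2 * Real.exp 2 + 4) * (K3 * (4 * K ^ 2 + 4 * K))), by positivity, ?_⟩
  intro F _ _ n m hm hmn hcond x hx0 hs u hu
  subst hu
  have hq := Fri.card_two_le (F := F)
  have hs' : Fri.sg m x = n := hs
  have hm' : (1 : ℝ) ≤ m := by exact_mod_cast hm
  have hmn' : (m : ℝ) ≤ n := by exact_mod_cast hmn
  have hn0 : (0 : ℝ) < n := by linarith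
  have hx : 1 ≤ x := by
    by_contra hc
    push Not at hc
    have h1 : (∑ i ∈ Finset.Icc 1 m, x ^ i) < ∑ i ∈ Finset.Icc 1 m, (1 : ℝ) := by
      refine Finset.sum_lt_sum_of_nonempty ⟨1, Finset.mem_Icc.mpr ⟨le_rfl, hm⟩⟩ fun i hi => ?_
      rw [Finset.mem_Icc] at hi
      exact pow_lt_one₀ hx0.le hc (by omega)
    simp at h1
    linarith
  have hxm : x ^ m ≤ n := by
    rw [← hs]
    exact Finset.single_le_sum (f := fun i => x ^ i) (fun i _ => by positivity)
      (Finset.mem_Icc.mpr ⟨hm, le_rfl⟩)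
  set q : ℝ := (Fintype.card F : ℝ) with hqd
  have hq0 : 0 < q := by linarith
  have hlq : 0 < Real.log q := Real.log_pos (by linarith)
  have hη : x ^ 2 / q ≤ r := by
    have h1 : (m : ℝ) * Real.log x ≤ Real.log n := by
      rw [← Real.log_pow]
      exact Real.log_le_log (by positivity) hxm
    rw [div_le_iff₀ hlq] at hcond
    have h2 : (2 + ε) * Real.log x ≤ Real.log q := by
      have : (m : ℝ) * ((2 + ε) * Real.log x) ≤ m * Real.log q := by nlinarith
      exact le_of_mul_le_mul_left this (by linarith)
    have h3 : Real.log (x ^ 2 / q) ≤ -(ε / (2 + ε)) * Real.log 2 := by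
      rw [Real.log_div (by positivity) hq0.ne', Real.log_pow]
      have h4 : Real.log 2 ≤ Real.log q := Real.log_le_log (by norm_num) hq
      have h5 : Real.log x ≤ Real.log q / (2 + ε) := by
        rw [le_div_iff₀ (by positivity)]; linarith
      have h6 : 2 * (Real.log q / (2 + ε)) - Real.log q = -(ε / (2 + ε)) * Real.log q := by
        field_simp; ring
      have h7 : ε / (2 + ε) * Real.log 2 ≤ ε / (2 + ε) * Real.log q := by gcongr
      push_cast
      linarith
    rw [hr]
    rwa [← Real.log_le_iff_le_exp (by positivity)]
  have hxq : x < q := by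
    have : x ^ 2 / q < 1 := lt_of_le_of_lt hη hr1
    rw [div_lt_one hq0] at this
    nlinarith
  obtain ⟨H1, H2, e1, e2, p1, b1, b2⟩ := Fri.H_bounds (F := F) hm hx hr0 hr1 hη
  have hG := Fri.Gq_le (F := F) (m := m) hx hr1 hη
  have herr := Fri.error_bound hm hmn hx hxq hs' e1 e2
  have hfin := Fri.final_bound hm hmn hq0 hx hs'
  rw [← hqd, ← hKd] at b1 b2
  set w := (x ^ 2 / q) ^ ((m + 2) / 2) with hw
  have hw0 : 0 ≤ w := by positivity
  have hw1 : w ≤ 1 := pow_le_one₀ (by positivity) (by linarith)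
  have hH : H1 ^ 2 + H2 ≤ m * w * (4 * K ^ 2 + 4 * K) := by
    have s1 : H1 ^ 2 ≤ (2 * w * K) ^ 2 := by gcongr
    have s2 : (2 * w * K) ^ 2 ≤ m * w * (4 * K ^ 2) := by
      have : w * w ≤ m * w := by nlinarith
      have := mul_le_mul_of_nonneg_right this (by positivity : 0 ≤ 4 * K ^ 2)
      linarith
    linarith
  have hGH : Gq F m x * (H1 ^ 2 + H2) ≤ K3 * (m * w * (4 * K ^ 2 + 4 * K)) :=
    (mul_le_mul_of_nonneg_left hH hG.1).trans
      (mul_le_mul_of_nonneg_right hG.2 (by positivity))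
  calc |polyProb F n m / permProb n m - Gq F m x| ≤
      (2 * Real.exp 2 + 4) / (n * m) * (Gq F m x * (H1 ^ 2 + H2)) := herr
    _ ≤ (2 * Real.exp 2 + 4) / (n * m) * (K3 * (m * w * (4 * K ^ 2 + 4 * K))) := by gcongr
    _ = ((2 * Real.exp 2 + 4) * (K3 * (4 * K ^ 2 + 4 * K))) * (w / n) := by field_simp
    _ ≤ ((2 * Real.exp 2 + 4) * (K3 * (4 * K ^ 2 + 4 * K))) * _ :=
        mul_le_mul_of_nonneg_left hfin (by positivity)
    _ = _ := by ring
end
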